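/- For every finite set J with |J| ≥ 2 and every ε > 0, there exist c > 0 and η > 0 such that the following holds. Let Z, Z' be finite additive abelian groups and let φ_j : Z → Z' (j ∈ J) be group homomorphisms such that the set {φ_i(d) − φ_j(d) : i, j ∈ J, d ∈ Z} generates Z' as an abelian group. Let ν : Z' → ℝ_{≥0} be such that the induced weighted hypergraph (ν_e)_{e∈H} satisfies the H-linear forms condition within η. Suppose f_j : Z' → ℝ_{≥0} (j ∈ J) satisfy 0 ≤ f_j(x) ≤ ν(x) for all x ∈ Z' and j ∈ J, and E[∏_{j∈J} f_j(a + φ_j(d)) | a ∈ Z', d ∈ Z] ≤ c. Then there exist sets A_j ⊆ Z' (j ∈ J) such that ∏_{j∈J} 1_{A_j}(a + φ_j(d)) = 0 for all a ∈ Z' and d ∈ Z, and E[f_j(x)·1_{Z'∖A_j}(x) | x ∈ Z'] ≤ ε for all j ∈ J. -/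

import Mathlib

/-!
In terms of the homomorphism `x ↦ (a, d) = (∑ φ_i (x_i), -∑ x_i)` from `Z ^ J` to `Z' × Z`, the form
`a + φ_j d = ∑_i (φ_i - φ_j) (x_i)` does not involve `x_j`, so `f_j (a + φ_j d)` is a weight on the
edge `J ∖ {j}`; the generation hypothesis makes the homomorphism onto, hence measure preserving. The
theorem becomes a removal lemma for simplices relative to a pseudorandom weighted hypergraph.

Relative removal is reduced to bounded functions by transference. The linear forms condition and the
Gowers–Cauchy–Schwarz inequality make each `ν_e - 1` small in cut norm, so each `f_e ≤ ν_e` is close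
in cut norm to a function with values in `[0, 1]`. The models have about as few simplices as the
original functions: the factors are made bounded one at a time, by passing to the average over one
coordinate of the product of the other factors and using Cauchy–Schwarz.

Bounded functions are handled by hypergraph regularity: the removed cells are the irregular or
sparse ones, and the remaining colour patterns are counted correctly. The sets removed are described
by boundedly many colours of lower order tuples, so the cut norm bound transfers their small mass
from the models back to the original functions.

An edge set `E_j` becomes the set `A_j ⊆ Z'` of the `y` over whose fibre the complement of `E_j` has
density less than `1 / |J|`: a union bound over the fibre of `(a, d)` puts some `a + φ_j d` outside
`A_j`, and Markov's inequality bounds the mass of `f_j` outside `A_j` by `|J|` times its mass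
outside `E_j`.
-/

open Finset

/-- The average (expectation with respect to the uniform measure) of `f` over `α`. -/
noncomputable def avg {α : Type*} [Fintype α] (f : α → ℝ) : ℝ :=
  (∑ x, f x) / (Fintype.card α)

variable {J : Type} [Fintype J] [DecidableEq J] {V : J → Type}

/-- Restriction (projection) of a full tuple `x ∈ V_J` to the coordinates in `e`. -/
def restr (e : Finset J) (x : (j : J) → V j) : (i : ↥e) → V i := fun i => x i.1

/-- Projection of a tuple indexed by `e` to the coordinates in the face `e.erase j`. -/
def faceProj {e : Finset J} (j : J) (x : (i : ↥e) → V i) :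
    (i : ↥(e.erase j)) → V i :=
  fun i => x ⟨i.1, Finset.mem_of_mem_erase i.2⟩

/-- The product `∏_{f ∈ ∂e} 1_{B_f}(x_f)` of the indicators of the sets `B_f ⊆ V_f`
over the faces `f = e.erase j`, `j ∈ e`, of `e`. -/
noncomputable def faceInd (e : Finset J)
    (B : (j : J) → Set ((i : ↥(e.erase j)) → V i)) (x : (i : ↥e) → V i) : ℝ :=
  ∏ j ∈ e, Set.indicator (B j) (fun _ => (1 : ℝ)) (faceProj j x)

/-- `(g, g')` is an `ε`-discrepancy pair on the edge `e`: for all choices of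
`B_f ⊆ V_f` (`f ∈ ∂e`), `|E[(g(x_e) - g'(x_e)) ∏_{f ∈ ∂e} 1_{B_f}(x_f)]| ≤ ε`. -/
noncomputable def EdgeDiscrepancy [∀ j, Fintype (V j)] (e : Finset J)
    (g g' : ((i : ↥e) → V i) → ℝ) (ε : ℝ) : Prop :=
  ∀ B : (j : J) → Set ((i : ↥(e.erase j)) → V i),
    |avg (fun x : (i : ↥e) → V i => (g x - g' x) * faceInd e B x)| ≤ ε

/-- `g` is upper `η`-regular on the edge `e`: for all choices of `B_f ⊆ V_f`
(`f ∈ ∂e`), `E[(g(x_e) - 1) ∏_{f ∈ ∂e} 1_{B_f}(x_f)] ≤ η`. -/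
noncomputable def EdgeUpperRegular [∀ j, Fintype (V j)] (e : Finset J)
    (g : ((i : ↥e) → V i) → ℝ) (η : ℝ) : Prop :=
  ∀ B : (j : J) → Set ((i : ↥(e.erase j)) → V i),
    avg (fun x : (i : ↥e) → V i => (g x - 1) * faceInd e B x) ≤ η

/-- `E ⊆ V_e` is the set of `r`-cliques of some `(r-1)`-uniform hypergraph: there are
sets `B_f ⊆ V_f` for the faces `f ∈ ∂e` with `1_E(x_e) = ∏_{f ∈ ∂e} 1_{B_f}(x_f)`. -/
def IsCliqueSet (e : Finset J) (E : Set ((i : ↥e) → V i)) : Prop :=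
  ∃ B : (j : J) → Set ((i : ↥(e.erase j)) → V i),
    ∀ x, x ∈ E ↔ ∀ j ∈ e, faceProj j x ∈ B j

/-- `E ⊆ V_e` has complexity at most `T`: it can be partitioned into `T` (possibly
empty) clique sets. -/
def ComplexityLE (e : Finset J) (E : Set ((i : ↥e) → V i)) (T : ℕ) : Prop :=
  ∃ P : Fin T → Set ((i : ↥e) → V i),
    (∀ i, IsCliqueSet e (P i)) ∧
    (∀ i₁ i₂, i₁ ≠ i₂ → P i₁ ∩ P i₂ = ∅) ∧
    (⋃ i, P i) = E

/-- The weighted hypergraph `ν` satisfies the `H`-linear forms condition within `η`: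
for every choice of exponents `n (e, ω) ∈ {0,1}` (`e ∈ H`, `ω ∈ {0,1}^e`),
`|E[∏_{e ∈ H} ∏_{ω ∈ {0,1}^e} ν_e(x_e^{(ω)})^{n_{e,ω}} | x⁰, x¹ ∈ V_J] - 1| ≤ η`. -/
noncomputable def HLinearForms [∀ j, Fintype (V j)] (H : Finset (Finset J))
    (ν : (e : Finset J) → ((i : ↥e) → V i) → ℝ) (η : ℝ) : Prop :=
  ∀ n : (e : Finset J) → (↥e → Bool) → Bool,
    |avg (fun x : ((j : J) → V j) × ((j : J) → V j) =>
      ∏ e ∈ H, ∏ ω : ↥e → Bool,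
        if n e ω then ν e (fun i => if ω i then x.2 i.1 else x.1 i.1) else 1) - 1| ≤ η

/-- The weighted hypergraph on the hypergraph system `(J, (Z)_{j ∈ J}, |J| - 1, H)`
induced by `ν : Z' → ℝ` and homomorphisms `φ_j : Z →+ Z'`: on an edge
`e = J ∖ {j}` it is given by `ν_e(x) = ν(∑_{i ∈ e} (φ_i(x_i) - φ_j(x_i)))`. -/
noncomputable def inducedNu {J : Type} [Fintype J] [DecidableEq J] {Z Z' : Type}
    [AddCommGroup Z] [AddCommGroup Z'] (φ : J → Z →+ Z') (ν : Z' → ℝ) :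
    (e : Finset J) → ((i : ↥e) → Z) → ℝ :=
  fun e x =>
    ν ((∑ i : ↥e, φ i.1 (x i)) - ∑ j ∈ Finset.univ \ e, φ j (∑ i : ↥e, x i))

namespace HypergraphRemoval

open scoped BigOperators

universe u v w

/-! ### Indicators and conditional averages -/

/-- The indicator of a proposition, as a real number. -/
noncomputable def ind (p : Prop) : ℝ :=
  open Classical in if p then 1 else 0

lemma ind_of_true {p : Prop} (h : p) : ind p = 1 := if_pos h

lemma ind_of_false {p : Prop} (h : ¬p) : ind p = 0 := if_neg h

lemma ind_nonneg (p : Prop) : 0 ≤ ind p := by unfold ind; split_ifs <;> norm_num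

lemma ind_le_one (p : Prop) : ind p ≤ 1 := by unfold ind; split_ifs <;> norm_num

lemma ind_and (p q : Prop) : ind (p ∧ q) = ind p * ind q := by
  by_cases hp : p <;> by_cases hq : q <;> simp [ind, hp, hq]

lemma ind_mono {p q : Prop} (h : p → q) : ind p ≤ ind q := by
  by_cases hp : p
  · rw [ind_of_true hp, ind_of_true (h hp)]
  · rw [ind_of_false hp]
    exact ind_nonneg q

lemma ind_congr {p q : Prop} (h : p ↔ q) : ind p = ind q := by rw [propext h]

lemma ind_forall_mem {κ : Type*} (S : Finset κ) (P : κ → Prop) :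
    ind (∀ t ∈ S, P t) = ∏ t ∈ S, ind (P t) := by
  classical
  simp [ind, prod_ite_zero]

lemma ind_exists_le_sum {κ : Type*} (S : Finset κ) (P : κ → Prop) :
    ind (∃ t ∈ S, P t) ≤ ∑ t ∈ S, ind (P t) := by
  by_cases h : ∃ t ∈ S, P t
  · obtain ⟨t, ht, hp⟩ := h
    rw [ind_of_true ⟨t, ht, hp⟩, ← ind_of_true hp]
    exact single_le_sum (f := fun t ↦ ind (P t)) (fun _ _ ↦ ind_nonneg _) ht
  · rw [ind_of_false h]
    exact sum_nonneg fun _ _ ↦ ind_nonneg _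

section Average

variable {X γ : Type*} [Fintype X]

lemma avg_eq_expect (f : X → ℝ) : avg f = 𝔼 x, f x := by
  rw [avg, Fintype.expect_eq_sum_div_card]

lemma expect_prod {Y : Type*} [Fintype Y] (f : X × Y → ℝ) : 𝔼 p, f p = 𝔼 x, 𝔼 y, f (x, y) :=
  expect_product _ _ _

lemma expect_mul_sq_le_of_nonneg {w : X → ℝ} (hw : ∀ x, 0 ≤ w x) (f : X → ℝ) :
    (𝔼 x, w x * f x) ^ 2 ≤ (𝔼 x, w x) * 𝔼 x, w x * f x ^ 2 := by
  have h := expect_mul_sq_le_sq_mul_sq univ (fun x ↦ √(w x)) fun x ↦ √(w x) * f x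
  simpa only [← mul_assoc, Real.mul_self_sqrt (hw _), mul_pow, Real.sq_sqrt (hw _)] using h

lemma expect_ind_lt_abs_le {ρ : ℝ} (hρ : 0 < ρ) (h : X → ℝ) :
    𝔼 x, ind (ρ < |h x|) ≤ (𝔼 x, h x ^ 2) / ρ ^ 2 := by
  rw [le_div_iff₀ (by positivity), expect_mul]
  refine expect_le_expect fun x _ ↦ ?_
  by_cases hx : ρ < |h x|
  · rw [ind_of_true hx, one_mul, ← sq_abs (h x)]
    gcongr
  · rw [ind_of_false hx, zero_mul]
    positivity

/-- Conditional expectation of `f` on the partition of `X` into the level sets of `C`. -/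
noncomputable def cellExpect (C : X → γ) (f : X → ℝ) (x : X) : ℝ :=
  (𝔼 y, f y * ind (C y = C x)) / 𝔼 y, ind (C y = C x)

lemma expect_ind_eq_pos (C : X → γ) (x : X) : 0 < 𝔼 y, ind (C y = C x) :=
  expect_pos' (fun _ _ ↦ ind_nonneg _) ⟨x, mem_univ _, by simp [ind_of_true]⟩

lemma cellExpect_congr (C : X → γ) (f : X → ℝ) {x y : X} (h : C x = C y) :
    cellExpect C f x = cellExpect C f y := by
  simp only [cellExpect, h]

lemma cellExpect_nonneg (C : X → γ) {f : X → ℝ} (hf : ∀ x, 0 ≤ f x) (x : X) :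
    0 ≤ cellExpect C f x :=
  div_nonneg (expect_nonneg fun y _ ↦ mul_nonneg (hf y) (ind_nonneg _)) (expect_ind_eq_pos C x).le

lemma cellExpect_le_one (C : X → γ) {f : X → ℝ} (hf : ∀ x, f x ≤ 1) (x : X) :
    cellExpect C f x ≤ 1 := by
  rw [cellExpect, div_le_one (expect_ind_eq_pos C x)]
  exact expect_le_expect fun y _ ↦ mul_le_of_le_one_left (ind_nonneg _) (hf y)

lemma expect_cellExpect_mul (C : X → γ) (f : X → ℝ) {g : X → ℝ} (hg : g.FactorsThrough C) :
    𝔼 x, cellExpect C f x * g x = 𝔼 x, f x * g x := by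
  have hcell : ∀ x, cellExpect C f x * g x =
      𝔼 y, f y * g y / (𝔼 z, ind (C z = C y)) * ind (C x = C y) := by
    intro x
    rw [cellExpect, div_mul_eq_mul_div, expect_mul, expect_div]
    refine expect_congr rfl fun y _ ↦ ?_
    by_cases h : C y = C x
    · rw [ind_of_true h, ind_of_true h.symm, hg h, h]
      ring
    · rw [ind_of_false h, ind_of_false (Ne.symm h)]
      ring
  simp_rw [hcell]
  rw [expect_comm]
  refine expect_congr rfl fun y _ ↦ ?_
  rw [← mul_expect, div_mul_cancel₀ _ (expect_ind_eq_pos C y).ne']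

lemma expect_cellExpect (C : X → γ) (f : X → ℝ) : 𝔼 x, cellExpect C f x = 𝔼 x, f x := by
  simpa using expect_cellExpect_mul C f (g := fun _ ↦ 1) fun _ _ _ ↦ rfl

lemma expect_cellExpect_sub_sq {γ' : Type*} {C : X → γ} {C' : X → γ'} (h : C.FactorsThrough C')
    (f : X → ℝ) :
    𝔼 x, (cellExpect C' f x - cellExpect C f x) ^ 2 =
      𝔼 x, cellExpect C' f x ^ 2 - 𝔼 x, cellExpect C f x ^ 2 := by
  have hfine : 𝔼 x, cellExpect C' f x * cellExpect C f x = 𝔼 x, f x * cellExpect C f x :=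
    expect_cellExpect_mul C' f fun _ _ hxy ↦ cellExpect_congr C f (h hxy)
  have hcoarse : 𝔼 x, cellExpect C f x * cellExpect C f x = 𝔼 x, f x * cellExpect C f x :=
    expect_cellExpect_mul C f fun _ _ hxy ↦ cellExpect_congr C f hxy
  simp_rw [sub_sq, expect_add_distrib, expect_sub_distrib, mul_assoc, ← mul_expect, sq]
  rw [hfine, hcoarse]
  ring

lemma expect_ind_density_lt_le [Nonempty X] (C : X → γ) {c : X → ℕ} {M : ℕ} (hc : ∀ x, c x < M)
    {l : ℝ} (hl : 0 ≤ l) :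
    𝔼 x, ind (cellExpect C (fun y ↦ ind (c y = c x)) x < l) ≤ M * l := by
  set low : ℕ → X → ℝ := fun a x ↦ ind (cellExpect C (fun y ↦ ind (c y = a)) x < l) with hlow
  have hcolor : ∀ x, low (c x) x ≤ ∑ a ∈ range M, ind (c x = a) * low a x := fun x ↦ by
    refine le_trans (by simp [ind_of_true]) (single_le_sum
      (f := fun a ↦ ind (c x = a) * low a x)
      (fun a _ ↦ mul_nonneg (ind_nonneg _) (ind_nonneg _)) (mem_range.2 (hc x)))
  have hclass : ∀ a ∈ range M, 𝔼 x, ind (c x = a) * low a x ≤ l := fun a _ ↦ by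
    rw [← expect_cellExpect_mul C _ fun x y h ↦ by simp only [hlow, cellExpect_congr C _ h]]
    refine expect_le univ_nonempty fun x _ ↦ ?_
    by_cases h : cellExpect C (fun y ↦ ind (c y = a)) x < l
    · simpa only [hlow, ind_of_true h, mul_one] using h.le
    · simpa only [hlow, ind_of_false h, mul_zero] using hl
  calc 𝔼 x, low (c x) x ≤ 𝔼 x, ∑ a ∈ range M, ind (c x = a) * low a x :=
        expect_le_expect fun x _ ↦ hcolor x
    _ = ∑ a ∈ range M, 𝔼 x, ind (c x = a) * low a x := expect_sum_comm _ _ _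
    _ ≤ ∑ _a ∈ range M, l := sum_le_sum hclass
    _ = M * l := by simp

lemma expect_ind_cell_lt_le (C : X → γ) (W : X → Prop) {ρ : ℝ} (hρ : 0 < ρ) :
    𝔼 x, ind (ρ * 𝔼 y, ind (C y = C x) < 𝔼 y, ind (W y ∧ C y = C x)) ≤ (𝔼 x, ind (W x)) / ρ := by
  rw [le_div_iff₀ hρ, ← expect_cellExpect C (fun x ↦ ind (W x)), expect_mul]
  refine expect_le_expect fun x _ ↦ ?_
  by_cases h : ρ * 𝔼 y, ind (C y = C x) < 𝔼 y, ind (W y ∧ C y = C x)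
  · rw [ind_of_true h, one_mul, cellExpect, le_div_iff₀ (expect_ind_eq_pos C x)]
    simpa only [ind_and] using h.le
  · rw [ind_of_false h, zero_mul]
    exact cellExpect_nonneg _ (fun _ ↦ ind_nonneg _) _

end Average

/-! ### Functions of some of the coordinates and the cut norm -/

section Coordinates

variable {ι : Type*} {V : ι → Type*}

lemma dependsOn_comp {β δ : Type*} {f : (∀ i, V i) → β} {s : Set ι} (hf : DependsOn f s)
    (g : β → δ) : DependsOn (fun x ↦ g (f x)) s :=
  fun _ _ hxy ↦ congrArg g (hf hxy)

lemma dependsOn_forall_mem {κ : Type*} {S : Finset κ} {P : κ → (∀ i, V i) → Prop} {s : Set ι}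
    (hP : ∀ t ∈ S, DependsOn (P t) s) : DependsOn (fun x ↦ ∀ t ∈ S, P t x) s :=
  fun _ _ hxy ↦ propext <| forall₂_congr fun t ht ↦ by rw [hP t ht hxy]

lemma dependsOn_compl_singleton {β : Type*} {f : (∀ i, V i) → β} {s : Finset ι}
    (hf : DependsOn f s) {j : ι} (hj : j ∉ s) : DependsOn f {j}ᶜ :=
  hf.mono (Set.subset_compl_singleton_iff.2 (by simpa using hj))

variable [DecidableEq ι]

lemma apply_update_of_dependsOn {β : Type*} {f : (∀ i, V i) → β} {j : ι}
    (hf : DependsOn f {j}ᶜ) (x : ∀ i, V i) (v : V j) : f (Function.update x j v) = f x :=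
  hf fun _ hi ↦ Function.update_of_ne hi _ _

variable [Fintype ι] [∀ i, Fintype (V i)]

lemma expect_update (j : ι) (f : (∀ i, V i) → ℝ) :
    𝔼 x, f x = 𝔼 x, 𝔼 v : V j, f (Function.update x j v) := by
  rcases isEmpty_or_nonempty (V j) with hV | hV
  · have : IsEmpty (∀ i, V i) := ⟨fun x ↦ hV.elim (x j)⟩
    simp
  have hswap : 𝔼 p : (∀ i, V i) × V j, f (Function.update p.1 j p.2) =
      𝔼 p : (∀ i, V i) × V j, f p.1 := by
    refine Fintype.expect_bijective
      (fun p : (∀ i, V i) × V j ↦ (Function.update p.1 j p.2, p.1 j)) ?_ _ _ fun _ ↦ rfl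
    exact Function.Involutive.bijective fun p ↦ by simp
  rw [← expect_prod fun p ↦ f (Function.update p.1 j p.2), hswap, expect_prod]
  simp

lemma expect_piecewise (D : Finset ι) (f : (∀ i, V i) → ℝ) :
    𝔼 x, f x = 𝔼 z : ∀ i, V i, 𝔼 y : ∀ i, V i, f (D.piecewise y z) := by
  rcases isEmpty_or_nonempty (∀ i, V i) with hV | hV
  · simp
  have hswap : 𝔼 p : (∀ i, V i) × (∀ i, V i), f (D.piecewise p.2 p.1) =
      𝔼 p : (∀ i, V i) × (∀ i, V i), f p.1 := by
    refine Fintype.expect_bijective (fun p : (∀ i, V i) × (∀ i, V i) ↦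
      (D.piecewise p.2 p.1, D.piecewise p.1 p.2)) ?_ _ _ fun _ ↦ rfl
    refine Function.Involutive.bijective fun p ↦ ?_
    ext i <;> by_cases hi : i ∈ D <;> simp [hi]
  rw [← expect_prod fun p : (∀ i, V i) × (∀ i, V i) ↦ f (D.piecewise p.2 p.1), hswap, expect_prod]
  simp

/-- The cut norm of `u` on the edge `D` is at most `τ`: the correlation of `u` with every product
of indicators of sets `B i`, `i ∈ D`, each depending on the coordinates in `D.erase i` only, is at
most `τ`. -/
def CutNormLE (D : Finset ι) (u : (∀ i, V i) → ℝ) (τ : ℝ) : Prop :=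
  ∀ B : ι → (∀ i, V i) → Prop, (∀ i ∈ D, DependsOn (B i) (D.erase i : Finset ι)) →
    |𝔼 x, u x * ind (∀ i ∈ D, B i x)| ≤ τ

variable {D : Finset ι} {u : (∀ i, V i) → ℝ} {τ : ℝ}

lemma CutNormLE.nonneg (hu : CutNormLE D u τ) : 0 ≤ τ :=
  (abs_nonneg _).trans (hu (fun _ _ ↦ True) fun _ _ _ _ _ ↦ rfl)

lemma CutNormLE.abs_expect_mul_ind_le (hu : CutNormLE D u τ) (hd : DependsOn u D)
    {B : ι → (∀ i, V i) → Prop} (hB : ∀ i ∈ D, DependsOn (B i) {i}ᶜ) :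
    |𝔼 x, u x * ind (∀ i ∈ D, B i x)| ≤ τ := by
  rcases isEmpty_or_nonempty (∀ i, V i) with hV | hV
  · simpa using hu.nonneg
  rw [expect_piecewise D]
  refine (abs_expect_le _ _).trans (expect_le univ_nonempty fun z _ ↦ ?_)
  have hslice : ∀ i ∈ D, DependsOn (fun y ↦ B i (D.piecewise y z)) (D.erase i : Finset ι) := by
    intro i hi x y hxy
    refine hB i hi fun l hl ↦ ?_
    by_cases hlD : l ∈ D
    · simpa only [piecewise_eq_of_mem _ _ _ hlD] using hxy l (mem_coe.2 (mem_erase.2 ⟨hl, hlD⟩))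
    · simp only [piecewise_eq_of_notMem _ _ _ hlD]
  have huD : ∀ y, u (D.piecewise y z) = u y :=
    fun y ↦ hd fun i hi ↦ piecewise_eq_of_mem _ _ _ (mem_coe.1 hi)
  simpa only [huD] using hu _ hslice

lemma CutNormLE.abs_expect_mul_ind_family_le (hu : CutNormLE D u τ) (hd : DependsOn u D)
    {κ : Type*} (S : Finset κ) {P : κ → (∀ i, V i) → Prop}
    (hP : ∀ m ∈ S, ∃ i ∈ D, DependsOn (P m) {i}ᶜ) :
    |𝔼 x, u x * ind (∀ m ∈ S, P m x)| ≤ τ := by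
  choose i hiD hi using hP
  have hgroup : ∀ x, (∀ m ∈ S, P m x) ↔ ∀ l ∈ D, ∀ m (hm : m ∈ S), i m hm = l → P m x :=
    fun x ↦ ⟨fun h _ _ m hm _ ↦ h m hm, fun h m hm ↦ h _ (hiD m hm) m hm rfl⟩
  simp only [hgroup]
  refine hu.abs_expect_mul_ind_le hd fun l _ x y hxy ↦
    propext (forall₂_congr fun m hm ↦ forall_congr' fun h ↦ ?_)
  subst h
  rw [hi m hm hxy]

end Coordinates

/-! ### Regularity partitions of bounded functions -/

section Regularity

variable {ι : Type*} {V : ι → Type*} {b b' : Finset ι → (∀ i, V i) → ℕ} {M : ℕ}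

/-- `b` is a family of colourings with `M` colours: `b t` colours the `t`-tuples, encoded as a
function of the full tuple that depends on the coordinates in `t` only. -/
structure IsColoring (b : Finset ι → (∀ i, V i) → ℕ) (M : ℕ) : Prop where
  dependsOn : ∀ t : Finset ι, DependsOn (b t) t
  lt : ∀ t x, b t x < M

lemma IsColoring.mono {N : ℕ} (hb : IsColoring b M) (h : M ≤ N) : IsColoring b N :=
  ⟨hb.dependsOn, fun t x ↦ (hb.lt t x).trans_le h⟩

/-- `b'` refines `b`. -/
def Refines (b' b : Finset ι → (∀ i, V i) → ℕ) : Prop :=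
  ∀ t, (b t).FactorsThrough (b' t)

lemma Refines.refl (b : Finset ι → (∀ i, V i) → ℕ) : Refines b b := fun _ _ _ h ↦ h

lemma Refines.trans {b'' : Finset ι → (∀ i, V i) → ℕ} (h : Refines b'' b') (h' : Refines b' b) :
    Refines b'' b := fun t _ _ hxy ↦ h' t (h t hxy)

variable [DecidableEq ι]

/-- The tuple of the colours of the faces `D.erase i`, `i ∈ D`, of an edge `D`, with the junk
value `0` for `i ∉ D`. -/
def faceColors (b : Finset ι → (∀ i, V i) → ℕ) (D : Finset ι) (x : ∀ i, V i) (i : ι) : ℕ :=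
  if i ∈ D then b (D.erase i) x else 0

lemma faceColors_eq_iff {D : Finset ι} {x y : ∀ i, V i} :
    faceColors b D x = faceColors b D y ↔ ∀ i ∈ D, b (D.erase i) x = b (D.erase i) y := by
  simp only [funext_iff, faceColors]
  refine forall_congr' fun i ↦ ?_
  by_cases hi : i ∈ D <;> simp [hi]

lemma Refines.faceColors (h : Refines b' b) (D : Finset ι) :
    (faceColors b D).FactorsThrough (faceColors b' D) :=
  fun _ _ hxy ↦ faceColors_eq_iff.2 fun i hi ↦ h _ (faceColors_eq_iff.1 hxy i hi)

/-- The refinement of a colouring by the sets `B i` on the faces `D.erase i` of `D`. -/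
noncomputable def refineBy (b : Finset ι → (∀ i, V i) → ℕ) (D : Finset ι)
    (B : ι → (∀ i, V i) → Prop) (t : Finset ι) (x : ∀ i, V i) : ℕ :=
  open Classical in 2 * b t x + if ∃ i ∈ D, t = D.erase i ∧ B i x then 1 else 0

lemma IsColoring.refineBy (hb : IsColoring b M) {D : Finset ι} {B : ι → (∀ i, V i) → Prop}
    (hB : ∀ i ∈ D, DependsOn (B i) (D.erase i : Finset ι)) :
    IsColoring (refineBy b D B) (M * 2) where
  dependsOn t x y hxy := by
    have hmem : (∃ i ∈ D, t = D.erase i ∧ B i x) ↔ ∃ i ∈ D, t = D.erase i ∧ B i y := by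
      refine exists_congr fun i ↦ and_congr_right fun hi ↦ and_congr_right fun ht ↦ ?_
      subst ht
      rw [hB i hi hxy]
    simp only [HypergraphRemoval.refineBy, hb.dependsOn t hxy]
    congr 2
    exact propext hmem
  lt t x := by
    have := hb.lt t x
    unfold HypergraphRemoval.refineBy
    split_ifs <;> omega

lemma refines_refineBy (b : Finset ι → (∀ i, V i) → ℕ) (D : Finset ι) (B : ι → (∀ i, V i) → Prop) :
    Refines (refineBy b D B) b := by
  intro t x y h
  unfold refineBy at h
  split_ifs at h <;> omega

lemma forall_mem_iff_of_faceColors_refineBy_eq {D : Finset ι} {B : ι → (∀ i, V i) → Prop}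
    {x y : ∀ i, V i} (h : faceColors (refineBy b D B) D x = faceColors (refineBy b D B) D y) :
    (∀ i ∈ D, B i x) ↔ ∀ i ∈ D, B i y := by
  refine forall₂_congr fun i hi ↦ ?_
  have hface : ∀ z, (∃ l ∈ D, D.erase i = D.erase l ∧ B l z) ↔ B i z := fun z ↦
    ⟨fun ⟨l, _, hil, hB⟩ ↦ by rwa [(erase_inj D hi).1 hil], fun hB ↦ ⟨i, hi, rfl, hB⟩⟩
  have hcolor := faceColors_eq_iff.1 h i hi
  unfold refineBy at hcolor
  split_ifs at hcolor with hx hy hy <;> rw [hface] at hx hy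
  · exact iff_of_true hx hy
  · omega
  · omega
  · exact iff_of_false hx hy

variable [Fintype ι] [∀ i, Fintype (V i)]

section Energy

variable {κ : Type*} [Fintype κ] (D : κ → Finset ι) {f : κ → (∀ i, V i) → ℝ}

/-- The total energy of the functions `f k` relative to the colourings of the faces of the edges
`D k`. -/
noncomputable def energy (D : κ → Finset ι) (f : κ → (∀ i, V i) → ℝ)
    (b : Finset ι → (∀ i, V i) → ℕ) : ℝ :=
  ∑ k, 𝔼 x, cellExpect (faceColors b (D k)) (f k) x ^ 2

lemma energy_nonneg (f : κ → (∀ i, V i) → ℝ) (b : Finset ι → (∀ i, V i) → ℕ) :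
    0 ≤ energy D f b :=
  sum_nonneg fun _ _ ↦ expect_nonneg fun _ _ ↦ sq_nonneg _

lemma energy_le_card [∀ i, Nonempty (V i)] (hf : ∀ k x, 0 ≤ f k x ∧ f k x ≤ 1)
    (b : Finset ι → (∀ i, V i) → ℕ) : energy D f b ≤ Fintype.card κ := by
  have h : energy D f b ≤ ∑ _k : κ, (1 : ℝ) := sum_le_sum fun k _ ↦
    expect_le univ_nonempty fun x _ ↦ pow_le_one₀ (cellExpect_nonneg _ (fun y ↦ (hf k y).1) x)
      (cellExpect_le_one _ (fun y ↦ (hf k y).2) x)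
  simpa using h

lemma energy_sub_energy (f : κ → (∀ i, V i) → ℝ) (h : Refines b' b) :
    energy D f b' - energy D f b = ∑ k, 𝔼 x,
      (cellExpect (faceColors b' (D k)) (f k) x - cellExpect (faceColors b (D k)) (f k) x) ^ 2 := by
  rw [energy, energy, ← sum_sub_distrib]
  exact sum_congr rfl fun k _ ↦ (expect_cellExpect_sub_sq (h.faceColors (D k)) (f k)).symm

lemma expect_cellExpect_sub_sq_le_energy_sub (f : κ → (∀ i, V i) → ℝ) (h : Refines b' b) (k : κ) :
    𝔼 x, (cellExpect (faceColors b' (D k)) (f k) x - cellExpect (faceColors b (D k)) (f k) x) ^ 2 ≤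
      energy D f b' - energy D f b := by
  rw [energy_sub_energy D f h]
  exact single_le_sum (f := fun k ↦ 𝔼 x, (cellExpect (faceColors b' (D k)) (f k) x -
    cellExpect (faceColors b (D k)) (f k) x) ^ 2)
    (fun _ _ ↦ expect_nonneg fun _ _ ↦ sq_nonneg _) (mem_univ k)

variable {D}

lemma exists_refines_energy_add_sq_le [∀ i, Nonempty (V i)] (hb : IsColoring b M) {τ : ℝ}
    (hτ : 0 < τ) {k : κ}
    (hk : ¬CutNormLE (D k) (fun x ↦ f k x - cellExpect (faceColors b (D k)) (f k) x) τ) :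
    ∃ b', IsColoring b' (M * 2) ∧ Refines b' b ∧ energy D f b + τ ^ 2 ≤ energy D f b' := by
  unfold CutNormLE at hk
  push Not at hk
  obtain ⟨B, hB, hlt⟩ := hk
  refine ⟨refineBy b (D k) B, hb.refineBy hB, refines_refineBy b (D k) B, ?_⟩
  set b' := refineBy b (D k) B
  set g : (∀ i, V i) → ℝ := fun x ↦ ind (∀ l ∈ D k, B l x)
  set Δ : (∀ i, V i) → ℝ := fun x ↦
    cellExpect (faceColors b' (D k)) (f k) x - cellExpect (faceColors b (D k)) (f k) x
  have hcorr : 𝔼 x, (f k x - cellExpect (faceColors b (D k)) (f k) x) * g x = 𝔼 x, Δ x * g x := by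
    have := expect_cellExpect_mul (faceColors b' (D k)) (f k) (g := g)
      fun x y h ↦ ind_congr (forall_mem_iff_of_faceColors_refineBy_eq h)
    simp only [Δ, sub_mul, expect_sub_distrib, this]
  have hg : 𝔼 x, g x ^ 2 ≤ 1 :=
    expect_le univ_nonempty fun x _ ↦ pow_le_one₀ (ind_nonneg _) (ind_le_one _)
  have hΔ : τ ^ 2 ≤ 𝔼 x, Δ x ^ 2 := calc
    τ ^ 2 ≤ (𝔼 x, Δ x * g x) ^ 2 := by
      rw [← hcorr, ← sq_abs (𝔼 x, _)]
      exact pow_le_pow_left₀ hτ.le hlt.le 2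
    _ ≤ (𝔼 x, Δ x ^ 2) * 𝔼 x, g x ^ 2 := expect_mul_sq_le_sq_mul_sq _ _ _
    _ ≤ 𝔼 x, Δ x ^ 2 := mul_le_of_le_one_right (expect_nonneg fun _ _ ↦ sq_nonneg _) hg
  have := expect_cellExpect_sub_sq_le_energy_sub D f (refines_refineBy b (D k) B) k
  linarith

lemma exists_refines_cutNormLE_of_energy [∀ i, Nonempty (V i)]
    (hf : ∀ k x, 0 ≤ f k x ∧ f k x ≤ 1) {τ : ℝ} (hτ : 0 < τ) (n : ℕ) (hb : IsColoring b M)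
    (he : Fintype.card κ - n * τ ^ 2 ≤ energy D f b) :
    ∃ b', IsColoring b' (M * 2 ^ n) ∧ Refines b' b ∧
      ∀ k, CutNormLE (D k) (fun x ↦ f k x - cellExpect (faceColors b' (D k)) (f k) x) τ := by
  induction n generalizing b M with
  | zero =>
    refine ⟨b, by simpa using hb, .refl b, fun k ↦ ?_⟩
    by_contra hk
    obtain ⟨b', -, -, hinc⟩ := exists_refines_energy_add_sq_le hb hτ hk
    have := energy_le_card D hf b'
    have : 0 < τ ^ 2 := by positivity
    simp only [CharP.cast_eq_zero, zero_mul, sub_zero] at he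
    linarith
  | succ n ih =>
    by_cases hall :
      ∀ k, CutNormLE (D k) (fun x ↦ f k x - cellExpect (faceColors b (D k)) (f k) x) τ
    · exact ⟨b, hb.mono (Nat.le_mul_of_pos_right _ (by positivity)), .refl b, hall⟩
    push Not at hall
    obtain ⟨k, hk⟩ := hall
    obtain ⟨b', hb', href, hinc⟩ := exists_refines_energy_add_sq_le hb hτ hk
    obtain ⟨b'', hb'', href', hcut⟩ := ih hb' (by push_cast at he; linarith)
    rw [pow_succ', ← mul_assoc]
    exact ⟨b'', hb'', href'.trans href, hcut⟩

lemma weak_regularity [∀ i, Nonempty (V i)] (hf : ∀ k x, 0 ≤ f k x ∧ f k x ≤ 1) {τ : ℝ}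
    (hτ : 0 < τ) (hb : IsColoring b M) :
    ∃ b', IsColoring b' (M * 2 ^ ⌈Fintype.card κ / τ ^ 2⌉₊) ∧ Refines b' b ∧
      ∀ k, CutNormLE (D k) (fun x ↦ f k x - cellExpect (faceColors b' (D k)) (f k) x) τ := by
  refine exists_refines_cutNormLE_of_energy hf hτ _ hb ?_
  have := (div_le_iff₀ (by positivity)).1 (Nat.le_ceil (Fintype.card κ / τ ^ 2))
  linarith [energy_nonneg D f b]

end Energy

/-- The conclusion of the strong regularity lemma: a colouring `b₁` with at most `N` colours and a
refinement `b₂` of it, close in energy, relative to which the cut norm deviation of each `f k` is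
as small as `F` demands in terms of the number of colours of `b₁`. -/
def HasRegularPair {κ : Type*} (D : κ → Finset ι) (f : κ → (∀ i, V i) → ℝ) (δ : ℝ) (F : ℕ → ℝ)
    (N : ℕ) : Prop :=
  ∃ M ≤ N, ∃ b₁ b₂ : Finset ι → (∀ i, V i) → ℕ, IsColoring b₁ M ∧
    (∀ t : Finset ι, DependsOn (b₂ t) t) ∧ Refines b₂ b₁ ∧
    (∀ k, 𝔼 x, (cellExpect (faceColors b₂ (D k)) (f k) x -
      cellExpect (faceColors b₁ (D k)) (f k) x) ^ 2 ≤ δ) ∧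
    ∀ k, CutNormLE (D k) (fun x ↦ f k x - cellExpect (faceColors b₂ (D k)) (f k) x) (F M)

end Regularity

lemma exists_hasRegularPair_of_energy (ι : Type u) [Fintype ι] [DecidableEq ι] (κ : Type w)
    [Fintype κ] {δ : ℝ} (hδ : 0 ≤ δ) {F : ℕ → ℝ} (hF : ∀ m, 0 < F m) (n M : ℕ) :
    ∃ N : ℕ, ∀ (V : ι → Type v) [∀ i, Fintype (V i)] [∀ i, Nonempty (V i)] (D : κ → Finset ι)
      (f : κ → (∀ i, V i) → ℝ), (∀ k x, 0 ≤ f k x ∧ f k x ≤ 1) →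
      ∀ b : Finset ι → (∀ i, V i) → ℕ, IsColoring b M →
      Fintype.card κ - n * δ ≤ energy D f b → HasRegularPair D f δ F N := by
  induction n generalizing M with
  | zero =>
    refine ⟨M, fun V _ _ D f hf b hb he ↦ ?_⟩
    obtain ⟨b₂, hb₂, href, hcut⟩ := weak_regularity (D := D) hf (hF M) hb
    refine ⟨M, le_rfl, b, b₂, hb, hb₂.dependsOn, href, fun k ↦ ?_, hcut⟩
    have := expect_cellExpect_sub_sq_le_energy_sub D f href k
    have := energy_le_card D hf b₂
    simp only [CharP.cast_eq_zero, zero_mul, sub_zero] at he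
    linarith
  | succ n ih =>
    obtain ⟨N, hN⟩ := ih (M * 2 ^ ⌈Fintype.card κ / F M ^ 2⌉₊)
    refine ⟨max M N, fun V _ _ D f hf b hb he ↦ ?_⟩
    obtain ⟨b₂, hb₂, href, hcut⟩ := weak_regularity (D := D) hf (hF M) hb
    by_cases hclose : energy D f b₂ ≤ energy D f b + δ
    · refine ⟨M, le_max_left _ _, b, b₂, hb, hb₂.dependsOn, href, fun k ↦ ?_, hcut⟩
      linarith [expect_cellExpect_sub_sq_le_energy_sub D f href k]
    · obtain ⟨M₁, hM₁, hpair⟩ := hN V D f hf b₂ hb₂ (by push_cast at he; linarith)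
      exact ⟨M₁, hM₁.trans (le_max_right _ _), hpair⟩

theorem strong_regularity (ι : Type u) [Fintype ι] [DecidableEq ι] (κ : Type w) [Finite κ]
    {δ : ℝ} (hδ : 0 < δ) {F : ℕ → ℝ} (hF : ∀ m, 0 < F m) :
    ∃ N : ℕ, ∀ (V : ι → Type v) [∀ i, Fintype (V i)] [∀ i, Nonempty (V i)] (D : κ → Finset ι)
      (f : κ → (∀ i, V i) → ℝ), (∀ k x, 0 ≤ f k x ∧ f k x ≤ 1) → HasRegularPair D f δ F N := by
  cases nonempty_fintype κ
  obtain ⟨N, hN⟩ := exists_hasRegularPair_of_energy.{u, v} ι κ hδ.le hF ⌈Fintype.card κ / δ⌉₊ 1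
  refine ⟨N, fun V _ _ D f hf ↦ hN V D f hf (fun _ _ ↦ 0) ⟨fun _ _ _ _ ↦ rfl, by simp⟩ ?_⟩
  have := (div_le_iff₀ hδ).1 (Nat.le_ceil (Fintype.card κ / δ))
  linarith [energy_nonneg D f fun _ _ ↦ 0]

/-! ### Counting colour patterns -/

section Counting

variable {ι : Type*} {V : ι → Type*} {b : Finset ι → (∀ i, V i) → ℕ} {β : Finset ι → ℕ}
  {d : ℕ} {ε ε' ρ τ : ℝ}

/-- The event that the index sets `t ∈ T` receive the prescribed colours `β t`. -/
def HasColors (b : Finset ι → (∀ i, V i) → ℕ) (β : Finset ι → ℕ) (T : Finset (Finset ι))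
    (x : ∀ i, V i) : Prop :=
  ∀ t ∈ T, b t x = β t

lemma HasColors.mono {T T' : Finset (Finset ι)} {x : ∀ i, V i} (h : HasColors b β T x)
    (hT : T' ⊆ T) : HasColors b β T' x :=
  fun t ht ↦ h t (hT ht)

lemma dependsOn_hasColors (hb : ∀ t : Finset ι, DependsOn (b t) t) (β : Finset ι → ℕ)
    {T : Finset (Finset ι)} {s : Finset ι} (hT : ∀ t ∈ T, t ⊆ s) :
    DependsOn (HasColors b β T) s :=
  dependsOn_forall_mem fun t ht ↦
    dependsOn_comp ((hb t).mono (coe_subset.2 (hT t ht))) (· = β t)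

lemma abs_sub_prod_mul_le_card_mul {κ : Type*} [DecidableEq κ] {F : Finset κ → ℝ} {p : κ → ℝ}
    {μ : ℝ} {R : Finset κ} (hp : ∀ k ∈ R, 0 ≤ p k ∧ p k ≤ 1)
    (hF : ∀ k ∈ R, ∀ R' ⊆ R, k ∉ R' → |F (insert k R') - p k * F R'| ≤ μ) :
    |F R - (∏ k ∈ R, p k) * F ∅| ≤ #R * μ := by
  induction R using Finset.induction_on with
  | empty => simp
  | insert k R hk ih =>
    have hrec := ih (fun l hl ↦ hp l (mem_insert_of_mem hl)) fun l hl R' hR' ↦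
      hF l (mem_insert_of_mem hl) R' (hR'.trans (subset_insert k R))
    have hlast := hF k (mem_insert_self k R) R (subset_insert k R) hk
    obtain ⟨hp0, hp1⟩ := hp k (mem_insert_self k R)
    rw [prod_insert hk, card_insert_of_notMem hk]
    calc |F (insert k R) - p k * (∏ l ∈ R, p l) * F ∅|
        = |(F (insert k R) - p k * F R) + p k * (F R - (∏ l ∈ R, p l) * F ∅)| := by ring_nf
      _ ≤ |F (insert k R) - p k * F R| + p k * |F R - (∏ l ∈ R, p l) * F ∅| := by
        refine (abs_add_le _ _).trans_eq ?_
        rw [abs_mul, abs_of_nonneg hp0]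
      _ ≤ μ + #R * μ := add_le_add hlast ((mul_le_of_le_one_left (abs_nonneg _) hp1).trans hrec)
      _ = (#R + 1 : ℕ) * μ := by push_cast; ring

variable [Fintype ι]

variable (ι) in
/-- The index sets of size at most `d`. -/
def levelsUpTo (d : ℕ) : Finset (Finset ι) := {t | #t ≤ d}

lemma mem_levelsUpTo {t : Finset ι} : t ∈ levelsUpTo ι d ↔ #t ≤ d := by simp [levelsUpTo]

lemma disjoint_levelsUpTo_powersetCard (d : ℕ) :
    Disjoint (levelsUpTo ι d) (univ.powersetCard (d + 1)) :=
  disjoint_left.2 fun t ht ht' ↦ by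
    rw [mem_levelsUpTo] at ht
    rw [mem_powersetCard_univ] at ht'
    omega

lemma card_le_two_pow_card (R : Finset (Finset ι)) : (#R : ℝ) ≤ 2 ^ Fintype.card ι := by
  exact_mod_cast (card_le_univ R).trans_eq Fintype.card_finset

variable [DecidableEq ι]

lemma levelsUpTo_succ (d : ℕ) :
    levelsUpTo ι (d + 1) = levelsUpTo ι d ∪ univ.powersetCard (d + 1) := by
  ext t
  rw [mem_union, mem_levelsUpTo, mem_levelsUpTo, mem_powersetCard_univ]
  omega

variable [∀ i, Fintype (V i)]

/-- The colour pattern `β` on the index sets of size at most `d` is counted by the densities `p`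
up to a relative error `ε`: for every event `A` depending on the coordinates in `s`, the colour
constraints from the index sets not contained in `s` are independent of `A` and of the others. -/
structure IsCounted (d : ℕ) (ε : ℝ) (p : Finset ι → ℝ) (b : Finset ι → (∀ i, V i) → ℕ)
    (β : Finset ι → ℕ) : Prop where
  color_empty : ∀ x, b ∅ x = β ∅
  density_empty : p ∅ = 1
  density_mem : ∀ t ∈ levelsUpTo ι d, 0 < p t ∧ p t ≤ 1
  abs_sub_le : ∀ (s : Finset ι) (A : (∀ i, V i) → Prop), DependsOn A s →
    |𝔼 x, ind (A x ∧ HasColors b β (levelsUpTo ι d) x) -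
      (∏ t ∈ levelsUpTo ι d with ¬t ⊆ s, p t) *
        𝔼 x, ind (A x ∧ HasColors b β {t ∈ levelsUpTo ι d | t ⊆ s} x)| ≤
      ε * ∏ t ∈ levelsUpTo ι d, p t

variable {p : Finset ι → ℝ}

lemma IsCounted.congr (h : IsCounted d ε p b β) {b' : Finset ι → (∀ i, V i) → ℕ}
    {p' : Finset ι → ℝ} (hb : ∀ t, #t ≤ d → b' t = b t) (hp : ∀ t, #t ≤ d → p' t = p t) :
    IsCounted d ε p' b' β where
  color_empty := by simpa only [hb ∅ (by simp)] using h.color_empty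
  density_empty := by simpa only [hp ∅ (by simp)] using h.density_empty
  density_mem t ht := by simpa only [hp t (mem_levelsUpTo.1 ht)] using h.density_mem t ht
  abs_sub_le s A hA := by
    have hcolors : ∀ T ⊆ levelsUpTo ι d, HasColors b' β T = HasColors b β T := fun T hT ↦
      funext fun x ↦ propext <| forall₂_congr fun t ht ↦ by rw [hb t (mem_levelsUpTo.1 (hT ht))]
    have hprod : ∀ T ⊆ levelsUpTo ι d, ∏ t ∈ T, p' t = ∏ t ∈ T, p t := fun T hT ↦
      prod_congr rfl fun t ht ↦ hp t (mem_levelsUpTo.1 (hT ht))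
    rw [hcolors _ subset_rfl, hcolors _ (filter_subset _ _), hprod _ subset_rfl,
      hprod _ (filter_subset _ _)]
    exact h.abs_sub_le s A hA

lemma IsCounted.prod_pos (h : IsCounted d ε p b β) : 0 < ∏ t ∈ levelsUpTo ι d, p t :=
  Finset.prod_pos fun t ht ↦ (h.density_mem t ht).1

lemma IsCounted.error_nonneg (h : IsCounted d ε p b β) : 0 ≤ ε :=
  nonneg_of_mul_nonneg_left ((abs_nonneg _).trans (h.abs_sub_le ∅ (fun _ ↦ True)
    fun _ _ _ ↦ rfl)) h.prod_pos

lemma CutNormLE.abs_expect_mul_ind_hasColors_le {D s : Finset ι} {u : (∀ i, V i) → ℝ}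
    (hu : CutNormLE D u τ) (hud : DependsOn u D) (hb : ∀ t : Finset ι, DependsOn (b t) t)
    {A : (∀ i, V i) → Prop} (hA : DependsOn A s) (hDs : ¬D ⊆ s) {T : Finset (Finset ι)}
    (hT : ∀ t ∈ T, ¬D ⊆ t) : |𝔼 x, u x * ind (A x ∧ HasColors b β T x)| ≤ τ := by
  have hfamily : ∀ x, (A x ∧ HasColors b β T x) ↔
      ∀ o ∈ insertNone T, (o : Option (Finset ι)).elim (A x) fun t ↦ b t x = β t := by
    simp [HasColors, Option.forall]
  simp only [hfamily]
  refine hu.abs_expect_mul_ind_family_le hud (insertNone T)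
    (P := fun o x ↦ o.elim (A x) fun t ↦ b t x = β t) fun o ho ↦ ?_
  cases o with
  | none =>
    obtain ⟨i, hiD, his⟩ := not_subset.1 hDs
    exact ⟨i, hiD, dependsOn_compl_singleton hA his⟩
  | some t =>
    obtain ⟨i, hiD, hit⟩ := not_subset.1 (hT t (some_mem_insertNone.1 ho))
    exact ⟨i, hiD, dependsOn_compl_singleton (dependsOn_comp (hb t) (· = β t)) hit⟩

variable [∀ i, Nonempty (V i)]

lemma IsCounted.abs_expect_sub_prod_le (h : IsCounted d ε p b β) :
    |𝔼 x, ind (HasColors b β (levelsUpTo ι d) x) - ∏ t ∈ levelsUpTo ι d, p t| ≤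
      ε * ∏ t ∈ levelsUpTo ι d, p t := by
  have hcount := h.abs_sub_le ∅ (fun _ ↦ True) fun _ _ _ ↦ rfl
  have hprod : ∏ t ∈ levelsUpTo ι d with ¬t ⊆ ∅, p t = ∏ t ∈ levelsUpTo ι d, p t := by
    refine prod_filter_of_ne fun t _ hne hsub ↦ hne ?_
    rw [subset_empty.1 hsub, h.density_empty]
  have hempty : ∀ x, HasColors b β {t ∈ levelsUpTo ι d | t ⊆ ∅} x := fun x t ht ↦ by
    rw [subset_empty.1 (mem_filter.1 ht).2, h.color_empty]
  rw [hprod] at hcount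
  simpa only [true_and, ind_of_true (hempty _), Fintype.expect_const, mul_one] using hcount

lemma IsCounted.prod_mul_expect_le (h : IsCounted d ε p b β) (D : Finset ι) :
    (∏ t ∈ levelsUpTo ι d with ¬t ⊆ D, p t) *
      𝔼 x, ind (HasColors b β {t ∈ levelsUpTo ι d | t ⊆ D} x) ≤
      (1 + 2 * ε) * ∏ t ∈ levelsUpTo ι d, p t := by
  have hcount := h.abs_sub_le D (fun _ ↦ True) fun _ _ _ ↦ rfl
  simp only [true_and] at hcount
  linarith [(abs_le.1 hcount).1, (abs_le.1 h.abs_expect_sub_prod_le).2]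

lemma IsCounted.expect_abs_mul_ind_le (hc : IsCounted d ε p b β) (hε : ε ≤ 1) (hρ : 0 ≤ ρ)
    {D : Finset ι} {h : (∀ i, V i) → ℝ} (hD : DependsOn h D) (h1 : ∀ x, |h x| ≤ 1)
    (htail : 𝔼 x, ind (ρ < |h x| ∧ HasColors b β {t ∈ levelsUpTo ι d | t ⊆ D} x) ≤
      ρ * 𝔼 x, ind (HasColors b β {t ∈ levelsUpTo ι d | t ⊆ D} x)) :
    𝔼 x, |h x| * ind (HasColors b β (levelsUpTo ι d) x) ≤
      (5 * ρ + ε) * ∏ t ∈ levelsUpTo ι d, p t := by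
  set P := ∏ t ∈ levelsUpTo ι d, p t
  set cell : (∀ i, V i) → Prop := HasColors b β (levelsUpTo ι d)
  have hP : 0 < P := hc.prod_pos
  have hsplit : ∀ x, |h x| * ind (cell x) ≤ ρ * ind (cell x) + ind (ρ < |h x| ∧ cell x) := by
    intro x
    rw [ind_and, ← add_mul]
    refine mul_le_mul_of_nonneg_right ?_ (ind_nonneg _)
    rcases lt_or_ge ρ |h x| with hx | hx
    · rw [ind_of_true hx]
      linarith [h1 x]
    · linarith [ind_nonneg (ρ < |h x|)]
  have hcell : 𝔼 x, ind (cell x) ≤ (1 + ε) * P := by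
    linarith [(abs_le.1 hc.abs_expect_sub_prod_le).2]
  have htail' : 𝔼 x, ind (ρ < |h x| ∧ cell x) ≤ ρ * ((1 + 2 * ε) * P) + ε * P := by
    have hQ : 0 ≤ ∏ t ∈ levelsUpTo ι d with ¬t ⊆ D, p t :=
      prod_nonneg fun t ht ↦ (hc.density_mem t (mem_filter.1 ht).1).1.le
    have := (abs_le.1 (hc.abs_sub_le D _ (dependsOn_comp hD (ρ < |·|)))).2
    have := mul_le_mul_of_nonneg_left htail hQ
    have := mul_le_mul_of_nonneg_left (hc.prod_mul_expect_le D) hρ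
    linarith
  have hερ : ρ * ε * P ≤ ρ * 1 * P := by gcongr
  calc 𝔼 x, |h x| * ind (cell x)
      ≤ ρ * 𝔼 x, ind (cell x) + 𝔼 x, ind (ρ < |h x| ∧ cell x) := by
        rw [mul_expect, ← expect_add_distrib]
        exact expect_le_expect fun x _ ↦ hsplit x
    _ ≤ (5 * ρ + ε) * P := by linarith [mul_le_mul_of_nonneg_left hcell hρ]

/-- The colour `β D` is regular for the cells of the pattern `β` on the index sets of size at most
`d`: on the cell, the indicator of its colour class is the sum of the constant `q`, a function `h`
that is mostly at most `ρ`, and a function `u` of cut norm at most `τ`. -/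
def IsRegularColor (d : ℕ) (ρ τ q : ℝ) (b : Finset ι → (∀ i, V i) → ℕ) (β : Finset ι → ℕ)
    (D : Finset ι) : Prop :=
  ∃ u h : (∀ i, V i) → ℝ, DependsOn u D ∧ DependsOn h D ∧ CutNormLE D u τ ∧ (∀ x, |h x| ≤ 1) ∧
    𝔼 x, ind (ρ < |h x| ∧ HasColors b β {t ∈ levelsUpTo ι d | t ⊆ D} x) ≤
      ρ * 𝔼 x, ind (HasColors b β {t ∈ levelsUpTo ι d | t ⊆ D} x) ∧
    ∀ x, HasColors b β (levelsUpTo ι d) x → ind (b D x = β D) = u x + h x + q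

lemma IsRegularColor.abs_expect_insert_sub_le (hc : IsCounted d ε p b β) (hε : ε ≤ 1) (hρ : 0 ≤ ρ)
    {D s : Finset ι} {q : ℝ} (hD : IsRegularColor d ρ τ q b β D)
    (hb : ∀ t : Finset ι, DependsOn (b t) t) {A : (∀ i, V i) → Prop} (hA : DependsOn A s)
    (hDs : ¬D ⊆ s) {T : Finset (Finset ι)} (hT : ∀ t ∈ T, ¬D ⊆ t) (hdT : levelsUpTo ι d ⊆ T) :
    |𝔼 x, ind (A x ∧ HasColors b β (insert D T) x) - q * 𝔼 x, ind (A x ∧ HasColors b β T x)| ≤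
      τ + (5 * ρ + ε) * ∏ t ∈ levelsUpTo ι d, p t := by
  obtain ⟨u, h, hud, hhd, hu, h1, htail, hdec⟩ := hD
  have hinsert : ∀ x, ind (A x ∧ HasColors b β (insert D T) x) =
      u x * ind (A x ∧ HasColors b β T x) + h x * ind (A x ∧ HasColors b β T x) +
        q * ind (A x ∧ HasColors b β T x) := fun x ↦ by
    have : (A x ∧ HasColors b β (insert D T) x) ↔
        b D x = β D ∧ A x ∧ HasColors b β T x := by
      simp only [HasColors, forall_mem_insert]
      tauto
    rw [ind_congr this, ind_and]
    by_cases hcell : A x ∧ HasColors b β T x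
    · rw [hdec x (hcell.2.mono hdT)]
      ring
    · simp [ind_of_false hcell]
  have hmiddle : |𝔼 x, h x * ind (A x ∧ HasColors b β T x)| ≤
      (5 * ρ + ε) * ∏ t ∈ levelsUpTo ι d, p t := by
    refine (abs_expect_le _ _).trans ((expect_le_expect fun x _ ↦ ?_).trans
      (hc.expect_abs_mul_ind_le hε hρ hhd h1 htail))
    rw [abs_mul, abs_of_nonneg (ind_nonneg _)]
    exact mul_le_mul_of_nonneg_left (ind_mono fun hx ↦ hx.2.mono hdT) (abs_nonneg _)
  simp_rw [hinsert, expect_add_distrib, ← mul_expect, add_sub_cancel_right]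
  exact (abs_add_le _ _).trans
    (add_le_add (hu.abs_expect_mul_ind_hasColors_le hud hb hA hDs hT) hmiddle)

lemma IsCounted.abs_expect_succ_sub_le (hc : IsCounted d ε p b β) (hε : ε ≤ 1) (hρ : 0 ≤ ρ)
    (hb : ∀ t : Finset ι, DependsOn (b t) t) (hp : ∀ D, #D = d + 1 → 0 < p D ∧ p D ≤ 1)
    (hreg : ∀ D, #D = d + 1 → IsRegularColor d ρ τ (p D) b β D) {s : Finset ι}
    {A : (∀ i, V i) → Prop} (hA : DependsOn A s) :
    |𝔼 x, ind (A x ∧ HasColors b β (levelsUpTo ι (d + 1)) x) -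
      (∏ D ∈ (univ : Finset ι).powersetCard (d + 1) with ¬D ⊆ s, p D) * 𝔼 x, ind (A x ∧
        HasColors b β (levelsUpTo ι d ∪ {D ∈ (univ : Finset ι).powersetCard (d + 1) | D ⊆ s}) x)| ≤
      #{D ∈ (univ : Finset ι).powersetCard (d + 1) | ¬D ⊆ s} *
        (τ + (5 * ρ + ε) * ∏ t ∈ levelsUpTo ι d, p t) := by
  set T := levelsUpTo ι d ∪ {D ∈ (univ : Finset ι).powersetCard (d + 1) | D ⊆ s} with hT
  set R := {D ∈ (univ : Finset ι).powersetCard (d + 1) | ¬D ⊆ s} with hR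
  have hRmem : ∀ {D}, D ∈ R → #D = d + 1 ∧ ¬D ⊆ s := fun hD ↦ by simpa [hR] using hD
  have hTR : levelsUpTo ι (d + 1) = T ∪ R := by
    rw [levelsUpTo_succ, hT, hR, union_assoc, filter_union_filter_not_eq]
  rw [hTR]
  have hstep := abs_sub_prod_mul_le_card_mul (R := R) (p := p)
    (F := fun R' ↦ 𝔼 x, ind (A x ∧ HasColors b β (T ∪ R') x))
    (μ := τ + (5 * ρ + ε) * ∏ t ∈ levelsUpTo ι d, p t)
    (fun D hD ↦ ⟨(hp D (hRmem hD).1).1.le, (hp D (hRmem hD).1).2⟩) fun D hD R' hR' hDR' ↦ ?_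
  · simpa only [union_empty] using hstep
  obtain ⟨hDcard, hDs⟩ := hRmem hD
  rw [union_insert]
  refine (hreg D hDcard).abs_expect_insert_sub_le hc hε hρ hb hA hDs (fun t ht hDt ↦ ?_)
    (subset_union_left.trans subset_union_left)
  have hcard := card_le_card hDt
  simp only [hT, mem_union, mem_filter, mem_levelsUpTo, mem_powersetCard_univ] at ht
  rcases ht with (ht | ⟨-, hts⟩) | ht
  · omega
  · exact hDs (hDt.trans hts)
  · exact hDR' (eq_of_subset_of_card_le hDt ((hRmem (hR' ht)).1.trans hDcard.symm).le ▸ ht)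

theorem IsCounted.succ (hc : IsCounted d ε' p b β) (hε' : ε' ≤ 1) (hρ : 0 ≤ ρ) (hτ : 0 ≤ τ)
    (hb : ∀ t : Finset ι, DependsOn (b t) t) (hp : ∀ D, #D = d + 1 → 0 < p D ∧ p D ≤ 1)
    (hreg : ∀ D, #D = d + 1 → IsRegularColor d ρ τ (p D) b β D)
    (hnum : 2 ^ Fintype.card ι * (τ + (5 * ρ + ε') * ∏ t ∈ levelsUpTo ι d, p t) +
      ε' * ∏ t ∈ levelsUpTo ι d, p t ≤ ε * ∏ t ∈ levelsUpTo ι (d + 1), p t) :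
    IsCounted (d + 1) ε p b β where
  color_empty := hc.color_empty
  density_empty := hc.density_empty
  density_mem t ht := by
    rw [levelsUpTo_succ, mem_union, mem_powersetCard_univ] at ht
    exact ht.elim (hc.density_mem t) (hp t)
  abs_sub_le s A hA := by
    set S := (univ : Finset ι).powersetCard (d + 1)
    set Q := ∏ D ∈ S with ¬D ⊆ s, p D
    have hpS : ∀ D ∈ {D ∈ S | ¬D ⊆ s}, 0 ≤ p D ∧ p D ≤ 1 := fun D hD ↦
      (hp D (mem_powersetCard_univ.1 (mem_filter.1 hD).1)).imp_left le_of_lt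
    have hQ0 : 0 ≤ Q := prod_nonneg fun D hD ↦ (hpS D hD).1
    have hQ1 : Q ≤ 1 := prod_le_one (fun D hD ↦ (hpS D hD).1) fun D hD ↦ (hpS D hD).2
    have hupper := hc.abs_expect_succ_sub_le hε' hρ hb hp hreg hA
    have hlower := hc.abs_sub_le s (fun x ↦ A x ∧ HasColors b β {D ∈ S | D ⊆ s} x)
      fun x y hxy ↦ congrArg₂ And (hA hxy)
        (dependsOn_hasColors hb β (fun t ht ↦ (mem_filter.1 ht).2) hxy)
    have hsub : ∀ (T : Finset (Finset ι)) x, ((A x ∧ HasColors b β {D ∈ S | D ⊆ s} x) ∧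
        HasColors b β T x) ↔ A x ∧ HasColors b β (T ∪ {D ∈ S | D ⊆ s}) x := fun T x ↦ by
      rw [HasColors, HasColors, HasColors, forall_mem_union]
      tauto
    simp only [hsub, ← filter_union, ← levelsUpTo_succ, S] at hlower
    have hprod : ∏ t ∈ levelsUpTo ι (d + 1) with ¬t ⊆ s, p t =
        Q * ∏ t ∈ levelsUpTo ι d with ¬t ⊆ s, p t := by
      rw [levelsUpTo_succ, filter_union, prod_union
        (disjoint_filter_filter (disjoint_levelsUpTo_powersetCard d)), mul_comm]
    have hμ : 0 ≤ τ + (5 * ρ + ε') * ∏ t ∈ levelsUpTo ι d, p t := by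
      have := hc.prod_pos
      have := hc.error_nonneg
      positivity
    have hcard := mul_le_mul_of_nonneg_right (card_le_two_pow_card {D ∈ S | ¬D ⊆ s}) hμ
    have hlower' := (mul_le_of_le_one_left (abs_nonneg _) hQ1).trans hlower
    rw [← abs_of_nonneg hQ0, ← abs_mul, mul_sub, ← mul_assoc, ← hprod] at hlower'
    exact (_root_.abs_sub_le _ _ _).trans ((add_le_add hupper hlower').trans (by linarith))

end Counting

/-! ### Regularization of a colouring -/

lemma pow_mul_prod_levelsUpTo_le {ι : Type*} [Fintype ι] {d : ℕ} {l : ℝ} {p : Finset ι → ℝ}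
    (hl : 0 ≤ l) (hl1 : l ≤ 1)
    (hp : ∀ t ∈ levelsUpTo ι d, 0 ≤ p t) (hlp : ∀ t, #t = d + 1 → l ≤ p t) :
    l ^ 2 ^ Fintype.card ι * ∏ t ∈ levelsUpTo ι d, p t ≤ ∏ t ∈ levelsUpTo ι (d + 1), p t := by
  classical
  have hcard : #((univ : Finset ι).powersetCard (d + 1)) ≤ 2 ^ Fintype.card ι :=
    (card_le_univ _).trans_eq Fintype.card_finset
  rw [levelsUpTo_succ, prod_union (disjoint_levelsUpTo_powersetCard d), mul_comm]
  refine mul_le_mul_of_nonneg_left ((pow_le_pow_of_le_one hl hl1 hcard).trans ?_) (prod_nonneg hp)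
  rw [← prod_const]
  exact prod_le_prod (fun _ _ ↦ hl) fun t ht ↦ hlp t (mem_powersetCard_univ.1 ht)

section Regularization

variable {ι : Type*} {V : ι → Type*} {b b₁ b₂ : Finset ι → (∀ i, V i) → ℕ} {β : Finset ι → ℕ}
  {d M : ℕ} {ε δ ρ τ l θ κ : ℝ} [DecidableEq ι]

lemma dependsOn_faceColors (hb : ∀ t : Finset ι, DependsOn (b t) t) (D : Finset ι) :
    DependsOn (faceColors b D) D := fun _ _ hxy ↦
  faceColors_eq_iff.2 fun i _ ↦ (hb _).mono (coe_subset.2 (erase_subset i D)) hxy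

variable [Fintype ι] [∀ i, Fintype (V i)]

lemma dependsOn_cellExpect_faceColors (hb : ∀ t : Finset ι, DependsOn (b t) t) (D : Finset ι)
    (f : (∀ i, V i) → ℝ) : DependsOn (cellExpect (faceColors b D) f) D := fun _ _ hxy ↦
  cellExpect_congr _ f (dependsOn_faceColors hb D hxy)

/-- The density of the colour `β D` on the edge `D` in the cell of `D` whose faces have the colours
prescribed by `β`; the edge is coloured by `b` and its faces are coloured by `b₁`. -/
noncomputable def colorDensity (b b₁ : Finset ι → (∀ i, V i) → ℕ) (D : Finset ι)
    (β : Finset ι → ℕ) : ℝ :=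
  (𝔼 x, ind (b D x = β D) * ind (∀ i ∈ D, b₁ (D.erase i) x = β (D.erase i))) /
    𝔼 x, ind (∀ i ∈ D, b₁ (D.erase i) x = β (D.erase i))

lemma cellExpect_eq_colorDensity {D : Finset ι} {x : ∀ i, V i}
    (hx : ∀ i ∈ D, b₁ (D.erase i) x = β (D.erase i)) :
    cellExpect (faceColors b₁ D) (fun y ↦ ind (b D y = β D)) x = colorDensity b b₁ D β := by
  have hcell : ∀ y, ind (faceColors b₁ D y = faceColors b₁ D x) =
      ind (∀ i ∈ D, b₁ (D.erase i) y = β (D.erase i)) := fun y ↦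
    ind_congr (faceColors_eq_iff.trans (forall₂_congr fun i hi ↦ by rw [hx i hi]))
  simp only [cellExpect, colorDensity, hcell]

lemma dependsOn_colorDensity (b b₁ : Finset ι → (∀ i, V i) → ℕ) (D : Finset ι) :
    DependsOn (colorDensity b b₁ D) (Set.Iic D) := fun β β' h ↦ by
  have hface : ∀ x, (∀ i ∈ D, b₁ (D.erase i) x = β (D.erase i)) ↔
      ∀ i ∈ D, b₁ (D.erase i) x = β' (D.erase i) := fun x ↦
    forall₂_congr fun i _ ↦ by rw [h _ (Set.mem_Iic.2 (erase_subset i D))]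
  simp only [colorDensity, hface, h D (Set.mem_Iic.2 le_rfl)]

lemma colorDensity_le_one (b b₁ : Finset ι → (∀ i, V i) → ℕ) (D : Finset ι) (β : Finset ι → ℕ) :
    colorDensity b b₁ D β ≤ 1 :=
  div_le_one_of_le₀ (expect_le_expect fun _ _ ↦ mul_le_of_le_one_left (ind_nonneg _) (ind_le_one _))
    (expect_nonneg fun _ _ ↦ ind_nonneg _)

lemma exists_eq_of_colorDensity_pos {D : Finset ι} (h : 0 < colorDensity b b₁ D β) :
    ∃ x, b D x = β D := by
  by_contra! hne
  have hzero : ∀ x, ind (b D x = β D) = 0 := fun x ↦ ind_of_false (hne x)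
  simp [colorDensity, hzero] at h

/-- The change of the conditional density of the colour `a` on the edge `D` when the colouring of
the faces of `D` is refined from `b₁` to `b₂`. -/
noncomputable def densityChange (b b₁ b₂ : Finset ι → (∀ i, V i) → ℕ) (D : Finset ι) (a : ℕ)
    (x : ∀ i, V i) : ℝ :=
  cellExpect (faceColors b₂ D) (fun y ↦ ind (b D y = a)) x -
    cellExpect (faceColors b₁ D) (fun y ↦ ind (b D y = a)) x

lemma abs_densityChange_le_one (b b₁ b₂ : Finset ι → (∀ i, V i) → ℕ) (D : Finset ι) (a : ℕ)
    (x : ∀ i, V i) : |densityChange b b₁ b₂ D a x| ≤ 1 := by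
  have hunit : ∀ b' : Finset ι → (∀ i, V i) → ℕ,
      cellExpect (faceColors b' D) (fun y ↦ ind (b D y = a)) x ∈ Set.Icc 0 1 := fun b' ↦
    ⟨cellExpect_nonneg _ (fun _ ↦ ind_nonneg _) x, cellExpect_le_one _ (fun _ ↦ ind_le_one _) x⟩
  simpa [densityChange, Real.dist_eq] using Real.dist_le_of_mem_Icc_01 (hunit b₂) (hunit b₁)

/-- The pattern `β` is typical on the edge `D`: the colour `β D` is not rare in the cell of its
faces, and on the cell of all small subsets of `D` the densities of this colour relative to `b₁` and
to `b₂` mostly agree. -/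
def IsTypical (d : ℕ) (ρ l : ℝ) (b b₁ b₂ : Finset ι → (∀ i, V i) → ℕ) (D : Finset ι)
    (β : Finset ι → ℕ) : Prop :=
  l ≤ colorDensity b b₁ D β ∧
    𝔼 x, ind (ρ < |densityChange b b₁ b₂ D (β D) x| ∧
        HasColors b β {t ∈ levelsUpTo ι d | t ⊆ D} x) ≤
      ρ * 𝔼 x, ind (HasColors b β {t ∈ levelsUpTo ι d | t ⊆ D} x)

lemma dependsOn_isTypical (d : ℕ) (ρ l : ℝ) (b b₁ b₂ : Finset ι → (∀ i, V i) → ℕ) (D : Finset ι) :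
    DependsOn (IsTypical d ρ l b b₁ b₂ D) (Set.Iic D) := fun β β' h ↦ by
  have hcolors : ∀ x, HasColors b β {t ∈ levelsUpTo ι d | t ⊆ D} x ↔
      HasColors b β' {t ∈ levelsUpTo ι d | t ⊆ D} x := fun x ↦
    forall₂_congr fun t ht ↦ by rw [h t (Set.mem_Iic.2 (mem_filter.1 ht).2)]
  simp only [IsTypical, dependsOn_colorDensity b b₁ D h, hcolors, h D (Set.mem_Iic.2 le_rfl)]

lemma expect_ind_not_isTypical_le [∀ i, Nonempty (V i)] {D : Finset ι} (hM : ∀ x, b D x < M)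
    (hface : ∀ i ∈ D, b (D.erase i) = b₁ (D.erase i)) (hl : 0 ≤ l) (hρ : 0 < ρ)
    (hclose : ∀ a < M, 𝔼 x, densityChange b b₁ b₂ D a x ^ 2 ≤ κ) (d : ℕ) :
    𝔼 x, ind (¬IsTypical d ρ l b b₁ b₂ D fun t ↦ b t x) ≤ M * (l + κ / ρ ^ 2 / ρ) := by
  set T := {t ∈ levelsUpTo ι d | t ⊆ D}
  let C : (∀ i, V i) → T → ℕ := fun x t ↦ b t x
  have hC : ∀ x y, C y = C x ↔ HasColors b (fun t ↦ b t x) T y := fun x y ↦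
    ⟨fun h t ht ↦ congrFun h ⟨t, ht⟩, fun h ↦ funext fun t ↦ h t t.2⟩
  let rare x : ℝ := ind (cellExpect (faceColors b₁ D) (fun y ↦ ind (b D y = b D x)) x < l)
  let tail a x : ℝ := ind (ρ * 𝔼 y, ind (C y = C x) <
    𝔼 y, ind (ρ < |densityChange b b₁ b₂ D a y| ∧ C y = C x))
  have hcover : ∀ x, ind (¬IsTypical d ρ l b b₁ b₂ D fun t ↦ b t x) ≤
      rare x + ∑ a ∈ range M, tail a x := fun x ↦ by
    have hdens := cellExpect_eq_colorDensity (b := b) (b₁ := b₁) (D := D) (β := fun t ↦ b t x)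
      fun i hi ↦ by rw [hface i hi]
    refine le_trans ?_ (add_le_add_right (single_le_sum (f := fun a ↦ tail a x)
      (fun _ _ ↦ ind_nonneg _) (mem_range.2 (hM x))) _)
    by_cases hrare : l ≤ colorDensity b b₁ D fun t ↦ b t x
    · refine le_add_of_nonneg_of_le (ind_nonneg _) (ind_mono fun hnot ↦ ?_)
      simp only [hC]
      exact not_le.1 fun htail ↦ hnot ⟨hrare, htail⟩
    · refine le_add_of_le_of_nonneg (ind_mono fun _ ↦ ?_) (ind_nonneg _)
      exact hdens.trans_lt (not_le.1 hrare)
  have htail : ∀ a ∈ range M, 𝔼 x, tail a x ≤ κ / ρ ^ 2 / ρ := fun a ha ↦ by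
    refine (expect_ind_cell_lt_le C _ hρ).trans ?_
    gcongr
    exact (expect_ind_lt_abs_le hρ _).trans (by gcongr; exact hclose a (mem_range.1 ha))
  calc 𝔼 x, ind (¬IsTypical d ρ l b b₁ b₂ D fun t ↦ b t x)
      ≤ 𝔼 x, rare x + ∑ a ∈ range M, 𝔼 x, tail a x := by
        rw [← expect_sum_comm, ← expect_add_distrib]
        exact expect_le_expect fun x _ ↦ hcover x
    _ ≤ M * l + ∑ _a ∈ range M, κ / ρ ^ 2 / ρ :=
        add_le_add (expect_ind_density_lt_le _ hM hl) (sum_le_sum htail)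
    _ = M * (l + κ / ρ ^ 2 / ρ) := by simp [mul_add]

lemma IsTypical.isRegularColor {D : Finset ι} (h : IsTypical d ρ l b b₁ b₂ D β) (hD : #D = d + 1)
    (hface : ∀ i ∈ D, b (D.erase i) = b₁ (D.erase i)) (hb : ∀ t : Finset ι, DependsOn (b t) t)
    (hb₁ : ∀ t : Finset ι, DependsOn (b₁ t) t) (hb₂ : ∀ t : Finset ι, DependsOn (b₂ t) t)
    (hcut : CutNormLE D (fun x ↦ ind (b D x = β D) -
      cellExpect (faceColors b₂ D) (fun y ↦ ind (b D y = β D)) x) τ) :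
    IsRegularColor d ρ τ (colorDensity b b₁ D β) b β D := by
  refine ⟨_, densityChange b b₁ b₂ D (β D), fun x y hxy ↦ ?_, fun x y hxy ↦ ?_, hcut,
    abs_densityChange_le_one b b₁ b₂ D (β D), h.2, fun x hx ↦ ?_⟩
  · simp only [hb D hxy, dependsOn_cellExpect_faceColors hb₂ D _ hxy]
  · simp only [densityChange, dependsOn_cellExpect_faceColors hb₁ D _ hxy,
      dependsOn_cellExpect_faceColors hb₂ D _ hxy]
  · have hdens : cellExpect (faceColors b₁ D) (fun y ↦ ind (b D y = β D)) x =
        colorDensity b b₁ D β := cellExpect_eq_colorDensity fun i hi ↦ by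
      rw [← hface i hi]
      exact hx _ (mem_levelsUpTo.2 (by rw [card_erase_of_mem hi]; omega))
    rw [densityChange, hdens]
    ring

variable {p : Finset ι → ℝ}

lemma IsCounted.exists_succ [∀ i, Nonempty (V i)] (hc : IsCounted d ρ p b β) (hρ : ρ ≤ 1)
    (hb : ∀ t : Finset ι, DependsOn (b t) t) {q : Finset ι → ℝ} (hl : 0 < l) (hl1 : l ≤ 1)
    (hq : ∀ D, #D = d + 1 → l ≤ q D ∧ q D ≤ 1)
    (hreg : ∀ D, #D = d + 1 → IsRegularColor d ρ τ (q D) b β D) (hτ0 : 0 ≤ τ)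
    (hτ : 2 ^ Fintype.card ι * τ ≤ θ * ∏ t ∈ levelsUpTo ι d, p t)
    (hρθ : 7 * 2 ^ Fintype.card ι * ρ ≤ θ) (hθ : 2 * θ ≤ ε * l ^ 2 ^ Fintype.card ι) :
    ∃ p', IsCounted (d + 1) ε p' b β ∧ l ^ 2 ^ Fintype.card ι * ∏ t ∈ levelsUpTo ι d, p t ≤
      ∏ t ∈ levelsUpTo ι (d + 1), p' t := by
  have hρ0 := hc.error_nonneg
  have hθ0 : 0 ≤ θ := le_trans (by positivity) hρθ
  have hε0 : 0 ≤ ε :=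
    nonneg_of_mul_nonneg_left ((mul_nonneg two_pos.le hθ0).trans hθ) (by positivity)
  let p' : Finset ι → ℝ := fun t ↦ if #t = d + 1 then q t else p t
  have hp'q : ∀ D, #D = d + 1 → p' D = q D := fun D hD ↦ if_pos hD
  have hp'p : ∀ t, #t ≤ d → p' t = p t := fun t ht ↦ if_neg (by omega)
  have hc' : IsCounted d ρ p' b β := hc.congr (fun _ _ ↦ rfl) hp'p
  have hprod : ∏ t ∈ levelsUpTo ι d, p' t = ∏ t ∈ levelsUpTo ι d, p t :=
    prod_congr rfl fun t ht ↦ hp'p t (mem_levelsUpTo.1 ht)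
  have hlower := pow_mul_prod_levelsUpTo_le hl.le hl1 (fun t ht ↦ (hc'.density_mem t ht).1.le)
    fun D hD ↦ (hq D hD).1.trans_eq (hp'q D hD).symm
  refine ⟨p', hc'.succ hρ hρ0 hτ0 hb (fun D hD ↦ ?_) (fun D hD ↦ ?_) ?_, hprod ▸ hlower⟩
  · rw [hp'q D hD]
    exact ⟨hl.trans_le (hq D hD).1, (hq D hD).2⟩
  · rw [hp'q D hD]
    exact hreg D hD
  · have hP := hc'.prod_pos
    have hK : (1 : ℝ) ≤ 2 ^ Fintype.card ι := one_le_pow₀ one_le_two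
    have hρP : ρ * ∏ t ∈ levelsUpTo ι d, p' t ≤
        2 ^ Fintype.card ι * (ρ * ∏ t ∈ levelsUpTo ι d, p' t) :=
      le_mul_of_one_le_left (by positivity) hK
    have hθP := mul_le_mul_of_nonneg_right hρθ hP.le
    have hεP := mul_le_mul_of_nonneg_left hlower hε0
    have hlP := mul_le_mul_of_nonneg_right hθ hP.le
    rw [← hprod] at hτ
    linarith

/-- Outside a small exceptional event, the patterns of the colouring `b` on the index sets of size
at most `d` are counted with densities whose product is at least `δ`. The exceptional event is the
failure of one of the predicates `Good t`, which concern the colours of the subsets of `t` only. -/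
structure CountsGoodPatterns (d : ℕ) (ε δ : ℝ) (b : Finset ι → (∀ i, V i) → ℕ)
    (Good : Finset ι → (Finset ι → ℕ) → Prop) : Prop where
  dependsOn : ∀ t, DependsOn (Good t) (Set.Iic t)
  expect_not_le : ∀ t, #t ≤ d → 𝔼 x, ind (¬Good t fun u ↦ b u x) ≤ ε
  exists_isCounted : ∀ β, (∀ t, #t ≤ d → Good t β) →
    ∃ p, IsCounted d ε p b β ∧ δ ≤ ∏ t ∈ levelsUpTo ι d, p t

variable {Good : Finset ι → (Finset ι → ℕ) → Prop}

lemma CountsGoodPatterns.mono {δ' : ℝ} (h : CountsGoodPatterns d ε δ b Good) (hδ : δ' ≤ δ) :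
    CountsGoodPatterns d ε δ' b Good where
  dependsOn := h.dependsOn
  expect_not_le := h.expect_not_le
  exists_isCounted β hβ := (h.exists_isCounted β hβ).imp fun _ hp ↦ hp.imp_right hδ.trans

lemma CountsGoodPatterns.congr (h : CountsGoodPatterns d ε δ b Good)
    {b' : Finset ι → (∀ i, V i) → ℕ} (hb : ∀ t, #t ≤ d → b' t = b t) :
    CountsGoodPatterns d ε δ b' Good where
  dependsOn := h.dependsOn
  expect_not_le t ht := by
    have hgood : ∀ x, Good t (fun u ↦ b' u x) = Good t (fun u ↦ b u x) := fun x ↦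
      h.dependsOn t fun u hu ↦ by rw [hb u ((card_le_card hu).trans ht)]
    simpa only [hgood] using h.expect_not_le t ht
  exists_isCounted β hβ := by
    obtain ⟨p, hp, hδ⟩ := h.exists_isCounted β hβ
    exact ⟨p, hp.congr hb fun _ _ ↦ rfl, hδ⟩

lemma countsGoodPatterns_zero (hb : ∀ t : Finset ι, DependsOn (b t) t) (hε : 0 ≤ ε) :
    CountsGoodPatterns 0 ε 1 b fun t β ↦ t = ∅ → ∀ x, b ∅ x = β ∅ where
  dependsOn t β β' h :=
    congrArg (fun a ↦ t = ∅ → ∀ x, b ∅ x = a) (h ∅ (Set.mem_Iic.2 (empty_subset t)))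
  expect_not_le t _ := by
    have hgood : ∀ x, t = ∅ → ∀ y, b ∅ y = b ∅ x := fun x _ y ↦ hb ∅ (by simp)
    have hzero : ∀ x, ind (¬(t = ∅ → ∀ y, b ∅ y = b ∅ x)) = 0 := fun x ↦
      ind_of_false (not_not.2 (hgood x))
    simpa only [hzero, expect_const_zero] using hε
  exists_isCounted β hβ := by
    refine ⟨fun _ ↦ 1, ⟨hβ ∅ le_rfl rfl, rfl, by simp, fun s A _ ↦ ?_⟩, by simp⟩
    have hlevel : {t ∈ levelsUpTo ι 0 | t ⊆ s} = levelsUpTo ι 0 := filter_true_of_mem fun t ht ↦ by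
      rw [card_eq_zero.1 (Nat.le_zero.1 (mem_levelsUpTo.1 ht))]
      exact empty_subset s
    simpa [hlevel] using hε

lemma CountsGoodPatterns.succ [∀ i, Nonempty (V i)] (h : CountsGoodPatterns d ρ δ b Good)
    (hb : ∀ t : Finset ι, DependsOn (b t) t) (hb₁ : ∀ t : Finset ι, DependsOn (b₁ t) t)
    (hb₂ : ∀ t : Finset ι, DependsOn (b₂ t) t) (hface : ∀ t, #t = d → b t = b₁ t)
    (hM : ∀ D, #D = d + 1 → ∀ x, b D x < M)
    (hclose : ∀ D, #D = d + 1 → ∀ a < M, 𝔼 x, densityChange b b₁ b₂ D a x ^ 2 ≤ κ)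
    (hcut : ∀ D, #D = d + 1 → ∀ a < M, CutNormLE D (fun x ↦ ind (b D x = a) -
      cellExpect (faceColors b₂ D) (fun y ↦ ind (b D y = a)) x) τ)
    (hτ0 : 0 ≤ τ) (hτ : 2 ^ Fintype.card ι * τ ≤ θ * δ) (hl : 0 < l) (hl1 : l ≤ 1) (hρ0 : 0 < ρ)
    (hρ1 : ρ ≤ 1) (hρε : ρ ≤ ε) (hκ : M * (l + κ / ρ ^ 2 / ρ) ≤ ε)
    (hρθ : 7 * 2 ^ Fintype.card ι * ρ ≤ θ) (hθ : 2 * θ ≤ ε * l ^ 2 ^ Fintype.card ι) :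
    CountsGoodPatterns (d + 1) ε (l ^ 2 ^ Fintype.card ι * δ) b fun t β ↦
      if #t = d + 1 then IsTypical d ρ l b b₁ b₂ t β else Good t β where
  dependsOn t := by
    split_ifs
    exacts [dependsOn_isTypical d ρ l b b₁ b₂ t, h.dependsOn t]
  expect_not_le t ht := by
    split_ifs with htd
    · refine (expect_ind_not_isTypical_le (hM t htd) (fun i hi ↦ hface _ ?_) hl.le hρ0
        (hclose t htd) d).trans hκ
      rw [card_erase_of_mem hi, htd, Nat.add_sub_cancel]
    · exact (h.expect_not_le t (by omega)).trans hρε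
  exists_isCounted β hβ := by
    have htyp : ∀ D, #D = d + 1 → IsTypical d ρ l b b₁ b₂ D β := fun D hD ↦ by
      simpa only [hD, if_true] using hβ D hD.le
    obtain ⟨p, hp, hδ⟩ := h.exists_isCounted β fun t ht ↦ by
      simpa only [(Nat.lt_succ_of_le ht).ne, if_false] using hβ t (by omega)
    have hθ0 : 0 ≤ θ := le_trans (by positivity) hρθ
    have hreg : ∀ D, #D = d + 1 → IsRegularColor d ρ τ (colorDensity b b₁ D β) b β D := by
      intro D hD
      obtain ⟨x, hx⟩ := exists_eq_of_colorDensity_pos (hl.trans_le (htyp D hD).1)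
      exact (htyp D hD).isRegularColor hD (fun i hi ↦ hface _
        (by rw [card_erase_of_mem hi, hD, Nat.add_sub_cancel])) hb hb₁ hb₂
        (hcut D hD _ (hx ▸ hM D hD x))
    obtain ⟨p', hp', hδ'⟩ := hp.exists_succ hρ1 hb hl hl1
      (fun D hD ↦ ⟨(htyp D hD).1, colorDensity_le_one b b₁ D β⟩) hreg hτ0
      (hτ.trans (mul_le_mul_of_nonneg_left hδ hθ0)) hρθ hθ
    exact ⟨p', hp', (mul_le_mul_of_nonneg_left hδ (by positivity)).trans hδ'⟩

end Regularization

lemma exists_regularization_parameters (n M : ℕ) {ε : ℝ} (hε : 0 < ε) :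
    ∃ l θ ρ κ : ℝ, 0 < l ∧ l ≤ 1 ∧ 0 < θ ∧ 0 < ρ ∧ ρ ≤ 1 ∧ ρ ≤ ε ∧ 0 < κ ∧
      M * (l + κ / ρ ^ 2 / ρ) ≤ ε ∧ 7 * 2 ^ n * ρ ≤ θ ∧ 2 * θ ≤ ε * l ^ 2 ^ n := by
  set l : ℝ := min 1 (ε / (2 * (M + 1)))
  have hl : 0 < l := lt_min one_pos (by positivity)
  set θ : ℝ := ε * l ^ 2 ^ n / 2
  have hθ : 0 < θ := by positivity
  set ρ : ℝ := min (min 1 ε) (θ / (7 * 2 ^ n))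
  have hρ : 0 < ρ := lt_min (lt_min one_pos hε) (by positivity)
  have hκ : ε * ρ ^ 3 / (2 * (M + 1)) / ρ ^ 2 / ρ = ε / (2 * (M + 1)) := by field_simp
  refine ⟨l, θ, ρ, ε * ρ ^ 3 / (2 * (M + 1)), hl, min_le_left _ _, hθ, hρ,
    (min_le_left _ _).trans (min_le_left _ _), (min_le_left _ _).trans (min_le_right _ _),
    by positivity, ?_, ?_, (mul_div_cancel₀ _ two_ne_zero).le⟩
  · calc M * (l + ε * ρ ^ 3 / (2 * (M + 1)) / ρ ^ 2 / ρ)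
        ≤ (M + 1) * (ε / (2 * (M + 1)) + ε / (2 * (M + 1))) := by
          rw [hκ]
          gcongr
          exacts [by linarith, min_le_right _ _]
      _ = ε := by field_simp; norm_num
  · rw [mul_comm, ← le_div_iff₀ (by positivity)]
    exact min_le_right _ _

/-- Every colouring `c` can be completed, keeping the colours of the `d`-element index sets, to a
colouring of bounded complexity whose good patterns are counted. -/
def Regularizable (ι : Type u) [Fintype ι] [DecidableEq ι] (d : ℕ) : Prop :=
  ∀ (M : ℕ) (ε : ℝ), 0 < ε → ∃ (N : ℕ) (δ : ℝ), 0 < δ ∧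
    ∀ (V : ι → Type v) [∀ i, Fintype (V i)] [∀ i, Nonempty (V i)] (c : Finset ι → (∀ i, V i) → ℕ),
      IsColoring c M → ∃ b, IsColoring b N ∧ (∀ t, #t = d → b t = c t) ∧
        ∃ Good, CountsGoodPatterns d ε δ b Good

variable {ι : Type u} [Fintype ι] [DecidableEq ι]

lemma regularizable_zero : Regularizable.{u, v} ι 0 := fun M _ε hε ↦
  ⟨M, 1, one_pos, fun _ _ _ c hc ↦
    ⟨c, hc, fun _ _ ↦ rfl, _, countsGoodPatterns_zero hc.dependsOn hε.le⟩⟩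

lemma Regularizable.succ {d : ℕ} (ih : Regularizable.{u, v} ι d) :
    Regularizable.{u, v} ι (d + 1) := by
  intro M ε hε
  obtain ⟨l, θ, ρ, κ, hl, hl1, hθ, hρ, hρ1, hρε, hκ, hκε, hρθ, hθε⟩ :=
    exists_regularization_parameters (Fintype.card ι) M hε
  choose N' δ' hδ' hcomplete using fun m ↦ ih m ρ hρ
  obtain ⟨N₁, hN₁⟩ := strong_regularity.{u, v} ι (Finset ι × Fin M) hκ
    (F := fun m ↦ θ * δ' m / 2 ^ Fintype.card ι) fun m ↦ by have := hδ' m; positivity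
  obtain ⟨m₀, -, hm₀⟩ := exists_min_image (range (N₁ + 1)) δ' nonempty_range_add_one
  refine ⟨max M ((range (N₁ + 1)).sup N'), l ^ 2 ^ Fintype.card ι * δ' m₀,
    mul_pos (by positivity) (hδ' m₀), fun V _ _ c hc ↦ ?_⟩
  obtain ⟨M₁, hM₁, b₁, b₂, hb₁, hb₂, -, hclose, hcut⟩ := hN₁ V Prod.fst
    (fun k x ↦ ind (c k.1 x = k.2)) fun k x ↦ ⟨ind_nonneg _, ind_le_one _⟩
  have hM₁mem : M₁ ∈ range (N₁ + 1) := mem_range.2 (Nat.lt_succ_of_le hM₁)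
  obtain ⟨b', hb', hb'b₁, Good, hGood⟩ := hcomplete M₁ V b₁ hb₁
  let b : Finset ι → (∀ i, V i) → ℕ := fun t ↦ if #t = d + 1 then c t else b' t
  have hbc : ∀ t, #t = d + 1 → b t = c t := fun t ht ↦ if_pos ht
  have hbb' : ∀ t, #t ≤ d → b t = b' t := fun t ht ↦ if_neg (by omega)
  have hb : IsColoring b (max M ((range (N₁ + 1)).sup N')) := by
    have hc' := hc.mono (le_max_left M ((range (N₁ + 1)).sup N'))
    have hb'' := hb'.mono ((le_sup hM₁mem).trans (le_max_right M _))
    refine ⟨fun t ↦ ?_, fun t ↦ ?_⟩ <;> dsimp only [b] <;> split_ifs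
    exacts [hc'.dependsOn t, hb''.dependsOn t, hc'.lt t, hb''.lt t]
  have hcount := (hGood.congr hbb').succ (M := M) (τ := θ * δ' M₁ / 2 ^ Fintype.card ι)
    (b₁ := b₁) (b₂ := b₂) hb.dependsOn hb₁.dependsOn hb₂
    (fun t ht ↦ (hbb' t ht.le).trans (hb'b₁ t ht)) (fun D hD ↦ hbc D hD ▸ hc.lt D)
    (fun D hD a ha ↦ by simpa only [densityChange, hbc D hD] using hclose (D, ⟨a, ha⟩))
    (fun D hD a ha ↦ by simpa only [hbc D hD] using hcut (D, ⟨a, ha⟩))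
    (by have := hδ' M₁; positivity) (mul_div_cancel₀ _ (by positivity)).le hl hl1 hρ hρ1 hρε hκε
    hρθ hθε
  exact ⟨b, hb, hbc, _, hcount.mono (mul_le_mul_of_nonneg_left (hm₀ M₁ hM₁mem) (by positivity))⟩

theorem regularizable (d : ℕ) : Regularizable.{u, v} ι d := by
  induction d with
  | zero => exact regularizable_zero
  | succ d ih => exact ih.succ

/-! ### Removal for bounded functions -/

section DenseRemoval

variable {ι : Type u} [Fintype ι] [DecidableEq ι] {V : ι → Type v} {θ : ℝ}
  {g : ι → (∀ i, V i) → ℝ}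

/-- The colouring that gives colour `1` to the point `x` on the facet `univ.erase j` if
`θ ≤ g j x`, and colour `0` otherwise; every face that is not a facet has colour `0`. -/
noncomputable def superlevelColoring (θ : ℝ) (g : ι → (∀ i, V i) → ℝ) (t : Finset ι)
    (x : ∀ i, V i) : ℕ :=
  open Classical in if ∃ j, t = univ.erase j ∧ θ ≤ g j x then 1 else 0

lemma isColoring_superlevelColoring (hg : ∀ j, DependsOn (g j) (univ.erase j : Finset ι)) :
    IsColoring (superlevelColoring θ g) 2 where
  dependsOn t x y hxy := by
    have h : (∃ j, t = univ.erase j ∧ θ ≤ g j x) ↔ ∃ j, t = univ.erase j ∧ θ ≤ g j y := by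
      refine exists_congr fun j ↦ and_congr_right ?_
      rintro rfl
      rw [hg j hxy]
    simp only [superlevelColoring, h]
  lt t x := by
    unfold superlevelColoring
    split_ifs <;> norm_num

lemma superlevelColoring_erase_eq_one_iff (j : ι) (x : ∀ i, V i) :
    superlevelColoring θ g (univ.erase j) x = 1 ↔ θ ≤ g j x := by
  have h : (∃ i, univ.erase j = univ.erase i ∧ θ ≤ g i x) ↔ θ ≤ g j x := by
    refine ⟨?_, fun hj ↦ ⟨j, rfl, hj⟩⟩
    rintro ⟨i, hij, hi⟩
    rwa [(erase_inj univ (mem_univ j)).1 hij]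
  simp [superlevelColoring, h]

lemma card_univ_erase (j : ι) : #(univ.erase j) = Fintype.card ι - 1 := by
  rw [card_erase_of_mem (mem_univ j), card_univ]

lemma subset_univ_erase_of_notMem {t : Finset ι} {j : ι} (h : j ∉ t) : t ⊆ univ.erase j :=
  subset_erase.2 ⟨subset_univ t, h⟩

/-- All faces of the facet `univ.erase j` have good colours once the facet itself has been
recoloured by `1`. Only the colours of its proper subsets matter for this condition. -/
def FacetGood (Good : Finset ι → (Finset ι → ℕ) → Prop) (j : ι) (β : Finset ι → ℕ) : Prop :=
  ∀ t ⊆ univ.erase j, Good t (Function.update β (univ.erase j) 1)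

variable {Good : Finset ι → (Finset ι → ℕ) → Prop}

lemma dependsOn_facetGood (h : ∀ t, DependsOn (Good t) (Set.Iic t)) (j : ι) :
    DependsOn (FacetGood Good j) (Set.Iio (univ.erase j)) := by
  intro β β' hβ
  refine propext (forall₂_congr fun t ht ↦ Eq.to_iff (h t fun u hu ↦ ?_))
  by_cases hue : u = univ.erase j
  · rw [hue, Function.update_self, Function.update_self]
  · rw [Function.update_of_ne hue, Function.update_of_ne hue]
    exact hβ u (lt_of_le_of_ne (le_trans hu ht) hue)

/-- The colour pattern `β` with the colour of every facet replaced by `1`. -/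
noncomputable def recolorFacets (β : Finset ι → ℕ) (u : Finset ι) : ℕ :=
  open Classical in if ∃ j, u = univ.erase j then 1 else β u

lemma recolorFacets_erase (β : Finset ι → ℕ) (j : ι) : recolorFacets β (univ.erase j) = 1 :=
  if_pos ⟨j, rfl⟩

lemma good_recolorFacets (h : ∀ t, DependsOn (Good t) (Set.Iic t)) {β : Finset ι → ℕ}
    (hβ : ∀ j, FacetGood Good j β) {t : Finset ι} (ht : t ≠ univ) :
    Good t (recolorFacets β) := by
  obtain ⟨j, hj⟩ : ∃ j, j ∉ t := by
    by_contra! hall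
    exact ht (eq_univ_iff_forall.2 hall)
  have hsub := subset_univ_erase_of_notMem hj
  refine (Eq.to_iff (h t fun u hu ↦ ?_)).1 (hβ j t hsub)
  by_cases hue : u = univ.erase j
  · rw [hue, Function.update_self, recolorFacets_erase]
  · rw [Function.update_of_ne hue, recolorFacets, if_neg]
    rintro ⟨i, rfl⟩
    exact hue (eq_of_subset_of_card_le (le_trans hu hsub)
      (by rw [card_univ_erase, card_univ_erase]))

variable [∀ i, Fintype (V i)] {b : Finset ι → (∀ i, V i) → ℕ}

lemma pow_card_mul_expect_hasColors_le (hg : ∀ j x, 0 ≤ g j x) (hθ : 0 ≤ θ)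
    (hb : ∀ j x, b (univ.erase j) x = 1 ↔ θ ≤ g j x) (β : Finset ι → ℕ) :
    θ ^ Fintype.card ι * 𝔼 x, ind (HasColors b (recolorFacets β)
      (levelsUpTo ι (Fintype.card ι - 1)) x) ≤ 𝔼 x, ∏ j, g j x := by
  rw [mul_expect]
  refine expect_le_expect fun y _ ↦ ?_
  by_cases hy : HasColors b (recolorFacets β) (levelsUpTo ι (Fintype.card ι - 1)) y
  · rw [ind_of_true hy, mul_one, ← card_univ, ← prod_const]
    refine prod_le_prod (fun _ _ ↦ hθ) fun j _ ↦ (hb j y).1 ?_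
    rw [hy _ (mem_levelsUpTo.2 (card_univ_erase j).le), recolorFacets_erase]
  · rw [ind_of_false hy, mul_zero]
    exact prod_nonneg fun j _ ↦ hg j y

variable [∀ i, Nonempty (V i)]

lemma CountsGoodPatterns.half_le {d : ℕ} {ε δ : ℝ} (h : CountsGoodPatterns d ε δ b Good)
    (hδ : 0 ≤ δ) (hε : ε ≤ 1 / 2) {β : Finset ι → ℕ} (hβ : ∀ t, #t ≤ d → Good t β) :
    δ / 2 ≤ 𝔼 x, ind (HasColors b β (levelsUpTo ι d) x) := by
  obtain ⟨p, hp, hδp⟩ := h.exists_isCounted β hβ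
  have hcount := (abs_le.1 hp.abs_expect_sub_prod_le).1
  have := mul_le_mul_of_nonneg_right hε (hδ.trans hδp)
  linarith

lemma CountsGoodPatterns.exists_not_facetGood [Nonempty ι] {ε δ : ℝ}
    (h : CountsGoodPatterns (Fintype.card ι - 1) ε δ b Good) (hε : ε ≤ 1 / 2) (hδ : 0 ≤ δ)
    (hg : ∀ j x, 0 ≤ g j x) (hθ : 0 ≤ θ) (hb : ∀ j x, b (univ.erase j) x = 1 ↔ θ ≤ g j x)
    (hsmall : 𝔼 x, ∏ j, g j x < θ ^ Fintype.card ι * (δ / 2)) (x : ∀ i, V i) :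
    ∃ j, ¬FacetGood Good j fun u ↦ b u x := by
  by_contra! hgood
  refine hsmall.not_ge (le_trans ?_ (pow_card_mul_expect_hasColors_le hg hθ hb fun u ↦ b u x))
  gcongr
  refine h.half_le hδ hε fun t ht ↦ good_recolorFacets h.dependsOn hgood ?_
  rintro rfl
  have := Fintype.card_pos (α := ι)
  rw [card_univ] at ht
  omega

lemma CountsGoodPatterns.expect_mul_ind_not_facetGood_le {ε δ : ℝ} {j : ι}
    (h : CountsGoodPatterns (Fintype.card ι - 1) ε δ b Good) {f : (∀ i, V i) → ℝ}
    (hf : ∀ x, 0 ≤ f x ∧ f x ≤ 1) (hθ : 0 ≤ θ) (hb : ∀ x, b (univ.erase j) x = 1 ↔ θ ≤ f x)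
    (hε : 0 ≤ ε) :
    𝔼 x, f x * ind (¬FacetGood Good j fun u ↦ b u x) ≤ θ + 2 ^ Fintype.card ι * ε := by
  have hpoint (x : ∀ i, V i) : f x * ind (¬FacetGood Good j fun u ↦ b u x) ≤
      θ + ∑ t ∈ (univ.erase j).powerset, ind (¬Good t fun u ↦ b u x) := by
    by_cases hx : θ ≤ f x
    · have hupdate : Function.update (fun u ↦ b u x) (univ.erase j) 1 = fun u ↦ b u x := by
        rw [← (hb x).2 hx]
        exact Function.update_eq_self _ fun u ↦ b u x
      calc f x * ind (¬FacetGood Good j fun u ↦ b u x)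
          ≤ ind (¬FacetGood Good j fun u ↦ b u x) :=
            mul_le_of_le_one_left (ind_nonneg _) (hf x).2
        _ ≤ ind (∃ t ∈ (univ.erase j).powerset, ¬Good t fun u ↦ b u x) :=
            ind_mono fun hbad ↦ by
              simpa only [FacetGood, hupdate, not_forall, exists_prop, mem_powerset] using hbad
        _ ≤ ∑ t ∈ (univ.erase j).powerset, ind (¬Good t fun u ↦ b u x) := ind_exists_le_sum _ _
        _ ≤ _ := le_add_of_nonneg_left hθ
    · exact (mul_le_of_le_one_right (hf x).1 (ind_le_one _)).trans ((not_le.1 hx).le.trans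
        (le_add_of_nonneg_right (sum_nonneg fun _ _ ↦ ind_nonneg _)))
  calc 𝔼 x, f x * ind (¬FacetGood Good j fun u ↦ b u x)
      ≤ θ + ∑ t ∈ (univ.erase j).powerset, 𝔼 x, ind (¬Good t fun u ↦ b u x) := by
        refine (expect_le_expect fun x _ ↦ hpoint x).trans_eq ?_
        rw [expect_add_distrib, Fintype.expect_const, expect_sum_comm]
    _ ≤ θ + ∑ _t ∈ (univ.erase j).powerset, ε := by
        gcongr with _ ht
        exact h.expect_not_le _ ((card_le_card (mem_powerset.1 ht)).trans (card_univ_erase j).le)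
    _ ≤ θ + 2 ^ Fintype.card ι * ε := by
        rw [sum_const, card_powerset, nsmul_eq_mul, Nat.cast_pow, Nat.cast_ofNat]
        gcongr
        · exact one_le_two
        · exact card_le_univ _

-- As `M` does not depend on `V` and `Keep j` involves only proper subsets of `univ.erase j`, cut
-- norm bounds can transfer the loss to functions that are not bounded.
theorem dense_removal (ι : Type u) [Fintype ι] [DecidableEq ι] [Nonempty ι] {ε : ℝ}
    (hε : 0 < ε) :
    ∃ (c : ℝ) (M : ℕ), 0 < c ∧ ∀ (V : ι → Type v) [∀ i, Fintype (V i)] [∀ i, Nonempty (V i)]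
      (g : ι → (∀ i, V i) → ℝ), (∀ j x, 0 ≤ g j x ∧ g j x ≤ 1) →
      (∀ j, DependsOn (g j) (univ.erase j : Finset ι)) → 𝔼 x, ∏ j, g j x ≤ c →
      ∃ b, IsColoring b M ∧ ∃ Keep : ι → (Finset ι → ℕ) → Prop,
        (∀ j, DependsOn (Keep j) (Set.Iio (univ.erase j))) ∧
        (∀ x, ∃ j, ¬Keep j fun u ↦ b u x) ∧
        ∀ j, 𝔼 x, g j x * ind (¬Keep j fun u ↦ b u x) ≤ ε := by
  set k := Fintype.card ι
  set ε₁ : ℝ := min (1 / 2) (ε / 2 / 2 ^ k)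
  have hε₁pos : 0 < ε₁ := lt_min (by norm_num) (by positivity)
  have hε₁k : 2 ^ k * ε₁ ≤ ε / 2 := (le_div_iff₀' (by positivity)).1 (min_le_right _ _)
  obtain ⟨M, δ, hδ, hreg⟩ := regularizable.{u, v} (ι := ι) (k - 1) 2 ε₁ hε₁pos
  have hcpos : 0 < (ε / 2) ^ k * (δ / 2) := by positivity
  refine ⟨(ε / 2) ^ k * (δ / 2) / 2, M, half_pos hcpos, fun V _ _ g hg hdep hsmall ↦ ?_⟩
  obtain ⟨b, hb, hbtop, Good, hGood⟩ :=
    hreg V (superlevelColoring (ε / 2) g) (isColoring_superlevelColoring hdep)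
  have hb1 (j x) : b (univ.erase j) x = 1 ↔ ε / 2 ≤ g j x := by
    rw [hbtop _ (card_univ_erase j), superlevelColoring_erase_eq_one_iff]
  refine ⟨b, hb, FacetGood Good, dependsOn_facetGood hGood.dependsOn,
    hGood.exists_not_facetGood (min_le_left _ _) hδ.le (fun j x ↦ (hg j x).1) (half_pos hε).le hb1
      (hsmall.trans_lt (half_lt_self hcpos)), fun j ↦ ?_⟩
  have := hGood.expect_mul_ind_not_facetGood_le (hg j) (half_pos hε).le (hb1 j) hε₁pos.le
  linarith

end DenseRemoval

/-! ### The dense model theorem -/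

section Huber

/-- The Huber function, quadratic up to `2` and linear beyond. Using it as an energy instead of the
square makes the energy of an unbounded function bounded in terms of its mean. -/
noncomputable def huber (y : ℝ) : ℝ := if y ≤ 2 then y ^ 2 else 4 * y - 4

lemma huber_nonneg (y : ℝ) : 0 ≤ huber y := by
  unfold huber
  split_ifs <;> nlinarith

lemma huber_le {y : ℝ} (hy : 0 ≤ y) : huber y ≤ 4 * y := by
  unfold huber
  split_ifs <;> nlinarith

-- The right-hand side is the Bregman divergence: `min (2 * y) 4` is the derivative of `huber`.
lemma sub_mul_ind_sq_le_huber_sub (y z : ℝ) :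
    ((z - y) * ind (y ≤ 2 ∧ z ≤ 2)) ^ 2 ≤ huber z - huber y - min (2 * y) 4 * (z - y) := by
  unfold huber
  by_cases hy : y ≤ 2 <;> by_cases hz : z ≤ 2
  · rw [ind_of_true ⟨hy, hz⟩, if_pos hy, if_pos hz, min_eq_left (by linarith)]
    nlinarith
  · rw [ind_of_false fun h ↦ hz h.2, if_pos hy, if_neg hz, min_eq_left (by linarith)]
    nlinarith
  · rw [ind_of_false fun h ↦ hy h.1, if_neg hy, if_pos hz, min_eq_right (by linarith)]
    nlinarith [sq_nonneg (z - 2)]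
  · rw [ind_of_false fun h ↦ hy h.1, if_neg hy, if_neg hz, min_eq_right (by linarith)]
    nlinarith

lemma abs_sub_le_add_excess {y z : ℝ} (hy : 0 ≤ y) (hz : 0 ≤ z) :
    |z - y| ≤ |(z - y) * ind (y ≤ 2 ∧ z ≤ 2)| + 2 * max (y - 1) 0 + 2 * max (z - 1) 0 := by
  have hy1 := le_max_left (y - 1) 0
  have hy0 := le_max_right (y - 1) 0
  have hz1 := le_max_left (z - 1) 0
  have hz0 := le_max_right (z - 1) 0
  by_cases h : y ≤ 2 ∧ z ≤ 2
  · rw [ind_of_true h, mul_one]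
    linarith
  · rw [ind_of_false h, mul_zero, abs_zero, abs_le]
    rw [not_and_or, not_le, not_le] at h
    rcases h with h | h <;> constructor <;> linarith

variable {X γ γ' : Type*} [Fintype X] {C : X → γ} {C' : X → γ'} {g : X → ℝ}

lemma expect_huber_cellExpect_le (C : X → γ) (hg : ∀ x, 0 ≤ g x) :
    𝔼 x, huber (cellExpect C g x) ≤ 4 * 𝔼 x, g x := by
  rw [← expect_cellExpect C g, mul_expect]
  exact expect_le_expect fun x _ ↦ huber_le (cellExpect_nonneg C hg x)

lemma sq_add_expect_huber_cellExpect_le (h : C.FactorsThrough C') (g : X → ℝ) :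
    (𝔼 x, |(cellExpect C' g x - cellExpect C g x) *
        ind (cellExpect C g x ≤ 2 ∧ cellExpect C' g x ≤ 2)|) ^ 2 +
      𝔼 x, huber (cellExpect C g x) ≤ 𝔼 x, huber (cellExpect C' g x) := by
  set u := cellExpect C g
  set u' := cellExpect C' g
  have hfirst : 𝔼 x, min (2 * u x) 4 * (u' x - u x) = 0 := by
    have hfine := expect_cellExpect_mul C' g (g := fun x ↦ min (2 * u x) 4) fun x y hxy ↦ by
      simp only [u, cellExpect_congr C g (h hxy)]
    have hcoarse := expect_cellExpect_mul C g (g := fun x ↦ min (2 * u x) 4) fun x y hxy ↦ by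
      simp only [u, cellExpect_congr C g hxy]
    simp_rw [mul_comm (min _ _), sub_mul, expect_sub_distrib]
    rw [hfine, hcoarse, sub_self]
  have hjensen : (𝔼 x, |(u' x - u x) * ind (u x ≤ 2 ∧ u' x ≤ 2)|) ^ 2 ≤
      𝔼 x, ((u' x - u x) * ind (u x ≤ 2 ∧ u' x ≤ 2)) ^ 2 := by
    rcases isEmpty_or_nonempty X with hX | hX
    · simp
    simpa only [one_mul, sq_abs, Fintype.expect_const] using
      expect_mul_sq_le_of_nonneg (w := fun _ ↦ 1) (fun _ ↦ zero_le_one)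
        fun x ↦ |(u' x - u x) * ind (u x ≤ 2 ∧ u' x ≤ 2)|
  have hbregman := expect_le_expect (s := univ) fun x _ ↦ sub_mul_ind_sq_le_huber_sub (u x) (u' x)
  rw [expect_sub_distrib, expect_sub_distrib, hfirst] at hbregman
  linarith

/-- The average of `g` over the cells of `C`, truncated at `1`. -/
noncomputable def cellModel (C : X → γ) (g : X → ℝ) (x : X) : ℝ :=
  min (cellExpect C g x) 1

lemma cellModel_nonneg (C : X → γ) (hg : ∀ x, 0 ≤ g x) (x : X) : 0 ≤ cellModel C g x :=
  le_min (cellExpect_nonneg C hg x) zero_le_one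

lemma abs_expect_sub_cellModel_mul_ind_le {W : X → Prop} (hW : W.FactorsThrough C')
    (C : X → γ) (g : X → ℝ) :
    |𝔼 x, (g x - cellModel C g x) * ind (W x)| ≤
      𝔼 x, |cellExpect C' g x - cellExpect C g x| + 𝔼 x, max (cellExpect C g x - 1) 0 := by
  have hsplit : 𝔼 x, (g x - cellModel C g x) * ind (W x) =
      𝔼 x, (cellExpect C' g x - cellExpect C g x + max (cellExpect C g x - 1) 0) * ind (W x) := by
    have htrunc : ∀ x, cellModel C g x = cellExpect C g x - max (cellExpect C g x - 1) 0 :=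
      fun x ↦ by
        rcases le_total (cellExpect C g x) 1 with h | h
        · rw [cellModel, min_eq_left h, max_eq_right (by linarith), sub_zero]
        · rw [cellModel, min_eq_right h, max_eq_left (by linarith), sub_sub_cancel]
    have hcell := expect_cellExpect_mul C' g (g := fun x ↦ ind (W x)) fun x y hxy ↦ by
      simp only [hW hxy]
    simp_rw [htrunc, sub_add, sub_mul, expect_sub_distrib]
    rw [hcell]
  rw [hsplit, ← expect_add_distrib]
  refine (abs_expect_le _ _).trans (expect_le_expect fun x _ ↦ ?_)
  rw [abs_mul, abs_of_nonneg (ind_nonneg _)]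
  refine (mul_le_of_le_one_right (abs_nonneg _) (ind_le_one _)).trans ((abs_add_le _ _).trans ?_)
  rw [abs_of_nonneg (le_max_right (cellExpect C g x - 1) 0)]

end Huber

section DenseModel

variable {ι : Type*} [Fintype ι] [DecidableEq ι] {V : ι → Type*} [∀ i, Fintype (V i)]
  {D : Finset ι} {u ν g : (∀ i, V i) → ℝ} {τ η : ℝ} {b : Finset ι → (∀ i, V i) → ℕ} {M : ℕ}

lemma CutNormLE.abs_expect_mul_ind_colors_le (hu : CutNormLE D u τ) (hd : DependsOn u D)
    (hb : IsColoring b M) {T : Finset (Finset ι)} (hT : ∀ t ∈ T, ¬D ⊆ t)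
    {Q : (Finset ι → ℕ) → Prop} (hQ : DependsOn Q T) :
    |𝔼 x, u x * ind (Q fun t ↦ b t x)| ≤ M ^ #T * τ := by
  set extend : (T → Fin M) → Finset ι → ℕ := fun γ t ↦ if h : t ∈ T then γ ⟨t, h⟩ else 0
  have hpattern (x : ∀ i, V i) : u x * ind (Q fun t ↦ b t x) =
      ∑ γ : T → Fin M, ind (Q (extend γ)) * (u x * ind (∀ t ∈ univ, b t.1 x = γ t)) := by
    rw [Fintype.sum_eq_single fun t : T ↦ ⟨b t x, hb.lt t x⟩]
    · rw [ind_of_true (fun _ _ ↦ rfl), mul_one, mul_comm (u x)]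
      congr 2
      exact hQ fun t ht ↦ by simp only [extend, dif_pos (mem_coe.1 ht)]
    · intro γ hγ
      rw [ind_of_false (p := ∀ t ∈ univ, b t.1 x = γ t) fun h ↦
        hγ (funext fun t ↦ Fin.ext (h t (mem_univ t)).symm), mul_zero, mul_zero]
  have hbound (γ : T → Fin M) :
      |𝔼 x, ind (Q (extend γ)) * (u x * ind (∀ t ∈ univ, b t.1 x = γ t))| ≤ τ := by
    rw [← mul_expect, abs_mul, abs_of_nonneg (ind_nonneg _)]
    refine (mul_le_of_le_one_left (abs_nonneg _) (ind_le_one _)).trans ?_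
    refine hu.abs_expect_mul_ind_family_le hd univ fun t _ ↦ ?_
    obtain ⟨i, hi, hit⟩ := not_subset.1 (hT t t.2)
    exact ⟨i, hi, dependsOn_comp (dependsOn_compl_singleton (hb.dependsOn t) hit) (· = _)⟩
  simp_rw [hpattern]
  rw [expect_sum_comm]
  refine (abs_sum_le_sum_abs _ _).trans ((sum_le_sum fun γ _ ↦ hbound γ).trans_eq ?_)
  simp

lemma CutNormLE.abs_expect_mul_ind_faceColors_le [∀ i, Nonempty (V i)] (hu : CutNormLE D u τ)
    (hd : DependsOn u D) (hb : IsColoring b M) {W : (∀ i, V i) → Prop}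
    (hW : W.FactorsThrough (faceColors b D)) : |𝔼 x, u x * ind (W x)| ≤ M ^ #D * τ := by
  have h := hu.abs_expect_mul_ind_colors_le hd hb (T := D.image D.erase)
    (Q := fun β ↦ ∃ y, W y ∧ ∀ i ∈ D, b (D.erase i) y = β (D.erase i))
    (by simpa only [forall_mem_image] using fun i hi h ↦ notMem_erase i D (h hi))
    fun β β' hβ ↦ propext <| exists_congr fun y ↦ and_congr_right fun _ ↦
      forall₂_congr fun i hi ↦ by rw [hβ _ (mem_coe.2 (mem_image_of_mem _ hi))]
  have hW' : ∀ x, (∃ y, W y ∧ ∀ i ∈ D, b (D.erase i) y = b (D.erase i) x) ↔ W x := fun x ↦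
    ⟨fun ⟨y, hy, hyx⟩ ↦ (hW (faceColors_eq_iff.2 hyx)).mp hy, fun hx ↦ ⟨x, hx, fun _ _ ↦ rfl⟩⟩
  simp only [hW'] at h
  have hM : (1 : ℝ) ≤ M := by
    obtain ⟨x⟩ : Nonempty (∀ i, V i) := inferInstance
    exact_mod_cast (Nat.zero_le _).trans_lt (hb.lt ∅ x)
  exact h.trans (mul_le_mul_of_nonneg_right (pow_le_pow_right₀ hM card_image_le) hu.nonneg)

variable [∀ i, Nonempty (V i)]

lemma CutNormLE.expect_max_cellExpect_sub_one_le (hν : CutNormLE D (fun x ↦ ν x - 1) η)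
    (hνD : DependsOn ν D) (hg : ∀ x, g x ≤ ν x) (hb : IsColoring b M) :
    𝔼 x, max (cellExpect (faceColors b D) g x - 1) 0 ≤ M ^ #D * η := by
  set u := cellExpect (faceColors b D) g
  have hcell : (fun x ↦ 1 < u x).FactorsThrough (faceColors b D) := fun x y h ↦ by
    simp only [u, cellExpect_congr _ g h]
  have hmax (x : ∀ i, V i) : max (u x - 1) 0 = u x * ind (1 < u x) - ind (1 < u x) := by
    by_cases h : 1 < u x
    · rw [ind_of_true h, max_eq_left (by linarith), mul_one]
    · rw [ind_of_false h, max_eq_right (by linarith), mul_zero, sub_zero]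
  calc 𝔼 x, max (u x - 1) 0 = 𝔼 x, (g x - 1) * ind (1 < u x) := by
        simp_rw [hmax, sub_mul, one_mul, expect_sub_distrib]
        rw [expect_cellExpect_mul _ g fun x y h ↦ congrArg ind (hcell h)]
    _ ≤ 𝔼 x, (ν x - 1) * ind (1 < u x) := expect_le_expect fun x _ ↦
        mul_le_mul_of_nonneg_right (sub_le_sub_right (hg x) 1) (ind_nonneg _)
    _ ≤ |𝔼 x, (ν x - 1) * ind (1 < u x)| := le_abs_self _
    _ ≤ M ^ #D * η := hν.abs_expect_mul_ind_faceColors_le (dependsOn_comp hνD (· - 1)) hb hcell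

lemma CutNormLE.exists_huber_increment (hτ : 0 < τ) (hν : CutNormLE D (fun x ↦ ν x - 1) η)
    (hνD : DependsOn ν D) (hg : ∀ x, 0 ≤ g x ∧ g x ≤ ν x) (hb : IsColoring b M)
    (hη : 16 * ((M * 2) ^ #D * η) ≤ τ)
    (hcut : ¬CutNormLE D (fun x ↦ g x - cellModel (faceColors b D) g x) τ) :
    ∃ b', IsColoring b' (M * 2) ∧ 𝔼 x, huber (cellExpect (faceColors b D) g x) + τ ^ 2 / 16 ≤
      𝔼 x, huber (cellExpect (faceColors b' D) g x) := by
  unfold CutNormLE at hcut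
  push Not at hcut
  obtain ⟨B, hB, hlt⟩ := hcut
  have hb' := hb.refineBy hB
  refine ⟨refineBy b D B, hb', ?_⟩
  have hexcess := hν.expect_max_cellExpect_sub_one_le hνD (fun x ↦ (hg x).2) hb
  have hexcess' := hν.expect_max_cellExpect_sub_one_le hνD (fun x ↦ (hg x).2) hb'
  have hcorr := abs_expect_sub_cellModel_mul_ind_le (W := fun x ↦ ∀ i ∈ D, B i x)
    (C' := faceColors (refineBy b D B) D) (fun _ _ hxy ↦ propext
      (forall_mem_iff_of_faceColors_refineBy_eq hxy)) (faceColors b D) g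
  have henergy := sq_add_expect_huber_cellExpect_le
    ((refines_refineBy b D B).faceColors D) g
  set u := cellExpect (faceColors b D) g
  set u' := cellExpect (faceColors (refineBy b D B) D) g
  have hdist : 𝔼 x, |u' x - u x| ≤ 𝔼 x, |(u' x - u x) * ind (u x ≤ 2 ∧ u' x ≤ 2)| +
      2 * 𝔼 x, max (u x - 1) 0 + 2 * 𝔼 x, max (u' x - 1) 0 := by
    simp_rw [mul_expect, ← expect_add_distrib]
    exact expect_le_expect fun x _ ↦ abs_sub_le_add_excess
      (cellExpect_nonneg _ (fun x ↦ (hg x).1) x) (cellExpect_nonneg _ (fun x ↦ (hg x).1) x)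
  have hcolors : (M : ℝ) ^ #D * η ≤ (M * 2) ^ #D * η := by
    have := hν.nonneg
    gcongr
    exact le_mul_of_one_le_right (Nat.cast_nonneg M) one_le_two
  rw [Nat.cast_mul, Nat.cast_ofNat] at hexcess'
  have hτ4 : τ / 4 ≤ 𝔼 x, |(u' x - u x) * ind (u x ≤ 2 ∧ u' x ≤ 2)| := by linarith
  have := pow_le_pow_left₀ (by positivity) hτ4 2
  linarith

lemma CutNormLE.exists_huber_ge (hτ : 0 < τ) (hν : CutNormLE D (fun x ↦ ν x - 1) η)
    (hνD : DependsOn ν D) (hg : ∀ x, 0 ≤ g x ∧ g x ≤ ν x)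
    (hcut : ∀ b M, IsColoring b M →
      ¬CutNormLE D (fun x ↦ g x - cellModel (faceColors b D) g x) τ)
    (n : ℕ) (hη : 16 * ((2 ^ n) ^ #D * η) ≤ τ) :
    ∃ b, IsColoring b (2 ^ n) ∧ n * (τ ^ 2 / 16) ≤
      𝔼 x, huber (cellExpect (faceColors b D) g x) := by
  induction n with
  | zero =>
    refine ⟨fun _ _ ↦ 0, ⟨fun _ _ _ _ ↦ rfl, fun _ _ ↦ one_pos⟩, ?_⟩
    simpa using expect_nonneg fun x _ ↦ huber_nonneg _
  | succ n ih =>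
    obtain ⟨b, hb, hbn⟩ := ih <| hη.trans' <| by
      have := hν.nonneg
      gcongr
      · exact one_le_two
      · exact n.le_succ
    obtain ⟨b', hb', hinc⟩ := hν.exists_huber_increment hτ hνD hg hb
      (by push_cast; rwa [← pow_succ]) (hcut b _ hb)
    refine ⟨b', by rwa [pow_succ], ?_⟩
    push_cast
    linarith

lemma CutNormLE.expect_le (hν : CutNormLE D (fun x ↦ ν x - 1) η) : 𝔼 x, ν x ≤ 1 + η := by
  have h := (abs_le.1 (hν (fun _ _ ↦ True) fun _ _ _ _ _ ↦ rfl)).2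
  simp only [implies_true, ind_of_true, mul_one, expect_sub_distrib, Fintype.expect_const] at h
  linarith

end DenseModel

theorem dense_model (ι : Type u) [Fintype ι] [DecidableEq ι] {τ : ℝ} (hτ : 0 < τ) :
    ∃ η : ℝ, 0 < η ∧ ∀ (V : ι → Type v) [∀ i, Fintype (V i)] [∀ i, Nonempty (V i)]
      (D : Finset ι) (ν g : (∀ i, V i) → ℝ), DependsOn ν D → (∀ x, 0 ≤ g x ∧ g x ≤ ν x) →
      CutNormLE D (fun x ↦ ν x - 1) η →
      ∃ g' : (∀ i, V i) → ℝ, (∀ x, 0 ≤ g' x ∧ g' x ≤ 1) ∧ DependsOn g' D ∧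
        CutNormLE D (fun x ↦ g x - g' x) τ := by
  obtain ⟨n, hn⟩ := exists_nat_gt (8 / (τ ^ 2 / 16))
  rw [div_lt_iff₀ (by positivity)] at hn
  have hN : 0 < 16 * ((2 : ℝ) ^ n) ^ Fintype.card ι := by positivity
  refine ⟨min 1 (τ / (16 * (2 ^ n) ^ Fintype.card ι)), lt_min one_pos (by positivity),
    fun V _ _ D ν g hνD hg hν ↦ ?_⟩
  set η := min 1 (τ / (16 * (2 ^ n) ^ Fintype.card ι))
  obtain ⟨b, M, hb, hcut⟩ : ∃ b M, IsColoring b M ∧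
      CutNormLE D (fun x ↦ g x - cellModel (faceColors b D) g x) τ := by
    by_contra! hcut
    have hη : 16 * ((2 ^ n) ^ #D * η) ≤ τ := by
      refine le_trans ?_ ((le_div_iff₀' hN).1 (min_le_right 1 _))
      rw [← mul_assoc]
      have := hν.nonneg
      gcongr
      · exact one_le_pow₀ one_le_two
      · exact card_le_univ D
    obtain ⟨b, -, hbn⟩ := hν.exists_huber_ge hτ hνD hg hcut n hη
    have henergy := expect_huber_cellExpect_le (faceColors b D) fun x ↦ (hg x).1
    have hmass := (expect_le_expect fun x _ ↦ (hg x).2).trans hν.expect_le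
    linarith [min_le_left 1 (τ / (16 * (2 ^ n) ^ Fintype.card ι))]
  refine ⟨cellModel (faceColors b D) g, fun x ↦
    ⟨cellModel_nonneg _ (fun x ↦ (hg x).1) x, min_le_right _ _⟩, ?_, hcut⟩
  exact dependsOn_comp (dependsOn_cellExpect_faceColors hb.dependsOn D g) (min · 1)

/-! ### The Gowers–Cauchy–Schwarz inequality -/

section Cube

variable {ι : Type*} [DecidableEq ι] {V : ι → Type*}

/-- The product of the values of `f` at the vertices of the cube with opposite corners `x` and `y`
in the directions `S`, all other coordinates being those of `x`. -/
def cubeProd (S : Finset ι) (f : (∀ i, V i) → ℝ) (x y : ∀ i, V i) : ℝ :=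
  ∏ A ∈ S.powerset, f (A.piecewise y x)

variable {S : Finset ι} {f g : (∀ i, V i) → ℝ} {j : ι}

lemma cubeProd_empty (f : (∀ i, V i) → ℝ) (x y : ∀ i, V i) : cubeProd ∅ f x y = f x := by
  simp [cubeProd]

lemma cubeProd_insert (hj : j ∉ S) (f : (∀ i, V i) → ℝ) (x y : ∀ i, V i) :
    cubeProd (insert j S) f x y =
      cubeProd S f x y * cubeProd S f (Function.update x j (y j)) y := by
  simp only [cubeProd]
  rw [prod_powerset_insert hj]
  congr 1
  refine prod_congr rfl fun A hA ↦ ?_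
  rw [piecewise_insert, update_piecewise_of_notMem _ _ _ (fun h ↦ hj (mem_powerset.1 hA h))]

lemma cubeProd_mul (S : Finset ι) (f g : (∀ i, V i) → ℝ) (x y : ∀ i, V i) :
    cubeProd S (fun z ↦ f z * g z) x y = cubeProd S f x y * cubeProd S g x y :=
  prod_mul_distrib

lemma cubeProd_nonneg (hf : ∀ z, 0 ≤ f z) (x y : ∀ i, V i) : 0 ≤ cubeProd S f x y :=
  prod_nonneg fun _ _ ↦ hf _

lemma cubeProd_le_cubeProd (hf : ∀ z, 0 ≤ f z) (hfg : ∀ z, f z ≤ g z) (x y : ∀ i, V i) :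
    cubeProd S f x y ≤ cubeProd S g x y :=
  prod_le_prod (fun _ _ ↦ hf _) fun _ _ ↦ hfg _

lemma cubeProd_comp_update (hj : j ∉ S) (f : (∀ i, V i) → ℝ) (v : V j) (x y : ∀ i, V i) :
    cubeProd S (fun z ↦ f (Function.update z j v)) x y =
      cubeProd S f (Function.update x j v) y := by
  refine prod_congr rfl fun A hA ↦ congrArg f ?_
  exact update_piecewise_of_notMem _ _ _ (fun h ↦ hj (mem_powerset.1 hA h)) _

lemma dependsOn_cubeProd_left (hf : DependsOn f {j}ᶜ) (y : ∀ i, V i) :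
    DependsOn (fun x ↦ cubeProd S f x y) {j}ᶜ := by
  intro x x' hx
  refine prod_congr rfl fun A _ ↦ hf fun i hi ↦ ?_
  by_cases hA : i ∈ A <;> simp [hA, hx i hi]

lemma dependsOn_cubeProd_right (hj : j ∉ S) (f : (∀ i, V i) → ℝ) (x : ∀ i, V i) :
    DependsOn (cubeProd S f x) {j}ᶜ := by
  intro y y' hy
  refine prod_congr rfl fun A hA ↦ congrArg f (A.piecewise_congr (fun i hi ↦ hy i ?_) fun _ _ ↦ rfl)
  exact fun h ↦ hj (mem_powerset.1 hA (h ▸ hi))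

/-- `W i` is a majorant of the factor `G i` in the Gowers–Cauchy–Schwarz inequality, for `i ∈ e`.
Both ignore the coordinate `i` of the second argument; the first argument is a parameter of which
they only see the coordinates outside `e`. -/
structure IsMajorant (e : Finset ι) (G W : ι → (∀ i, V i) → (∀ i, V i) → ℝ) : Prop where
  nonneg : ∀ i ∈ e, ∀ y z, 0 ≤ G i y z
  le : ∀ i ∈ e, ∀ y z, G i y z ≤ W i y z
  dependsOn : ∀ i ∈ e, ∀ y, DependsOn (G i y) {i}ᶜ
  dependsOn_majorant : ∀ i ∈ e, ∀ y, DependsOn (W i y) {i}ᶜ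
  dependsOn_param : ∀ i ∈ e, DependsOn (G i) (e : Set ι)ᶜ
  dependsOn_param_majorant : ∀ i ∈ e, DependsOn (W i) (e : Set ι)ᶜ

/-- The integrand `u * ∏ i ∈ e, G i` after the coordinates in `S` have been doubled and, for
`i ∈ S`, the factor `G i` has been replaced by its majorant `W i`. -/
def doubledProd (u : (∀ i, V i) → ℝ) (G W : ι → (∀ i, V i) → (∀ i, V i) → ℝ) (e S : Finset ι)
    (x y : ∀ i, V i) : ℝ :=
  cubeProd S (fun z ↦ u z * ∏ i ∈ e \ S, G i y z) x y * ∏ i ∈ S, cubeProd (S.erase i) (W i y) x y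

variable {u : (∀ i, V i) → ℝ} {G W : ι → (∀ i, V i) → (∀ i, V i) → ℝ} {e : Finset ι}

lemma doubledProd_eq_cubeProd_mul (hj : j ∈ e) (hjS : j ∉ S) (x y : ∀ i, V i) :
    doubledProd u G W e S x y = cubeProd S (G j y) x y * doubledProd u G W (e.erase j) S x y := by
  have hsplit : e \ S = insert j (e.erase j \ S) := by
    rw [← insert_sdiff_of_notMem _ hjS, insert_erase hj]
  rw [doubledProd, doubledProd, ← mul_assoc, ← cubeProd_mul, hsplit]
  simp only [prod_insert (show j ∉ e.erase j \ S by simp), mul_left_comm]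

lemma doubledProd_insert (hjS : j ∉ S) (x y : ∀ i, V i) :
    doubledProd u G W e (insert j S) x y = cubeProd S (W j y) x y *
      (doubledProd u G W (e.erase j) S x y *
        doubledProd u G W (e.erase j) S (Function.update x j (y j)) y) := by
  have hsplit : ∀ i ∈ S, cubeProd ((insert j S).erase i) (W i y) x y =
      cubeProd (S.erase i) (W i y) x y *
        cubeProd (S.erase i) (W i y) (Function.update x j (y j)) y := fun i hi ↦ by
    rw [erase_insert_of_ne (ne_of_mem_of_not_mem hi hjS).symm,
      cubeProd_insert fun hji ↦ hjS (mem_of_mem_erase hji)]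
  simp only [doubledProd]
  rw [prod_insert hjS, erase_insert hjS, cubeProd_insert hjS, prod_congr rfl hsplit,
    prod_mul_distrib, sdiff_insert, erase_sdiff_comm]
  ring

lemma IsMajorant.dependsOn_doubledProd (h : IsMajorant e G W) (hjS : j ∉ S) (hS : insert j S ⊆ e)
    (x : ∀ i, V i) : DependsOn (doubledProd u G W (e.erase j) S x) {j}ᶜ := by
  have hparam : ∀ {F : (∀ i, V i) → (∀ i, V i) → ℝ}, DependsOn F (e : Set ι)ᶜ →
      DependsOn F {j}ᶜ := fun hF ↦
    hF.mono (Set.compl_subset_compl.2 (by simpa using hS (mem_insert_self j S)))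
  refine fun y y' hy ↦ congrArg₂ (· * ·) ?_ (prod_congr rfl fun i hi ↦ ?_)
  · have hG : ∀ i ∈ e.erase j \ S, G i y = G i y' := fun i hi ↦
      hparam (h.dependsOn_param i (mem_of_mem_erase (mem_sdiff.1 hi).1)) hy
    rw [dependsOn_cubeProd_right hjS _ x hy]
    exact prod_congr rfl fun A _ ↦ congrArg _ (prod_congr rfl fun i hi ↦ by rw [hG i hi])
  · rw [dependsOn_cubeProd_right (fun hji ↦ hjS (mem_of_mem_erase hji)) _ x hy,
      hparam (h.dependsOn_param_majorant i (hS (mem_insert_of_mem hi))) hy]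

variable [∀ i, Fintype (V i)]

/-- The average of `f` over the coordinate `j`. -/
noncomputable def fiberExpect (j : ι) (f : (∀ i, V i) → ℝ) (x : ∀ i, V i) : ℝ :=
  𝔼 v, f (Function.update x j v)

lemma dependsOn_fiberExpect (j : ι) (f : (∀ i, V i) → ℝ) : DependsOn (fiberExpect j f) {j}ᶜ := by
  refine fun x y hxy ↦ expect_congr rfl fun v _ ↦ congrArg f (funext fun i ↦ ?_)
  by_cases hi : i = j
  · subst hi
    simp
  · simpa [hi] using hxy i hi

variable [Fintype ι]

lemma expect_mul_fiberExpect {h : (∀ i, V i) → ℝ} (hh : DependsOn h {j}ᶜ) (f : (∀ i, V i) → ℝ) :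
    𝔼 x, h x * fiberExpect j f x = 𝔼 x, h x * f x := by
  rw [expect_update j fun x ↦ h x * f x]
  refine expect_congr rfl fun x _ ↦ ?_
  simp only [apply_update_of_dependsOn hh, fiberExpect, mul_expect]

lemma expect_mul_sq_le_expect_double (j : ι) {P W R : (∀ i, V i) → (∀ i, V i) → ℝ}
    (hPW : ∀ x y, |P x y| ≤ W x y) (hP : ∀ y, DependsOn (fun x ↦ P x y) {j}ᶜ)
    (hWx : ∀ y, DependsOn (fun x ↦ W x y) {j}ᶜ) (hWy : ∀ x, DependsOn (W x) {j}ᶜ)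
    (hRy : ∀ x, DependsOn (R x) {j}ᶜ) :
    (𝔼 x, 𝔼 y, P x y * R x y) ^ 2 ≤ (𝔼 x, 𝔼 y, W x y) *
      𝔼 x, 𝔼 y, W x y * (R x y * R (Function.update x j (y j)) y) := by
  set F : (∀ i, V i) → (∀ i, V i) → ℝ := fun y ↦ fiberExpect j fun x ↦ R x y
  have hfirst : 𝔼 x, 𝔼 y, P x y * R x y = 𝔼 x, 𝔼 y, P x y * F y x := by
    rw [expect_comm, expect_comm (f := fun x y ↦ P x y * F y x)]
    exact expect_congr rfl fun y _ ↦ (expect_mul_fiberExpect (hP y) _).symm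
  have hdouble : 𝔼 x, 𝔼 y, W x y * (R x y * R (Function.update x j (y j)) y) =
      𝔼 x, 𝔼 y, W x y * F y x ^ 2 := by
    calc 𝔼 x, 𝔼 y, W x y * (R x y * R (Function.update x j (y j)) y)
        = 𝔼 x, 𝔼 y, W x y * F y x * R x y := by
          refine expect_congr rfl fun x _ ↦ ?_
          rw [expect_update j]
          refine expect_congr rfl fun y _ ↦ ?_
          simp only [apply_update_of_dependsOn (hWy x), apply_update_of_dependsOn (hRy _),
            Function.update_self, ← mul_assoc, ← mul_expect]
          exact mul_right_comm _ _ _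
      _ = 𝔼 x, 𝔼 y, W x y * F y x * F y x := by
          rw [expect_comm, expect_comm (f := fun x y ↦ W x y * F y x * F y x)]
          refine expect_congr rfl fun y _ ↦ (expect_mul_fiberExpect (fun x x' hx ↦ ?_) _).symm
          exact congrArg₂ _ (hWx y hx) (dependsOn_fiberExpect j _ hx)
      _ = 𝔼 x, 𝔼 y, W x y * F y x ^ 2 := by simp only [mul_assoc, sq]
  have habs : |𝔼 x, 𝔼 y, P x y * F y x| ≤ 𝔼 x, 𝔼 y, W x y * |F y x| := by
    refine (abs_expect_le _ _).trans (expect_le_expect fun x _ ↦ (abs_expect_le _ _).trans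
      (expect_le_expect fun y _ ↦ ?_))
    rw [abs_mul]
    exact mul_le_mul_of_nonneg_right (hPW x y) (abs_nonneg _)
  rw [hfirst, hdouble, ← sq_abs]
  refine (pow_le_pow_left₀ (abs_nonneg _) habs 2).trans ?_
  have hcs := expect_mul_sq_le_of_nonneg (w := fun p : (∀ i, V i) × (∀ i, V i) ↦ W p.1 p.2)
    (fun p ↦ (abs_nonneg _).trans (hPW p.1 p.2)) fun p ↦ |F p.2 p.1|
  simpa only [expect_prod, sq_abs] using hcs

lemma IsMajorant.doubledProd_sq_le (h : IsMajorant e G W) (hjS : j ∉ S) (hS : insert j S ⊆ e) :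
    (𝔼 x, 𝔼 y, doubledProd u G W e S x y) ^ 2 ≤
      (𝔼 x, 𝔼 y, cubeProd S (W j y) x y) * 𝔼 x, 𝔼 y, doubledProd u G W e (insert j S) x y := by
  have hj : j ∈ e := hS (mem_insert_self j S)
  simp only [doubledProd_eq_cubeProd_mul hj hjS, doubledProd_insert hjS]
  refine expect_mul_sq_le_expect_double j (fun x y ↦ ?_)
    (fun y ↦ dependsOn_cubeProd_left (h.dependsOn j hj y) y)
    (fun y ↦ dependsOn_cubeProd_left (h.dependsOn_majorant j hj y) y) (fun x y y' hy ↦ ?_)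
    (h.dependsOn_doubledProd hjS hS)
  · rw [abs_of_nonneg (cubeProd_nonneg (h.nonneg j hj y) x y)]
    exact cubeProd_le_cubeProd (h.nonneg j hj y) (h.le j hj y) x y
  · have hW : W j y = W j y' := h.dependsOn_param_majorant j hj fun i hi ↦
      hy i fun hij ↦ hi (by rwa [Set.mem_singleton_iff.1 hij])
    rw [dependsOn_cubeProd_right hjS _ x hy, hW]

theorem IsMajorant.gowers_cauchy_schwarz (h : IsMajorant e G W) {C : ℝ} (hC : 0 < C)
    (hW : ∀ j ∈ e, ∀ S ⊆ e.erase j, 𝔼 x, 𝔼 y, cubeProd S (W j y) x y ≤ C) (hS : S ⊆ e) :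
    (|𝔼 x, 𝔼 y, doubledProd u G W e ∅ x y| / C) ^ 2 ^ #S ≤
      |𝔼 x, 𝔼 y, doubledProd u G W e S x y| / C := by
  induction S using Finset.induction_on with
  | empty => simp
  | insert j S hjS ih =>
    have hj : j ∈ e := hS (mem_insert_self j S)
    have hmean := hW j hj S fun i hi ↦
      mem_erase.2 ⟨ne_of_mem_of_not_mem hi hjS, hS (mem_insert_of_mem hi)⟩
    have hmean_nonneg : 0 ≤ 𝔼 x, 𝔼 y, cubeProd S (W j y) x y :=
      expect_nonneg fun x _ ↦ expect_nonneg fun y _ ↦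
        cubeProd_nonneg (fun z ↦ (h.nonneg j hj y z).trans (h.le j hj y z)) x y
    rw [card_insert_of_notMem hjS, pow_succ, pow_mul]
    refine (pow_le_pow_left₀ (by positivity) (ih ((subset_insert j S).trans hS)) 2).trans ?_
    rw [div_pow, sq_abs, sq C, ← div_div, div_le_div_iff_of_pos_right hC, div_le_iff₀' hC]
    calc (𝔼 x, 𝔼 y, doubledProd u G W e S x y) ^ 2
        ≤ (𝔼 x, 𝔼 y, cubeProd S (W j y) x y) * 𝔼 x, 𝔼 y, doubledProd u G W e (insert j S) x y :=
          h.doubledProd_sq_le hjS hS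
      _ ≤ (𝔼 x, 𝔼 y, cubeProd S (W j y) x y) *
          |𝔼 x, 𝔼 y, doubledProd u G W e (insert j S) x y| := by gcongr; exact le_abs_self _
      _ ≤ C * |𝔼 x, 𝔼 y, doubledProd u G W e (insert j S) x y| := by gcongr

end Cube

/-! ### Pseudorandom weights -/

section SubproductMeans

variable {X κ : Type*}

lemma prod_sub_one_mul_prod_add_one [DecidableEq κ] {s t : Finset κ} (hst : Disjoint s t)
    (c : κ → ℝ) : (∏ k ∈ s, (c k - 1)) * ∏ k ∈ t, (c k + 1) =
      ∑ p ∈ s.powerset ×ˢ t.powerset, (-1) ^ #(s \ p.1) * ∏ k ∈ p.1 ∪ p.2, c k := by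
  simp only [sub_eq_add_neg]
  rw [prod_add_one, prod_add, sum_product, sum_mul_sum]
  refine sum_congr rfl fun r hr ↦ sum_congr rfl fun q hq ↦ ?_
  rw [prod_const, prod_union (disjoint_of_subset_left (mem_powerset.1 hr)
    (disjoint_of_subset_right (mem_powerset.1 hq) hst))]
  ring

variable [Fintype X] {F : κ → X → ℝ} {s t : Finset κ} {η : ℝ}

lemma expect_prod_add_one_le (h : ∀ r ⊆ t, |𝔼 x, ∏ k ∈ r, F k x - 1| ≤ η) :
    𝔼 x, ∏ k ∈ t, (F k x + 1) ≤ 2 ^ #t * (1 + η) := by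
  simp only [prod_add_one]
  rw [expect_sum_comm]
  calc ∑ r ∈ t.powerset, 𝔼 x, ∏ k ∈ r, F k x
      ≤ #t.powerset • (1 + η) := sum_le_card_nsmul _ _ _ fun r hr ↦ by
        linarith [(abs_le.1 (h r (mem_powerset.1 hr))).2]
    _ = 2 ^ #t * (1 + η) := by simp [mul_add]

lemma abs_expect_prod_sub_one_mul_prod_add_one_le [DecidableEq κ] (hst : Disjoint s t)
    (hs : s.Nonempty) (h : ∀ r ⊆ s ∪ t, |𝔼 x, ∏ k ∈ r, F k x - 1| ≤ η) :
    |𝔼 x, (∏ k ∈ s, (F k x - 1)) * ∏ k ∈ t, (F k x + 1)| ≤ 2 ^ (#s + #t) * η := by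
  have hsign : ∑ p ∈ s.powerset ×ˢ t.powerset, (-1 : ℝ) ^ #(s \ p.1) = 0 := by
    simpa [hs.ne_empty] using (prod_sub_one_mul_prod_add_one hst fun _ ↦ (1 : ℝ)).symm
  calc |𝔼 x, (∏ k ∈ s, (F k x - 1)) * ∏ k ∈ t, (F k x + 1)|
      = |∑ p ∈ s.powerset ×ˢ t.powerset,
          (-1) ^ #(s \ p.1) * (𝔼 x, ∏ k ∈ p.1 ∪ p.2, F k x - 1)| := by
        simp only [prod_sub_one_mul_prod_add_one hst, mul_sub, sum_sub_distrib, mul_one, hsign,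
          sub_zero, expect_sum_comm, mul_expect]
    _ ≤ #(s.powerset ×ˢ t.powerset) • η := by
        refine (abs_sum_le_sum_abs _ _).trans (sum_le_card_nsmul _ _ _ fun p hp ↦ ?_)
        rw [abs_mul, abs_pow, abs_neg, abs_one, one_pow, one_mul]
        obtain ⟨hp₁, hp₂⟩ := mem_product.1 hp
        exact h _ (union_subset_union (mem_powerset.1 hp₁) (mem_powerset.1 hp₂))
    _ = 2 ^ (#s + #t) * η := by simp [pow_add]

end SubproductMeans

section Pseudorandom

variable {ι : Type*} [Fintype ι] [DecidableEq ι] {V : ι → Type*} [∀ i, Fintype (V i)]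

lemma expect_apply [∀ i, Nonempty (V i)] (a : ι) (f : V a → ℝ) :
    𝔼 y : ∀ i, V i, f (y a) = 𝔼 v, f v := by
  rw [expect_update a]
  simp

/-- The average over the coordinate `a` of the product of all `f i` with `i ≠ a`. -/
noncomputable def codegree (a : ι) (f : ι → (∀ i, V i) → ℝ) : (∀ i, V i) → ℝ :=
  fiberExpect a fun x ↦ ∏ i ∈ univ.erase a, f i x

variable {a : ι} {f g : ι → (∀ i, V i) → ℝ}

lemma expect_prod_eq_expect_mul_codegree (hf : DependsOn (f a) {a}ᶜ) :
    𝔼 x, ∏ j, f j x = 𝔼 x, f a x * codegree a f x := by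
  rw [codegree, expect_mul_fiberExpect hf]
  exact expect_congr rfl fun x _ ↦ (mul_prod_erase univ (f · x) (mem_univ a)).symm

lemma codegree_nonneg (hf : ∀ j x, 0 ≤ f j x) (x : ∀ i, V i) : 0 ≤ codegree a f x :=
  expect_nonneg fun _ _ ↦ prod_nonneg fun _ _ ↦ hf _ _

lemma codegree_mono (hf : ∀ j x, 0 ≤ f j x) (hfg : ∀ j x, f j x ≤ g j x) (x : ∀ i, V i) :
    codegree a f x ≤ codegree a g x :=
  expect_le_expect fun _ _ ↦ prod_le_prod (fun _ _ ↦ hf _ _) fun _ _ ↦ hfg _ _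

lemma expect_mul_codegree_mul_codegree [∀ i, Nonempty (V i)] {h : (∀ i, V i) → ℝ}
    (hh : DependsOn h {a}ᶜ) (f g : ι → (∀ i, V i) → ℝ) :
    𝔼 x, h x * (codegree a f x * codegree a g x) =
      𝔼 x, 𝔼 y : ∀ i, V i, h x * ∏ i ∈ univ.erase a, f i x * g i (Function.update x a (y a)) := by
  have hg : DependsOn (fun x ↦ h x * codegree a g x) {a}ᶜ := fun x y hxy ↦
    congrArg₂ _ (hh hxy) (dependsOn_fiberExpect a _ hxy)
  calc 𝔼 x, h x * (codegree a f x * codegree a g x)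
      = 𝔼 x, h x * codegree a g x * codegree a f x := by
        simp only [mul_assoc, mul_comm (codegree a g _)]
    _ = 𝔼 x, h x * codegree a g x * ∏ i ∈ univ.erase a, f i x := expect_mul_fiberExpect hg _
    _ = 𝔼 x, 𝔼 v, h x * ∏ i ∈ univ.erase a, f i x * g i (Function.update x a v) := by
        refine expect_congr rfl fun x _ ↦ ?_
        simp only [prod_mul_distrib, ← mul_expect, codegree, fiberExpect]
        ring
    _ = _ := expect_congr rfl fun x _ ↦ (expect_apply a _).symm

/-- Nonnegative weights `ν j` on the edges `univ.erase j` satisfy the linear forms condition within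
`η`. A pair `(j, A)` stands for the factor `ν j` evaluated at the vertex of the cube that takes the
coordinates in `A` from the second point; since `ν j` ignores the coordinate `j`, only the vertices
with `j ∉ A` are used. -/
structure IsPseudorandom (ν : ι → (∀ i, V i) → ℝ) (η : ℝ) : Prop where
  nonneg : ∀ j x, 0 ≤ ν j x
  dependsOn : ∀ j, DependsOn (ν j) (univ.erase j : Finset ι)
  abs_expect_sub_one_le : ∀ T : Finset (ι × Finset ι), (∀ p ∈ T, p.1 ∉ p.2) →
    |𝔼 x, 𝔼 y, ∏ p ∈ T, ν p.1 (p.2.piecewise y x) - 1| ≤ η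

variable {ν : ι → (∀ i, V i) → ℝ} {η η' : ℝ}

lemma IsPseudorandom.mono (hν : IsPseudorandom ν η) (h : η ≤ η') : IsPseudorandom ν η' :=
  ⟨hν.nonneg, hν.dependsOn, fun T hT ↦ (hν.abs_expect_sub_one_le T hT).trans h⟩

lemma IsPseudorandom.update_one (hν : IsPseudorandom ν η) (a : ι) :
    IsPseudorandom (Function.update ν a 1) η := by
  refine ⟨fun j x ↦ ?_, fun j ↦ ?_, fun T hT ↦ ?_⟩
  · rcases eq_or_ne j a with rfl | hj
    · simp
    · simpa [hj] using hν.nonneg j x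
  · rcases eq_or_ne j a with rfl | hj
    · simp [DependsOn]
    · simpa [hj] using hν.dependsOn j
  · have hfactor : ∀ p x, Function.update ν a 1 p x = if p ≠ a then ν p x else 1 := fun p x ↦ by
      rcases eq_or_ne p a with rfl | hp <;> simp [*]
    simpa only [hfactor, prod_filter] using hν.abs_expect_sub_one_le (T.filter fun p ↦ p.1 ≠ a)
      fun p hp ↦ hT p (mem_of_mem_filter p hp)

lemma IsPseudorandom.abs_expect_sub_one_le_self [∀ i, Nonempty (V i)] (hν : IsPseudorandom ν η)
    (a : ι) : |𝔼 x, ν a x - 1| ≤ η := by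
  simpa using hν.abs_expect_sub_one_le {(a, ∅)} (by simp)

lemma IsPseudorandom.abs_expect_codegree_sub_one_le [∀ i, Nonempty (V i)]
    (hν : IsPseudorandom ν η) (a : ι) : |𝔼 x, codegree a ν x - 1| ≤ η := by
  have h := expect_mul_fiberExpect (j := a) (h := fun _ : ∀ i, V i ↦ (1 : ℝ)) (fun _ _ _ ↦ rfl)
    fun x ↦ ∏ i ∈ univ.erase a, ν i x
  simp only [one_mul] at h
  rw [codegree, h]
  have hν' := hν.abs_expect_sub_one_le (univ.erase a ×ˢ {∅}) fun p hp ↦ by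
    simp [mem_singleton.1 (mem_product.1 hp).2]
  simpa only [prod_product, prod_singleton, piecewise_empty, Fintype.expect_const] using hν'

lemma IsPseudorandom.abs_expect_codegree_sq_sub_one_le [∀ i, Nonempty (V i)]
    (hν : IsPseudorandom ν η) (a : ι) : |𝔼 x, codegree a ν x ^ 2 - 1| ≤ η := by
  have h := expect_mul_codegree_mul_codegree (a := a) (h := fun _ : ∀ i, V i ↦ (1 : ℝ))
    (fun _ _ _ ↦ rfl) ν ν
  simp only [one_mul, ← sq] at h
  rw [h]
  convert hν.abs_expect_sub_one_le (univ.erase a ×ˢ {∅, {a}}) ?_ using 6 with x _ y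
  · rw [prod_product]
    refine prod_congr rfl fun i _ ↦ ?_
    rw [prod_pair (singleton_ne_empty a).symm, piecewise_empty, piecewise_singleton]
  · simp only [mem_product, mem_erase, mem_insert, mem_singleton]
    rintro ⟨i, A⟩ ⟨⟨hi, -⟩, rfl | rfl⟩ <;> simp_all

end Pseudorandom

section DoubledCoordinate

variable {ι : Type*} [DecidableEq ι] {V : ι → Type*} {a : ι}

lemma dependsOn_comp_update {β : Type*} {f : (∀ i, V i) → β} {s : Set ι} (hf : DependsOn f s)
    (j : ι) (v : V j) : DependsOn (fun x ↦ f (Function.update x j v)) s := by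
  refine fun x y hxy ↦ hf fun i hi ↦ ?_
  rcases eq_or_ne i j with rfl | hij
  · simp
  · simpa [hij] using hxy i hi

lemma cubeProd_mul_comp_update {S : Finset ι} (ha : a ∉ S) (f : (∀ i, V i) → ℝ)
    (x y : ∀ i, V i) : cubeProd S (fun z ↦ f z * f (Function.update z a (y a))) x y =
      cubeProd (insert a S) f x y := by
  rw [cubeProd_mul, cubeProd_comp_update ha, cubeProd_insert ha]

variable [Fintype ι] {u : (∀ i, V i) → ℝ} {g₀ g₁ W : ι → (∀ i, V i) → ℝ}

lemma isMajorant_doubled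
    (h₀ : ∀ i ≠ a, ∀ x, 0 ≤ g₀ i x ∧ g₀ i x ≤ W i x)
    (h₁ : ∀ i ≠ a, ∀ x, 0 ≤ g₁ i x ∧ g₁ i x ≤ W i x)
    (hg₀ : ∀ i ≠ a, DependsOn (g₀ i) {i}ᶜ) (hg₁ : ∀ i ≠ a, DependsOn (g₁ i) {i}ᶜ)
    (hW : ∀ i ≠ a, DependsOn (W i) {i}ᶜ) :
    IsMajorant (univ.erase a) (fun i y z ↦ g₀ i z * g₁ i (Function.update z a (y a)))
      fun i y z ↦ W i z * W i (Function.update z a (y a)) where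
  nonneg i hi _ _ := mul_nonneg (h₀ i (ne_of_mem_erase hi) _).1 (h₁ i (ne_of_mem_erase hi) _).1
  le i hi y z := by
    have hi := ne_of_mem_erase hi
    exact mul_le_mul (h₀ i hi _).2 (h₁ i hi _).2 (h₁ i hi _).1
      ((h₀ i hi _).1.trans (h₀ i hi _).2)
  dependsOn i hi y _ _ hz := congrArg₂ (· * ·) (hg₀ i (ne_of_mem_erase hi) hz)
    (dependsOn_comp_update (hg₁ i (ne_of_mem_erase hi)) a (y a) hz)
  dependsOn_majorant i hi y _ _ hz := congrArg₂ (· * ·) (hW i (ne_of_mem_erase hi) hz)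
    (dependsOn_comp_update (hW i (ne_of_mem_erase hi)) a (y a) hz)
  dependsOn_param i _ y y' hy := by simp [hy a (by simp)]
  dependsOn_param_majorant i _ y y' hy := by simp [hy a (by simp)]

lemma gowers_cauchy_schwarz_doubled [∀ i, Fintype (V i)]
    (h₀ : ∀ i ≠ a, ∀ x, 0 ≤ g₀ i x ∧ g₀ i x ≤ W i x)
    (h₁ : ∀ i ≠ a, ∀ x, 0 ≤ g₁ i x ∧ g₁ i x ≤ W i x)
    (hg₀ : ∀ i ≠ a, DependsOn (g₀ i) {i}ᶜ) (hg₁ : ∀ i ≠ a, DependsOn (g₁ i) {i}ᶜ)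
    (hW : ∀ i ≠ a, DependsOn (W i) {i}ᶜ) {C : ℝ} (hC : 0 < C)
    (hWC : ∀ i, ∀ S, i ∉ S → 𝔼 x, 𝔼 y, cubeProd S (W i) x y ≤ C) :
    (|𝔼 x, 𝔼 y : ∀ i, V i, u x *
        ∏ i ∈ univ.erase a, g₀ i x * g₁ i (Function.update x a (y a))| / C) ^
          2 ^ #(univ.erase a) ≤
      |𝔼 x, 𝔼 y, cubeProd (univ.erase a) u x y *
        ∏ i ∈ univ.erase a, cubeProd (univ.erase i) (W i) x y| / C := by
  have h := (isMajorant_doubled h₀ h₁ hg₀ hg₁ hW).gowers_cauchy_schwarz (u := u) hC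
    (fun i hi S hS ↦ ?_) subset_rfl
  · have hmajorant : ∀ x y, ∏ i ∈ univ.erase a, cubeProd (univ.erase i) (W i) x y =
        ∏ i ∈ univ.erase a, cubeProd ((univ.erase a).erase i)
          (fun z ↦ W i z * W i (Function.update z a (y a))) x y := fun x y ↦
      prod_congr rfl fun i hi ↦ by
        rw [cubeProd_mul_comp_update (by simp), erase_right_comm,
          insert_erase (mem_erase.2 ⟨(ne_of_mem_erase hi).symm, mem_univ a⟩)]
    simpa only [doubledProd, sdiff_empty, sdiff_self, bot_eq_empty, cubeProd_empty, prod_empty,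
      mul_one, hmajorant] using h
  · simp only [cubeProd_mul_comp_update fun ha ↦ notMem_erase a univ (mem_of_mem_erase (hS ha))]
    refine hWC i _ fun hi' ↦ ?_
    rcases mem_insert.1 hi' with rfl | hi'
    exacts [notMem_erase _ _ hi, notMem_erase _ _ (hS hi')]

end DoubledCoordinate

section Correlation

variable {ι : Type*} [Fintype ι]

/-- An amount of pseudorandomness that makes each `ν a - 1` correlate by at most `τ` with products
of functions ignoring one coordinate each. -/
noncomputable def correlationThreshold (ι : Type*) [Fintype ι] (τ : ℝ) : ℝ :=
  min 1 ((τ / (2 ^ Fintype.card (ι × Finset ι) * 2)) ^ 2 ^ (Fintype.card ι - 1))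

lemma correlationThreshold_pos {τ : ℝ} (hτ : 0 < τ) : 0 < correlationThreshold ι τ :=
  lt_min one_pos (by positivity)

variable [DecidableEq ι] {V : ι → Type*}

/-- The pairs `(i, A)` with `i ∈ e` and `i ∉ A`; the pair `(i, A)` stands for the factor with index
`i` at the vertex `A` of a cube, where that factor ignores the coordinate `i`. -/
def cubeEdges (e : Finset ι) : Finset (ι × Finset ι) :=
  {p | p.1 ∈ e ∧ p.1 ∉ p.2}

lemma notMem_of_mem_cubeEdges {e : Finset ι} {p : ι × Finset ι} (hp : p ∈ cubeEdges e) :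
    p.1 ∉ p.2 :=
  (mem_filter.1 hp).2.2

lemma prod_cubeEdges (e : Finset ι) (f : ι → (∀ i, V i) → ℝ) (x y : ∀ i, V i) :
    ∏ p ∈ cubeEdges e, f p.1 (p.2.piecewise y x) =
      ∏ i ∈ e, cubeProd (univ.erase i) (f i) x y :=
  prod_finset_product _ _ _ fun p ↦ by
    simp [cubeEdges, subset_erase]

variable [∀ i, Fintype (V i)] {ν : ι → (∀ i, V i) → ℝ} {η τ : ℝ} {a : ι}

namespace IsPseudorandom

lemma error_nonneg (hν : IsPseudorandom ν η) : 0 ≤ η :=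
  (abs_nonneg _).trans (hν.abs_expect_sub_one_le ∅ (by simp))

lemma abs_expect_prod_sub_one_le (hν : IsPseudorandom ν η) {T : Finset (ι × Finset ι)}
    (hT : ∀ p ∈ T, p.1 ∉ p.2) :
    |𝔼 z : (∀ i, V i) × (∀ i, V i), ∏ p ∈ T, ν p.1 (p.2.piecewise z.2 z.1) - 1| ≤ η := by
  rw [expect_prod]
  exact hν.abs_expect_sub_one_le T hT

lemma abs_expect_box_le (hν : IsPseudorandom ν η) (a : ι) :
    |𝔼 x, 𝔼 y, cubeProd (univ.erase a) (fun z ↦ ν a z - 1) x y *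
      ∏ i ∈ univ.erase a, cubeProd (univ.erase i) (fun z ↦ ν i z + 1) x y| ≤
      2 ^ Fintype.card (ι × Finset ι) * η := by
  have hdisj : Disjoint (cubeEdges {a}) (cubeEdges (univ.erase a)) :=
    disjoint_filter.2 fun p _ hp hp' ↦ by simp_all
  have h := abs_expect_prod_sub_one_mul_prod_add_one_le hdisj ⟨(a, ∅), by simp [cubeEdges]⟩
    fun r hr ↦ hν.abs_expect_prod_sub_one_le fun p hp ↦
      (mem_union.1 (hr hp)).elim notMem_of_mem_cubeEdges notMem_of_mem_cubeEdges
  rw [expect_prod] at h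
  simp only [prod_cubeEdges _ fun i z ↦ ν i z - 1, prod_cubeEdges _ fun i z ↦ ν i z + 1,
    prod_singleton] at h
  refine h.trans (mul_le_mul_of_nonneg_right ?_ hν.error_nonneg)
  rw [← card_union_of_disjoint hdisj]
  exact pow_le_pow_right₀ one_le_two (card_le_univ _)

lemma expect_cubeProd_add_one_le (hν : IsPseudorandom ν η) {i : ι} {S : Finset ι} (hi : i ∉ S) :
    𝔼 x, 𝔼 y, cubeProd S (fun z ↦ ν i z + 1) x y ≤
      2 ^ Fintype.card (ι × Finset ι) * (1 + η) := by
  have hT : ∀ p ∈ ({i} : Finset ι) ×ˢ S.powerset, p.1 ∉ p.2 := fun p hp h ↦ by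
    obtain ⟨hp₁, hp₂⟩ := mem_product.1 hp
    exact hi (mem_powerset.1 hp₂ (mem_singleton.1 hp₁ ▸ h))
  have h := expect_prod_add_one_le fun r (hr : r ⊆ _) ↦
    hν.abs_expect_prod_sub_one_le fun p hp ↦ hT p (hr hp)
  simp only [expect_prod, prod_product, prod_singleton] at h
  refine h.trans (mul_le_mul_of_nonneg_right ?_ (by linarith [hν.error_nonneg]))
  exact pow_le_pow_right₀ one_le_two (card_le_univ _)

lemma abs_expect_sub_one_mul_prod_le (hν : IsPseudorandom ν (correlationThreshold ι τ))
    (hτ : 0 < τ) {g₀ g₁ : ι → (∀ i, V i) → ℝ}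
    (h₀ : ∀ i ≠ a, ∀ x, 0 ≤ g₀ i x ∧ g₀ i x ≤ ν i x + 1)
    (h₁ : ∀ i ≠ a, ∀ x, 0 ≤ g₁ i x ∧ g₁ i x ≤ ν i x + 1)
    (hg₀ : ∀ i ≠ a, DependsOn (g₀ i) {i}ᶜ) (hg₁ : ∀ i ≠ a, DependsOn (g₁ i) {i}ᶜ) :
    |𝔼 x, 𝔼 y : ∀ i, V i, (ν a x - 1) *
      ∏ i ∈ univ.erase a, g₀ i x * g₁ i (Function.update x a (y a))| ≤ τ := by
  set L : ℝ := 2 ^ Fintype.card (ι × Finset ι)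
  have hL : 0 < L := by positivity
  have hη : correlationThreshold ι τ ≤ 1 := min_le_left _ _
  have hW : ∀ i ≠ a, DependsOn (fun x ↦ ν i x + 1) {i}ᶜ := fun i _ ↦ dependsOn_comp
    (dependsOn_compl_singleton (hν.dependsOn i) (notMem_erase i _)) (· + 1)
  have hgcs := gowers_cauchy_schwarz_doubled (u := fun x ↦ ν a x - 1) h₀ h₁ hg₀ hg₁ hW
    (C := L * 2) (by positivity) fun i S hi ↦ (hν.expect_cubeProd_add_one_le hi).trans
      (mul_le_mul_of_nonneg_left (by linarith) hL.le)
  refine (div_le_div_iff_of_pos_right (show 0 < L * 2 by positivity)).1 ?_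
  refine (pow_le_pow_iff_left₀ (by positivity) (by positivity) (by positivity)).1 <|
    hgcs.trans (?_ : _ ≤ (τ / (L * 2)) ^ 2 ^ #(univ.erase a))
  calc _ ≤ L * correlationThreshold ι τ / (L * 2) := by gcongr; exact hν.abs_expect_box_le a
    _ = correlationThreshold ι τ / 2 := by field_simp
    _ ≤ correlationThreshold ι τ := by linarith [hν.error_nonneg]
    _ ≤ _ := by rw [card_univ_erase]; exact min_le_right _ _

variable [∀ i, Nonempty (V i)]

lemma abs_expect_sub_one_mul_codegree_le (hν : IsPseudorandom ν (correlationThreshold ι τ))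
    (hτ : 0 < τ) {g₀ g₁ : ι → (∀ i, V i) → ℝ}
    (h₀ : ∀ i ≠ a, ∀ x, 0 ≤ g₀ i x ∧ g₀ i x ≤ ν i x + 1)
    (h₁ : ∀ i ≠ a, ∀ x, 0 ≤ g₁ i x ∧ g₁ i x ≤ ν i x + 1)
    (hg₀ : ∀ i ≠ a, DependsOn (g₀ i) {i}ᶜ) (hg₁ : ∀ i ≠ a, DependsOn (g₁ i) {i}ᶜ) :
    |𝔼 x, (ν a x - 1) * (codegree a g₀ x * codegree a g₁ x)| ≤ τ := by
  rw [expect_mul_codegree_mul_codegree (dependsOn_comp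
    (dependsOn_compl_singleton (hν.dependsOn a) (notMem_erase a _)) (· - 1))]
  exact hν.abs_expect_sub_one_mul_prod_le hτ h₀ h₁ hg₀ hg₁

lemma cutNormLE_sub_one (hν : IsPseudorandom ν (correlationThreshold ι τ)) (hτ : 0 < τ) (a : ι) :
    CutNormLE (univ.erase a) (fun x ↦ ν a x - 1) τ := by
  intro B hB
  have h := hν.abs_expect_sub_one_mul_prod_le (a := a) hτ (g₀ := fun i x ↦ ind (B i x))
    (g₁ := fun _ _ ↦ 1)
    (fun i _ x ↦ ⟨ind_nonneg _, (ind_le_one _).trans (by linarith [hν.nonneg i x])⟩)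
    (fun i _ x ↦ ⟨zero_le_one, by linarith [hν.nonneg i x]⟩)
    (fun i hi ↦ dependsOn_comp (dependsOn_compl_singleton
      (hB i (mem_erase.2 ⟨hi, mem_univ i⟩)) (notMem_erase i _)) ind) fun _ _ _ _ _ ↦ rfl
  simpa only [ind_forall_mem, mul_one, Fintype.expect_const] using h

end IsPseudorandom

end Correlation

section DenseCounting

lemma prod_update_apply {ι X : Type*} [DecidableEq ι] {D : Finset ι} {j : ι} (hj : j ∈ D)
    (w : ι → X → ℝ) (f : X → ℝ) (x : X) :
    ∏ i ∈ D, Function.update w j f i x = f x * ∏ i ∈ D.erase j, w i x := by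
  rw [← mul_prod_erase D _ hj, Function.update_self]
  refine congrArg _ (prod_congr rfl fun i hi ↦ ?_)
  rw [Function.update_of_ne (ne_of_mem_erase hi)]

variable {ι : Type*} [Fintype ι] [DecidableEq ι] {V : ι → Type*} [∀ i, Fintype (V i)] {τ : ℝ}

lemma abs_expect_mul_le_of_forall_ind {j : ι} {w K : (∀ i, V i) → ℝ}
    (hw : ∀ x, 0 ≤ w x ∧ w x ≤ 1) (hwj : DependsOn w {j}ᶜ)
    (hK : ∀ p : (∀ i, V i) → Prop, DependsOn p {j}ᶜ → |𝔼 x, ind (p x) * K x| ≤ τ) :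
    |𝔼 x, w x * K x| ≤ τ := by
  set F := fiberExpect j K
  have hF : DependsOn F {j}ᶜ := dependsOn_fiberExpect j K
  have hind (p : (∀ i, V i) → Prop) (hp : DependsOn p {j}ᶜ) : |𝔼 x, ind (p x) * F x| ≤ τ := by
    rw [expect_mul_fiberExpect (dependsOn_comp hp ind)]
    exact hK p hp
  rw [← expect_mul_fiberExpect hwj]
  refine abs_le.2 ⟨(abs_le.1 (hind (F · < 0) (dependsOn_comp hF (· < 0)))).1.trans <|
    expect_le_expect fun x _ ↦ ?_, le_trans (expect_le_expect fun x _ ↦ ?_)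
      (abs_le.1 (hind (0 < F ·) (dependsOn_comp hF (0 < ·)))).2⟩
  · by_cases h : F x < 0
    · rw [ind_of_true h]
      exact mul_le_mul_of_nonpos_right (hw x).2 h.le
    · rw [ind_of_false h, zero_mul]
      exact mul_nonneg (hw x).1 (not_lt.1 h)
  · by_cases h : 0 < F x
    · rw [ind_of_true h]
      exact mul_le_mul_of_nonneg_right (hw x).2 h.le
    · rw [ind_of_false h, zero_mul]
      exact mul_nonpos_of_nonneg_of_nonpos (hw x).1 (not_lt.1 h)

lemma CutNormLE.abs_expect_mul_prod_le {D : Finset ι} {u : (∀ i, V i) → ℝ}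
    (hu : CutNormLE D u τ) (hd : DependsOn u D) {w : ι → (∀ i, V i) → ℝ}
    (hw : ∀ i ∈ D, ∀ x, 0 ≤ w i x ∧ w i x ≤ 1) (hwi : ∀ i ∈ D, DependsOn (w i) {i}ᶜ) :
    |𝔼 x, u x * ∏ i ∈ D, w i x| ≤ τ := by
  have key : ∀ S ⊆ D, ∀ w : ι → (∀ i, V i) → ℝ, (∀ i ∈ D, ∀ x, 0 ≤ w i x ∧ w i x ≤ 1) →
      (∀ i ∈ D, DependsOn (w i) {i}ᶜ) → (∀ i ∈ D \ S, ∀ x, w i x = ind (w i x = 1)) →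
      |𝔼 x, u x * ∏ i ∈ D, w i x| ≤ τ := by
    intro S
    induction S using Finset.induction_on with
    | empty =>
      intro _ w _ hwi hind
      rw [sdiff_empty] at hind
      simpa only [ind_forall_mem, ← prod_congr rfl fun i hi ↦ hind i hi _] using
        hu.abs_expect_mul_ind_le hd fun i hi ↦ dependsOn_comp (hwi i hi) (· = 1)
    | insert j S hj ih =>
      intro hS w hw hwi hind
      have hjD : j ∈ D := hS (mem_insert_self _ _)
      simp only [← mul_prod_erase D (w · _) hjD, mul_left_comm (u _)]
      refine abs_expect_mul_le_of_forall_ind (hw j hjD) (hwi j hjD) fun p hp ↦ ?_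
      have h := ih ((subset_insert _ _).trans hS) (Function.update w j fun x ↦ ind (p x))
        (fun i hi x ↦ ?_) (fun i hi ↦ ?_) fun i hi x ↦ ?_
      · simpa only [prod_update_apply hjD, mul_left_comm (u _)] using h
      all_goals rcases eq_or_ne i j with rfl | hij
      · simpa using ⟨ind_nonneg _, ind_le_one _⟩
      · simpa [hij] using hw i hi x
      · simpa using dependsOn_comp hp ind
      · simpa [hij] using hwi i hi
      · by_cases hpx : p x <;> simp [ind, hpx]
      · simpa [hij] using hind i (by simp_all) x
  exact key D subset_rfl w hw hwi (by simp)

lemma abs_expect_prod_sub_expect_prod_le {g g' : ι → (∀ i, V i) → ℝ}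
    (hg : ∀ j x, 0 ≤ g j x ∧ g j x ≤ 1) (hg' : ∀ j x, 0 ≤ g' j x ∧ g' j x ≤ 1)
    (hgd : ∀ j, DependsOn (g j) (univ.erase j : Finset ι))
    (hgd' : ∀ j, DependsOn (g' j) (univ.erase j : Finset ι))
    (hcut : ∀ j, CutNormLE (univ.erase j) (fun x ↦ g j x - g' j x) τ) :
    |𝔼 x, ∏ j, g j x - 𝔼 x, ∏ j, g' j x| ≤ Fintype.card ι * τ := by
  have key : ∀ S : Finset ι,
      |𝔼 x, ∏ j, S.piecewise g g' j x - 𝔼 x, ∏ j, g' j x| ≤ #S * τ := by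
    intro S
    induction S using Finset.induction_on with
    | empty => simp
    | insert a S ha ih =>
      have hswap : 𝔼 x, ∏ j, (insert a S).piecewise g g' j x - 𝔼 x, ∏ j, S.piecewise g g' j x =
          𝔼 x, (g a x - g' a x) * ∏ i ∈ univ.erase a, S.piecewise g g' i x := by
        rw [← expect_sub_distrib]
        refine expect_congr rfl fun x _ ↦ ?_
        rw [piecewise_insert, prod_update_apply (mem_univ a), sub_mul,
          ← mul_prod_erase univ (S.piecewise g g' · x) (mem_univ a),
          piecewise_eq_of_notMem _ _ _ ha]
      have hstep := (hcut a).abs_expect_mul_prod_le (w := S.piecewise g g')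
        (fun x y hxy ↦ congrArg₂ (· - ·) (hgd a hxy) (hgd' a hxy)) (fun i _ x ↦ ?_) fun i _ ↦ ?_
      · rw [← hswap] at hstep
        have := abs_sub_le (𝔼 x, ∏ j, (insert a S).piecewise g g' j x)
          (𝔼 x, ∏ j, S.piecewise g g' j x) (𝔼 x, ∏ j, g' j x)
        rw [card_insert_of_notMem ha]
        push_cast
        linarith
      all_goals by_cases hi : i ∈ S <;> simp only [hi, not_false_eq_true, piecewise_eq_of_mem,
        piecewise_eq_of_notMem]
      exacts [hg i x, hg' i x, dependsOn_compl_singleton (hgd i) (notMem_erase i _),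
        dependsOn_compl_singleton (hgd' i) (notMem_erase i _)]
  simpa using key univ

end DenseCounting

/-! ### Relative counting -/

section SecondMoment

variable {X : Type*} [Fintype X] {f G G' H w : X → ℝ} {κ K : ℝ}

lemma expect_abs_le_of_expect_sq_le [Nonempty X] (hκ : 0 ≤ κ) (hf : 𝔼 x, f x ^ 2 ≤ κ ^ 2) :
    𝔼 x, |f x| ≤ κ := by
  refine abs_le_of_sq_le_sq' (le_trans ?_ hf) hκ |>.2
  simpa using expect_mul_sq_le_of_nonneg (w := fun _ ↦ 1) (fun _ ↦ zero_le_one) fun x ↦ |f x|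

-- Where `G ≤ 1`, the square is `(min G 1 - G') * (G - G')`; where `G > 1`, the excess is at most
-- `H - 1`.
lemma expect_sub_sq_le_of_expect_min_mul_sub_le [Nonempty X] (hκ : 0 ≤ κ) (hκ1 : κ ≤ 1)
    (hG : ∀ x, 0 ≤ G x) (hGH : ∀ x, G x ≤ H x) (hG' : ∀ x, 0 ≤ G' x)
    (hH : 𝔼 x, (H x - 1) ^ 2 ≤ κ ^ 2) (hmin : 𝔼 x, min (G x) 1 * (G x - G' x) ≤ κ)
    (hG'G : -κ ≤ 𝔼 x, G' x * (G x - G' x)) : 𝔼 x, (G x - G' x) ^ 2 ≤ 4 * κ := by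
  have hpointwise : ∀ x, (G x - G' x) ^ 2 ≤
      min (G x) 1 * (G x - G' x) - G' x * (G x - G' x) + (H x - 1) ^ 2 + |H x - 1| := by
    intro x
    have hH1 := le_abs_self (H x - 1)
    rcases le_total (G x) 1 with h | h
    · rw [min_eq_left h]
      nlinarith [abs_nonneg (H x - 1), sq_nonneg (H x - 1)]
    · rw [min_eq_right h]
      nlinarith [hGH x, hG x, hG' x]
  calc 𝔼 x, (G x - G' x) ^ 2
      ≤ 𝔼 x, (min (G x) 1 * (G x - G' x) - G' x * (G x - G' x) + (H x - 1) ^ 2 + |H x - 1|) :=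
        expect_le_expect fun x _ ↦ hpointwise x
    _ ≤ κ + κ + κ + κ := by
        rw [expect_add_distrib, expect_add_distrib, expect_sub_distrib]
        have := expect_abs_le_of_expect_sq_le hκ hH
        nlinarith
    _ = 4 * κ := by ring

lemma abs_expect_mul_le_of_weighted (hf : ∀ x, 0 ≤ f x) (hfw : ∀ x, f x ≤ w x) (hK : 0 ≤ K)
    (h : (𝔼 x, w x) * 𝔼 x, w x * G x ^ 2 ≤ K ^ 2) : |𝔼 x, f x * G x| ≤ K := by
  have hw : ∀ x, 0 ≤ w x := fun x ↦ (hf x).trans (hfw x)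
  calc |𝔼 x, f x * G x| ≤ 𝔼 x, w x * |G x| := by
        refine (abs_expect_le _ _).trans (expect_le_expect fun x _ ↦ ?_)
        rw [abs_mul, abs_of_nonneg (hf x)]
        exact mul_le_mul_of_nonneg_right (hfw x) (abs_nonneg _)
    _ ≤ K := by
        refine (abs_le_of_sq_le_sq' ((expect_mul_sq_le_of_nonneg hw _).trans ?_) hK).2
        simpa only [sq_abs] using h

end SecondMoment

section RelativeCounting

variable {ι : Type*} [Fintype ι] [DecidableEq ι] {V : ι → Type*}

lemma dependsOn_univ_erase_iff {β : Type*} {f : (∀ i, V i) → β} {j : ι} :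
    DependsOn f (univ.erase j : Finset ι) ↔ DependsOn f {j}ᶜ := by
  simp [Set.compl_eq_univ_sdiff]

variable [∀ i, Fintype (V i)]

/-- The functions `g' j`, with values in `[0, 1]`, approximate the functions `g j`, which are
majorised by the weights `ν j`, to within `τ` in cut norm. -/
structure IsDenseModel (ν : ι → (∀ i, V i) → ℝ) (τ : ℝ) (g g' : ι → (∀ i, V i) → ℝ) : Prop where
  bounds : ∀ j x, 0 ≤ g j x ∧ g j x ≤ ν j x
  bounds_model : ∀ j x, 0 ≤ g' j x ∧ g' j x ≤ 1
  dependsOn : ∀ j, DependsOn (g j) (univ.erase j : Finset ι)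
  dependsOn_model : ∀ j, DependsOn (g' j) (univ.erase j : Finset ι)
  cutNormLE : ∀ j, CutNormLE (univ.erase j) (fun x ↦ g j x - g' j x) τ

/-- Replacing functions majorised by `ν` with a dense model of accuracy `τ` changes the average of
their product by at most `ε`. -/
def CountingWithin (ν : ι → (∀ i, V i) → ℝ) (τ ε : ℝ) : Prop :=
  ∀ ⦃g g'⦄, IsDenseModel ν τ g g' → |𝔼 x, ∏ j, g j x - 𝔼 x, ∏ j, g' j x| ≤ ε

variable {ν g g' : ι → (∀ i, V i) → ℝ} {τ τ' ε η κ : ℝ} {a : ι}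

lemma countingWithin_one (τ : ℝ) :
    CountingWithin (1 : ι → (∀ i, V i) → ℝ) τ (Fintype.card ι * τ) := fun _ _ h ↦
  abs_expect_prod_sub_expect_prod_le h.bounds h.bounds_model h.dependsOn h.dependsOn_model
    h.cutNormLE

lemma IsDenseModel.mono (h : IsDenseModel ν τ g g') (hτ : τ ≤ τ') : IsDenseModel ν τ' g g' where
  __ := h
  cutNormLE j B hB := (h.cutNormLE j B hB).trans hτ

lemma IsDenseModel.update (h : IsDenseModel ν τ g g') {f : (∀ i, V i) → ℝ}
    (hf : ∀ x, 0 ≤ f x ∧ f x ≤ 1) (hfa : DependsOn f {a}ᶜ) :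
    IsDenseModel (Function.update ν a 1) τ (Function.update g a f) (Function.update g' a f) := by
  refine ⟨fun j ↦ ?_, fun j ↦ ?_, fun j ↦ ?_, fun j ↦ ?_, fun j ↦ ?_⟩ <;>
    rcases eq_or_ne j a with rfl | hj
  · simpa using hf
  · simpa [hj] using h.bounds j
  · simpa using hf
  · simpa [hj] using h.bounds_model j
  · simpa only [Function.update_self, dependsOn_univ_erase_iff] using hfa
  · simpa only [Function.update_of_ne hj] using h.dependsOn j
  · simpa only [Function.update_self, dependsOn_univ_erase_iff] using hfa
  · simpa only [Function.update_of_ne hj] using h.dependsOn_model j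
  · intro B _
    simpa using (h.cutNormLE j).nonneg
  · simpa only [Function.update_of_ne hj] using h.cutNormLE j

lemma CountingWithin.abs_expect_mul_codegree_sub_le
    (hc : CountingWithin (Function.update ν a 1) τ κ) (h : IsDenseModel ν τ g g')
    {f : (∀ i, V i) → ℝ} (hf : ∀ x, 0 ≤ f x ∧ f x ≤ 1)
    (hfa : DependsOn f {a}ᶜ) : |𝔼 x, f x * (codegree a g x - codegree a g' x)| ≤ κ := by
  simp only [mul_sub, expect_sub_distrib, codegree, expect_mul_fiberExpect hfa]
  simpa only [prod_update_apply (mem_univ a)] using hc (h.update hf hfa)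

lemma IsDenseModel.abs_expect_sub_mul_codegree_le (h : IsDenseModel ν τ g g') (a : ι) :
    |𝔼 x, (g a x - g' a x) * codegree a g' x| ≤ τ := by
  have hd : DependsOn (fun x ↦ g a x - g' a x) (univ.erase a : Finset ι) := fun x y hxy ↦
    congrArg₂ (· - ·) (h.dependsOn a hxy) (h.dependsOn_model a hxy)
  refine (congrArg abs (expect_mul_fiberExpect (dependsOn_univ_erase_iff.1 hd) _)).trans_le ?_
  exact (h.cutNormLE a).abs_expect_mul_prod_le hd (fun i _ ↦ h.bounds_model i) fun i _ ↦
    dependsOn_univ_erase_iff.1 (h.dependsOn_model i)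

variable [∀ i, Nonempty (V i)]

lemma IsPseudorandom.expect_codegree_sub_one_sq_le (hν : IsPseudorandom ν η) (a : ι) :
    𝔼 x, (codegree a ν x - 1) ^ 2 ≤ 3 * η := by
  have hfst := (abs_le.1 (hν.abs_expect_codegree_sub_one_le a)).1
  have hsnd := (abs_le.1 (hν.abs_expect_codegree_sq_sub_one_le a)).2
  have hexpand : 𝔼 x, (codegree a ν x - 1) ^ 2 =
      𝔼 x, codegree a ν x ^ 2 - 2 * 𝔼 x, codegree a ν x + 1 := by
    simp only [sub_sq, mul_one, one_pow, expect_add_distrib, expect_sub_distrib, mul_expect,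
      Fintype.expect_const]
  linarith

lemma IsPseudorandom.expect_mul_codegree_sub_sq_le
    (hν : IsPseudorandom ν (correlationThreshold ι κ)) (hκ : 0 < κ) (h : IsDenseModel ν τ g g') :
    𝔼 x, ν a x * (codegree a g x - codegree a g' x) ^ 2 ≤
      𝔼 x, (codegree a g x - codegree a g' x) ^ 2 + 4 * κ := by
  have hg : ∀ i ≠ a, ∀ x, 0 ≤ g i x ∧ g i x ≤ ν i x + 1 := fun i _ x ↦
    ⟨(h.bounds i x).1, by linarith [(h.bounds i x).2]⟩
  have hg' : ∀ i ≠ a, ∀ x, 0 ≤ g' i x ∧ g' i x ≤ ν i x + 1 := fun i _ x ↦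
    ⟨(h.bounds_model i x).1, by linarith [(h.bounds_model i x).2, hν.nonneg i x]⟩
  have hd : ∀ i ≠ a, DependsOn (g i) {i}ᶜ := fun i _ ↦
    dependsOn_univ_erase_iff.1 (h.dependsOn i)
  have hd' : ∀ i ≠ a, DependsOn (g' i) {i}ᶜ := fun i _ ↦
    dependsOn_univ_erase_iff.1 (h.dependsOn_model i)
  have hgg := (abs_le.1 (hν.abs_expect_sub_one_mul_codegree_le hκ hg hg hd hd)).2
  have hgg' := (abs_le.1 (hν.abs_expect_sub_one_mul_codegree_le hκ hg hg' hd hd')).1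
  have hg'g' := (abs_le.1 (hν.abs_expect_sub_one_mul_codegree_le hκ hg' hg' hd' hd')).2
  have hexpand : ∀ x, ν a x * (codegree a g x - codegree a g' x) ^ 2 =
      (ν a x - 1) * (codegree a g x * codegree a g x) -
        2 * ((ν a x - 1) * (codegree a g x * codegree a g' x)) +
        (ν a x - 1) * (codegree a g' x * codegree a g' x) +
        (codegree a g x - codegree a g' x) ^ 2 := fun x ↦ by ring
  simp only [hexpand, expect_add_distrib, expect_sub_distrib, ← mul_expect]
  linarith

lemma CountingWithin.expect_codegree_sub_sq_le (hc : CountingWithin (Function.update ν a 1) τ κ)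
    (hν : IsPseudorandom ν (κ ^ 2 / 3)) (hκ : 0 ≤ κ) (hκ1 : κ ≤ 1) (h : IsDenseModel ν τ g g') :
    𝔼 x, (codegree a g x - codegree a g' x) ^ 2 ≤ 4 * κ := by
  have hg : ∀ x, 0 ≤ codegree a g x := codegree_nonneg fun j x ↦ (h.bounds j x).1
  have hgν : ∀ x, codegree a g x ≤ codegree a ν x :=
    codegree_mono (fun j x ↦ (h.bounds j x).1) fun j x ↦ (h.bounds j x).2
  have hg' : ∀ x, 0 ≤ codegree a g' x := codegree_nonneg fun j x ↦ (h.bounds_model j x).1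
  have hg'1 : ∀ x, codegree a g' x ≤ 1 := fun x ↦ expect_le univ_nonempty fun v _ ↦
    prod_le_one (fun i _ ↦ (h.bounds_model i _).1) fun i _ ↦ (h.bounds_model i _).2
  have hν_sq : 𝔼 x, (codegree a ν x - 1) ^ 2 ≤ κ ^ 2 :=
    (hν.expect_codegree_sub_one_sq_le a).trans_eq (by ring)
  have htrunc := hc.abs_expect_mul_codegree_sub_le h
    (fun x ↦ ⟨le_min (hg x) zero_le_one, min_le_right _ _⟩)
    (dependsOn_comp (dependsOn_fiberExpect a _) (min · 1))
  have hmodel := hc.abs_expect_mul_codegree_sub_le h (fun x ↦ ⟨hg' x, hg'1 x⟩)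
    (dependsOn_fiberExpect a _)
  exact expect_sub_sq_le_of_expect_min_mul_sub_le hκ hκ1 hg hgν hg' hν_sq (abs_le.1 htrunc).2
    (abs_le.1 hmodel).1

lemma CountingWithin.of_update_one (hc : CountingWithin (Function.update ν a 1) τ κ)
    (hν : IsPseudorandom ν (min (correlationThreshold ι κ) (κ ^ 2 / 3))) (hκ : 0 < κ)
    (hκ1 : κ ≤ 1) (hε : 0 < ε) (hκε : κ ≤ ε ^ 2 / 64) : CountingWithin ν (min τ (ε / 2)) ε := by
  intro g g' h
  set G := codegree a g
  set G' := codegree a g'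
  have hsq : 𝔼 x, (G x - G' x) ^ 2 ≤ 4 * κ :=
    hc.expect_codegree_sub_sq_le (hν.mono (min_le_right _ _)) hκ.le hκ1 (h.mono (min_le_left _ _))
  have hweighted : 𝔼 x, ν a x * (G x - G' x) ^ 2 ≤ 8 * κ :=
    ((hν.mono (min_le_left _ _)).expect_mul_codegree_sub_sq_le hκ h).trans (by linarith)
  have hmean : 𝔼 x, ν a x ≤ 2 := by
    have hη : min (correlationThreshold ι κ) (κ ^ 2 / 3) ≤ 1 :=
      (min_le_left _ _).trans (min_le_left _ _)
    linarith [(abs_le.1 (hν.abs_expect_sub_one_le_self a)).2]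
  have hcodegree : |𝔼 x, g a x * (G x - G' x)| ≤ ε / 2 := by
    refine abs_expect_mul_le_of_weighted (fun x ↦ (h.bounds a x).1) (fun x ↦ (h.bounds a x).2)
      (by positivity) ?_
    have := expect_nonneg fun x (_ : x ∈ univ) ↦
      mul_nonneg (hν.nonneg a x) (sq_nonneg (G x - G' x))
    nlinarith
  have hedge : |𝔼 x, (g a x - g' a x) * G' x| ≤ ε / 2 :=
    (h.mono (min_le_right _ _)).abs_expect_sub_mul_codegree_le a
  rw [expect_prod_eq_expect_mul_codegree (dependsOn_univ_erase_iff.1 (h.dependsOn a)),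
    expect_prod_eq_expect_mul_codegree (dependsOn_univ_erase_iff.1 (h.dependsOn_model a)),
    ← expect_sub_distrib]
  calc |𝔼 x, (g a x * G x - g' a x * G' x)|
      = |𝔼 x, g a x * (G x - G' x) + 𝔼 x, (g a x - g' a x) * G' x| := by
        rw [← expect_add_distrib]
        exact congrArg _ (expect_congr rfl fun x _ ↦ by ring)
    _ ≤ ε / 2 + ε / 2 := (abs_add_le _ _).trans (add_le_add hcodegree hedge)
    _ = ε := by ring

theorem relative_counting (ι : Type u) [Fintype ι] [DecidableEq ι] (U : Finset ι)
    {ε : ℝ} (hε : 0 < ε) : ∃ η τ : ℝ, 0 < η ∧ 0 < τ ∧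
      ∀ (V : ι → Type v) [∀ i, Fintype (V i)] [∀ i, Nonempty (V i)] (ν : ι → (∀ i, V i) → ℝ),
        IsPseudorandom ν η → (∀ j ∉ U, ν j = 1) → CountingWithin ν τ ε := by
  induction U using Finset.induction_on generalizing ε with
  | empty =>
    refine ⟨1, ε / (Fintype.card ι + 1), one_pos, by positivity, fun V _ _ ν _ hν1 g g' h ↦ ?_⟩
    obtain rfl : ν = 1 := funext fun j ↦ hν1 j (notMem_empty j)
    refine (countingWithin_one _ h).trans ?_
    rw [mul_div_assoc', div_le_iff₀ (by positivity)]
    linarith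
  | insert a U ha ih =>
    set κ := min 1 (ε ^ 2 / 64)
    have hκ : 0 < κ := by positivity
    obtain ⟨η, τ, hη, hτ, ih⟩ := ih hκ
    refine ⟨min η (min (correlationThreshold ι κ) (κ ^ 2 / 3)), min τ (ε / 2),
      lt_min hη (lt_min (correlationThreshold_pos hκ) (by positivity)),
      lt_min hτ (half_pos hε), fun V _ _ ν hν hν1 ↦ ?_⟩
    refine (ih V _ ((hν.mono (min_le_left _ _)).update_one a) fun j hj ↦ ?_).of_update_one
      (hν.mono (min_le_right _ _)) hκ (min_le_left _ _) hε (min_le_right _ _)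
    rcases eq_or_ne j a with rfl | hja
    · simp
    · rw [Function.update_of_ne hja, hν1 j (by simp [hj, hja])]

end RelativeCounting

/-! ### Relative removal -/

section RelativeRemoval

theorem relative_removal (ι : Type u) [Fintype ι] [DecidableEq ι] [Nonempty ι] {ε : ℝ}
    (hε : 0 < ε) :
    ∃ c η : ℝ, 0 < c ∧ 0 < η ∧
      ∀ (V : ι → Type v) [∀ i, Fintype (V i)] [∀ i, Nonempty (V i)]
        (ν g : ι → (∀ i, V i) → ℝ), IsPseudorandom ν η → (∀ j x, 0 ≤ g j x ∧ g j x ≤ ν j x) →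
        (∀ j, DependsOn (g j) (univ.erase j : Finset ι)) → 𝔼 x, ∏ j, g j x ≤ c →
        ∃ E : ι → (∀ i, V i) → Prop, (∀ j, DependsOn (E j) (univ.erase j : Finset ι)) ∧
          (∀ x, ∃ j, ¬E j x) ∧ ∀ j, 𝔼 x, g j x * ind (¬E j x) ≤ ε := by
  obtain ⟨c, M, hc, hremoval⟩ := dense_removal.{u, v} ι (half_pos hε)
  obtain ⟨η₁, τ₁, hη₁, hτ₁, hcount⟩ := relative_counting.{u, v} ι univ (half_pos hc)
  set N : ℝ := M ^ (2 ^ (Fintype.card ι - 1) - 1)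
  set τ := min τ₁ (ε / 2 / (N + 1))
  have hτ : 0 < τ := by positivity
  have hNτ : N * τ ≤ ε / 2 := calc
    N * τ ≤ (N + 1) * (ε / 2 / (N + 1)) := by gcongr; exacts [by linarith, min_le_right _ _]
    _ = ε / 2 := mul_div_cancel₀ _ (by positivity)
  obtain ⟨η₂, hη₂, hmodel⟩ := dense_model.{u, v} ι hτ
  refine ⟨c / 2, min η₁ (correlationThreshold ι η₂), half_pos hc,
    lt_min hη₁ (correlationThreshold_pos hη₂), fun V _ _ ν g hν hg hgd hgc ↦ ?_⟩
  choose g' hg' hg'd hcut using fun j ↦ hmodel V (univ.erase j) (ν j) (g j) (hν.dependsOn j)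
    (hg j) ((hν.mono (min_le_right _ _)).cutNormLE_sub_one hη₂ j)
  have hdense : IsDenseModel ν τ g g' := ⟨hg, hg', hgd, hg'd, hcut⟩
  have hclose := hcount V ν (hν.mono (min_le_left _ _)) (fun j hj ↦ absurd (mem_univ j) hj)
    (hdense.mono (min_le_left _ _))
  obtain ⟨b, hb, Keep, hKeep, hcover, hloss⟩ :=
    hremoval V g' hg' hg'd (by linarith [(abs_le.1 hclose).1])
  refine ⟨fun j x ↦ Keep j fun u ↦ b u x, fun j x y hxy ↦ hKeep j fun u hu ↦
    (hb.dependsOn u).mono (coe_subset.2 (Set.mem_Iio.1 hu).le) hxy, hcover, fun j ↦ ?_⟩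
  have hKeep' : DependsOn (fun β ↦ ¬Keep j β) ((univ.erase j).ssubsets : Finset (Finset ι)) :=
    fun β β' hβ ↦ congrArg Not (hKeep j fun u hu ↦ hβ u (mem_coe.2 (mem_ssubsets.2 hu)))
  have htransfer := (hcut j).abs_expect_mul_ind_colors_le
    (fun x y hxy ↦ congrArg₂ (· - ·) (hgd j hxy) (hg'd j hxy)) hb
    (fun t ht ↦ (mem_ssubsets.1 ht).2) hKeep'
  rw [ssubsets, card_erase_of_mem (mem_powerset_self _), card_powerset, card_univ_erase]
    at htransfer
  simp only [sub_mul, expect_sub_distrib] at htransfer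
  linarith [(abs_le.1 htransfer).2, hloss j]

end RelativeRemoval

/-! ### From groups to hypergraphs -/

section Averages

variable {A B X γ : Type*} [Fintype A] [AddCommGroup A] [AddCommGroup B] [Fintype X]

lemma one_le_sum_cellExpect {κ : Type*} [Fintype κ] (C : X → γ) {f : κ → X → ℝ}
    (hf : ∀ x, 1 ≤ ∑ k, f k x) (x : X) : 1 ≤ ∑ k, cellExpect C (f k) x := by
  simp only [cellExpect]
  rw [← sum_div, le_div_iff₀ (expect_ind_eq_pos C x), one_mul, ← expect_sum_comm]
  refine expect_le_expect fun y _ ↦ ?_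
  rw [← sum_mul]
  exact le_mul_of_one_le_left (ind_nonneg _) (hf y)

lemma cellExpect_add_right (φ : A →+ B) {f : A → ℝ} {s : A} (hf : ∀ x, f (x + s) = f x) (x : A) :
    cellExpect φ f (x + s) = cellExpect φ f x := by
  unfold cellExpect
  congr 1 <;> refine (Fintype.expect_equiv (Equiv.addRight s) _ _ fun y ↦ ?_).symm <;>
    simp [hf]

lemma expect_comp_of_surjective [Fintype B] (φ : A →+ B) (hφ : Function.Surjective φ) (F : B → ℝ) :
    𝔼 x, F (φ x) = 𝔼 y, F y := by
  have hfst (y : B) : 𝔼 x, F (φ x + y) = 𝔼 x, F (φ x) := by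
    obtain ⟨x₀, rfl⟩ := hφ y
    exact Fintype.expect_equiv (Equiv.addRight x₀) _ _ fun x ↦ by simp
  have hsnd (x : A) : 𝔼 y, F (φ x + y) = 𝔼 y, F y :=
    Fintype.expect_equiv (Equiv.addLeft (φ x)) _ _ fun y ↦ by simp
  calc 𝔼 x, F (φ x) = 𝔼 y : B, 𝔼 x, F (φ x + y) := by simp only [hfst, Fintype.expect_const]
    _ = 𝔼 x, 𝔼 y, F (φ x + y) := expect_comm _ _ _
    _ = 𝔼 y, F y := by simp only [hsnd, Fintype.expect_const]

end Averages

section LinearForms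

variable {ι Z Z' : Type*} [Fintype ι] [AddCommGroup Z] [AddCommGroup Z']

/-- The linear form whose composition with `ν` is the weight induced on the edge opposite
to `j`. -/
def linearForm (φ : ι → Z →+ Z') (j : ι) (x : ι → Z) : Z' := ∑ i, (φ i (x i) - φ j (x i))

/-- The homomorphism sending `x` to the pair `(a, d)` for which the `j`-th linear form takes the
value `a + φ j d` at `x`, for every `j`. -/
def configuration (φ : ι → Z →+ Z') : (ι → Z) →+ Z' × Z where
  toFun x := (∑ i, φ i (x i), -∑ i, x i)
  map_zero' := by simp
  map_add' x y := by simp [sum_add_distrib, add_comm]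

lemma linearForm_eq (φ : ι → Z →+ Z') (j : ι) (x : ι → Z) :
    linearForm φ j x = (configuration φ x).1 + φ j (configuration φ x).2 := by
  simp [linearForm, configuration, sub_eq_add_neg, sum_add_distrib]

lemma expect_comp_linearForm [DecidableEq ι] [Fintype Z] [Fintype Z'] {φ : ι → Z →+ Z'}
    (hφ : Function.Surjective (configuration φ)) (j : ι) (F : Z' → ℝ) :
    𝔼 x, F (linearForm φ j x) = 𝔼 y, F y := by
  simp only [linearForm_eq]
  rw [expect_comp_of_surjective _ hφ fun p ↦ F (p.1 + φ j p.2), expect_prod, expect_comm]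
  have htranslate (d : Z) : 𝔼 a, F (a + φ j d) = 𝔼 y, F y :=
    Fintype.expect_equiv (Equiv.addRight (φ j d)) _ _ fun _ ↦ rfl
  simp only [htranslate, Fintype.expect_const]

lemma configuration_single [DecidableEq ι] (φ : ι → Z →+ Z') (j : ι) (t : Z) :
    configuration φ (Pi.single j t) = (φ j t, -t) := by
  have h : ∀ i, φ i ((Pi.single j t : ι → Z) i) = (Pi.single j (φ j t) : ι → Z') i :=
    Pi.apply_single _ (fun i ↦ map_zero (φ i)) j t
  simp [configuration, h]

lemma surjective_configuration [Nonempty ι] {φ : ι → Z →+ Z'}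
    (hφ : AddSubgroup.closure {z : Z' | ∃ i j : ι, ∃ d : Z, z = φ i d - φ j d} = ⊤) :
    Function.Surjective (configuration φ) := by
  classical
  have hinl : (configuration φ).range.comap (AddMonoidHom.inl Z' Z) = ⊤ := by
    rw [eq_top_iff, ← hφ, AddSubgroup.closure_le]
    rintro z ⟨i, j, d, rfl⟩
    exact ⟨Pi.single i d - Pi.single j d, by simp [configuration_single]⟩
  obtain ⟨j⟩ := ‹Nonempty ι›
  rintro ⟨a, d⟩
  obtain ⟨x, hx⟩ : a + φ j d ∈ (configuration φ).range.comap (AddMonoidHom.inl Z' Z) :=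
    hinl ▸ AddSubgroup.mem_top _
  exact ⟨x + Pi.single j (-d), by simp [hx, configuration_single]⟩

variable [DecidableEq ι]

lemma dependsOn_linearForm (φ : ι → Z →+ Z') (j : ι) :
    DependsOn (linearForm φ j) (univ.erase j : Finset ι) := fun x y hxy ↦ by
  refine sum_congr rfl fun i _ ↦ ?_
  rcases eq_or_ne i j with rfl | hi
  · simp only [sub_self]
  · rw [hxy i (by simpa using hi)]

variable [Fintype Z] {φ : ι → Z →+ Z'} {j : ι}

-- Moving the coordinate `j` changes neither `f` nor the `j`-th form, and reaches every
-- configuration with the same value of that form.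
lemma cellExpect_configuration_congr {f : (ι → Z) → ℝ} (hf : DependsOn f {j}ᶜ) {x y : ι → Z}
    (hxy : linearForm φ j x = linearForm φ j y) :
    cellExpect (configuration φ) f x = cellExpect (configuration φ) f y := by
  set t := (configuration φ y).2 - (configuration φ x).2
  rw [← cellExpect_add_right (configuration φ) (s := Pi.single j t) (x := y) fun z ↦
    hf fun i hi ↦ by simp [Set.mem_compl_singleton_iff.1 hi]]
  refine cellExpect_congr _ _ ?_
  rw [linearForm_eq, linearForm_eq, ← eq_sub_iff_add_eq] at hxy
  rw [map_add, configuration_single]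
  ext
  · rw [Prod.fst_add, hxy, map_sub, add_sub_assoc]
  · simp [t]

/-- The values of the `j`-th linear form at which the conditional probability that `E` fails, given
the configuration, is less than `1 / |ι|`. -/
def typicalValues (φ : ι → Z →+ Z') (j : ι) (E : (ι → Z) → Prop) : Set Z' :=
  {y | ∃ x, linearForm φ j x = y ∧
    cellExpect (configuration φ) (fun z ↦ ind (¬E z)) x < 1 / Fintype.card ι}

lemma exists_notMem_typicalValues [Nonempty ι] (hφ : Function.Surjective (configuration φ))
    {E : ι → (ι → Z) → Prop} (hE : ∀ j, DependsOn (E j) {j}ᶜ) (hcover : ∀ x, ∃ j, ¬E j x)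
    (a : Z') (d : Z) : ∃ j, a + φ j d ∉ typicalValues φ j (E j) := by
  obtain ⟨x, hx⟩ := hφ (a, d)
  by_contra! hmem
  have hlt (j : ι) :
      cellExpect (configuration φ) (fun z ↦ ind (¬E j z)) x < 1 / Fintype.card ι := by
    obtain ⟨y, hy, hlt⟩ := hmem j
    rwa [cellExpect_configuration_congr (y := y) (dependsOn_comp (hE j) fun p ↦ ind (¬p))
      (by rw [hy, linearForm_eq, hx])]
  have hone := one_le_sum_cellExpect (configuration φ) (f := fun j z ↦ ind (¬E j z)) (fun z ↦ by
    obtain ⟨j, hj⟩ := hcover z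
    rw [← ind_of_true hj]
    exact single_le_sum (f := fun j ↦ ind (¬E j z)) (fun _ _ ↦ ind_nonneg _) (mem_univ j)) x
  have hsum := sum_lt_sum_of_nonempty univ_nonempty fun j (_ : j ∈ univ) ↦ hlt j
  rw [sum_const, card_univ, nsmul_eq_mul, mul_one_div_cancel (by positivity)] at hsum
  exact hsum.not_ge hone

lemma expect_mul_ind_notMem_typicalValues_le [Nonempty ι] [Fintype Z']
    (hφ : Function.Surjective (configuration φ)) {f : Z' → ℝ} (hf : ∀ y, 0 ≤ f y)
    (E : (ι → Z) → Prop) :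
    𝔼 y, f y * ind (y ∉ typicalValues φ j E) ≤
      Fintype.card ι * 𝔼 x, f (linearForm φ j x) * ind (¬E x) := by
  set q := cellExpect (configuration φ) fun z ↦ ind (¬E z) with hq
  have hforms : (fun x ↦ f (linearForm φ j x)).FactorsThrough (configuration φ) :=
    fun x y hxy ↦ by simp only [linearForm_eq, hxy]
  have hmarkov (x : ι → Z) :
      ind (linearForm φ j x ∉ typicalValues φ j E) ≤ Fintype.card ι * q x := by
    by_cases hx : linearForm φ j x ∉ typicalValues φ j E
    · rw [ind_of_true hx, ← div_le_iff₀' (by positivity)]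
      exact not_lt.1 fun hlt ↦ hx ⟨x, rfl, hlt⟩
    · rw [ind_of_false hx]
      exact mul_nonneg (Nat.cast_nonneg _) (cellExpect_nonneg _ (fun _ ↦ ind_nonneg _) x)
  calc 𝔼 y, f y * ind (y ∉ typicalValues φ j E)
      = 𝔼 x, f (linearForm φ j x) * ind (linearForm φ j x ∉ typicalValues φ j E) :=
        (expect_comp_linearForm hφ j fun y ↦ f y * ind (y ∉ typicalValues φ j E)).symm
    _ ≤ 𝔼 x, f (linearForm φ j x) * (Fintype.card ι * q x) :=
        expect_le_expect fun x _ ↦ mul_le_mul_of_nonneg_left (hmarkov x) (hf _)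
    _ = Fintype.card ι * 𝔼 x, q x * f (linearForm φ j x) := by
        rw [mul_expect]
        exact expect_congr rfl fun x _ ↦ by ring
    _ = Fintype.card ι * 𝔼 x, f (linearForm φ j x) * ind (¬E x) := by
        rw [hq, expect_cellExpect_mul _ _ hforms]
        simp only [mul_comm]

end LinearForms

section InducedWeights

/-- The edge opposite to `j` and the vertex of its cube given by the coordinates in `A`: the factor
of the linear forms condition for which `IsPseudorandom` uses the pair `(j, A)`. -/
def cubeVertex {ι : Type*} [Fintype ι] [DecidableEq ι] (p : ι × Finset ι) :
    Σ e : Finset ι, (e → Bool) :=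
  ⟨univ.erase p.1, fun i ↦ decide (i.1 ∈ p.2)⟩

lemma injOn_cubeVertex {ι : Type*} [Fintype ι] [DecidableEq ι] :
    Set.InjOn cubeVertex {p : ι × Finset ι | p.1 ∉ p.2} := by
  rintro ⟨j, A⟩ hA ⟨k, B⟩ hB hAB
  obtain rfl : j = k := erase_injOn univ (mem_coe.2 (mem_univ j)) (mem_coe.2 (mem_univ k))
    (congrArg Sigma.fst hAB)
  have hmem : ∀ i ∈ univ.erase j, i ∈ A ↔ i ∈ B := fun i hi ↦ by
    simpa using congrFun (sigma_mk_injective hAB) ⟨i, hi⟩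
  refine congrArg (Prod.mk j) (ext fun i ↦ ?_)
  rcases eq_or_ne i j with rfl | hij
  · exact iff_of_false hA hB
  · exact hmem i (mem_erase.2 ⟨hij, mem_univ i⟩)

variable {Z Z' : Type} [AddCommGroup Z] [AddCommGroup Z']

lemma inducedNu_univ_erase (φ : J → Z →+ Z') (ν : Z' → ℝ) (j : J) (x : J → Z) :
    inducedNu φ ν (univ.erase j) (fun i ↦ x i) = ν (linearForm φ j x) := by
  rw [inducedNu, sdiff_erase_self (mem_univ j), sum_singleton, linearForm,
    ← add_sum_erase univ _ (mem_univ j), sub_self, zero_add, map_sum, ← sum_sub_distrib,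
    sum_coe_sort (univ.erase j) fun i ↦ φ i (x i) - φ j (x i)]

lemma isPseudorandom_of_hLinearForms [Fintype Z] {φ : J → Z →+ Z'} {ν : Z' → ℝ} {η : ℝ}
    (hν : ∀ y, 0 ≤ ν y)
    (h : HLinearForms (V := fun _ : J ↦ Z) (univ.powersetCard (Fintype.card J - 1))
      (inducedNu φ ν) η) : IsPseudorandom (fun j x ↦ ν (linearForm φ j x)) η where
  nonneg _ _ := hν _
  dependsOn j := dependsOn_comp (dependsOn_linearForm φ j) ν
  abs_expect_sub_one_le T hT := by
    have hsub : T.image cubeVertex ⊆ (univ.powersetCard (Fintype.card J - 1)).sigma fun _ ↦ univ :=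
      image_subset_iff.2 fun p _ ↦ mem_sigma.2
        ⟨mem_powersetCard_univ.2 (card_univ_erase p.1), mem_univ _⟩
    have hforms := h fun e ω ↦ decide (⟨e, ω⟩ ∈ T.image cubeVertex)
    rw [avg_eq_expect, expect_prod] at hforms
    convert hforms using 3
    refine expect_congr rfl fun x _ ↦ expect_congr rfl fun y _ ↦ ?_
    simp only [decide_eq_true_eq]
    rw [prod_sigma', prod_ite_mem, inter_eq_right.2 hsub, prod_image (injOn_cubeVertex.mono hT)]
    refine prod_congr rfl fun p _ ↦ ?_
    rw [← inducedNu_univ_erase φ ν]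
    simp [cubeVertex, piecewise]

end InducedWeights

end HypergraphRemoval

open HypergraphRemoval

/-- **Relative arithmetic removal lemma.** For every finite `J` with `|J| ≥ 2` and
every `ε > 0` there exist `c > 0` and `η > 0` such that: for all finite abelian groups
`Z, Z'`, homomorphisms `φ_j : Z →+ Z'` whose differences `φ_i(d) - φ_j(d)` generate
`Z'`, and `ν : Z' → ℝ≥0` whose induced weighted hypergraph satisfies the `H`-linear
forms condition within `η`: if `0 ≤ f_j ≤ ν` for all `j ∈ J` and
`E[∏_{j ∈ J} f_j(a + φ_j(d)) | a ∈ Z', d ∈ Z] ≤ c`, then there are sets `A_j ⊆ Z'`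
with `∏_{j ∈ J} 1_{A_j}(a + φ_j(d)) = 0` for all `a ∈ Z'`, `d ∈ Z`, and
`E[f_j · 1_{Z' ∖ A_j}] ≤ ε` for all `j ∈ J`. -/
theorem relative_arithmetic_removal (J : Type) [Fintype J] [DecidableEq J]
    (hJ : 2 ≤ Fintype.card J) (ε : ℝ) (hε : 0 < ε) :
    ∃ c : ℝ, 0 < c ∧ ∃ η : ℝ, 0 < η ∧
    ∀ (Z Z' : Type) [AddCommGroup Z] [Fintype Z] [DecidableEq Z]
      [AddCommGroup Z'] [Fintype Z'] [DecidableEq Z'],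
    ∀ φ : J → Z →+ Z',
      AddSubgroup.closure {z : Z' | ∃ i j : J, ∃ d : Z, z = φ i d - φ j d} = ⊤ →
    ∀ ν : Z' → ℝ, (∀ y, 0 ≤ ν y) →
      HLinearForms (V := fun _ : J => Z)
        (Finset.univ.powersetCard (Fintype.card J - 1)) (inducedNu φ ν) η →
    ∀ f : J → Z' → ℝ, (∀ j x, 0 ≤ f j x ∧ f j x ≤ ν x) →
    avg (fun p : Z' × Z => ∏ j : J, f j (p.1 + φ j p.2)) ≤ c →
    ∃ A : J → Set Z',
      (∀ (a : Z') (d : Z),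
        ∏ j : J, Set.indicator (A j) (fun _ => (1 : ℝ)) (a + φ j d) = 0) ∧
      (∀ j : J,
        avg (fun x : Z' => f j x * Set.indicator (A j)ᶜ (fun _ => (1 : ℝ)) x) ≤ ε) := by
  have : Nonempty J := Fintype.card_pos_iff.1 (by omega)
  have hk : (0 : ℝ) < Fintype.card J := by positivity
  obtain ⟨c, η, hc, hη, hremoval⟩ := relative_removal J (div_pos hε hk)
  refine ⟨c, hc, η, hη, fun Z Z' _ _ _ _ _ _ φ hφ ν hν hforms f hf hfc ↦ ?_⟩
  replace hφ := surjective_configuration hφ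
  have hdep (j : J) := dependsOn_comp (dependsOn_linearForm φ j) (f j)
  rw [avg_eq_expect, ← expect_comp_of_surjective _ hφ] at hfc
  simp only [← linearForm_eq] at hfc
  obtain ⟨E, hE, hcover, hloss⟩ := hremoval (fun _ ↦ Z) _ (fun j x ↦ f j (linearForm φ j x))
    (isPseudorandom_of_hLinearForms hν hforms) (fun j _ ↦ hf j _) hdep hfc
  refine ⟨fun j ↦ typicalValues φ j (E j), fun a d ↦ ?_, fun j ↦ ?_⟩
  · obtain ⟨j, hj⟩ := exists_notMem_typicalValues hφ
      (fun j ↦ dependsOn_univ_erase_iff.1 (hE j)) hcover a d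
    exact prod_eq_zero (mem_univ j) (Set.indicator_of_notMem hj _)
  · rw [avg_eq_expect]
    exact (expect_mul_ind_notMem_typicalValues_le hφ (fun y ↦ (hf j y).1) (E j)).trans
      ((le_div_iff₀' hk).1 (hloss j))
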